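/- The geodesic flow ℝ × GS → GS of a closed surface S of genus ≥ 2 equipped with a Euclidean metric with finitely many conical singularities of angle > 2π is topologically mixing: given any nonempty open sets O and U in GS, there exists t₀ > 0 such that for all |t| ≥ t₀, t·O ∩ U ≠ ∅. -/

import Mathlib

/-!
Since all cone angles exceed `2π`, the surface `S` is locally `CAT(0)` (`ESCS.exists_LC`). Hence the
distance between nearby local geodesics is convex (`LC.convex`), the endpoints of a local geodesic
can be moved along paths (`LC.family`), the length is then convex (`LC.fam_convex`) and obeys a
first variation inequality at cone points (`LC.first_variation`), and local geodesics extend to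
bi-infinite ones (`LC.extend_line`).

There is a conical point `v` (`ESCS.conical_nonempty`): in a flat surface, geodesics from a point are
determined, with uniform separation, by their initial velocities, so only `O(n²)` homotopy classes
have representatives of length `O(n)`, while the fundamental group contains a free group.

The geodesic is built from geodesic loops at `v`. Loops meeting at angle at least `π` can be
concatenated (`Setup.comp`), and since `v` has angle `θ > 2π`, the set of directions that continue a
given one has nonempty interior. Three facts carry the proof.

* Any geodesic segment is shadowed by a loop at `v` (`Setup.approx`): extend it far in both
  directions and drag the ends to `v`, which hardly changes the middle.
* Any two loops `A`, `B` are connected by a third one (`Setup.trans`). A pigeonhole argument on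
  directions yields a hub, that is two different loops of equal length which can be concatenated
  freely (`Setup.exists_hub`). Dragging the end of a long loop along a hub loop (`Setup.turn`) improves
  its angle of arrival by a definite amount, so after finitely many steps it can be continued by the
  hub loop itself (`Setup.chain`, `Setup.merge`), while its initial direction hardly changes.
* The lengths of loops with suitable fixed directions are eventually `ε`-dense (`Setup.lengths`).
  Dragging the end of `c` along a loop `s` that it meets at an angle slightly less than `π` gives a
  loop `c'` which is shorter than `c` and `s` together by a small positive amount `δ`. Inserting `c'` in
  one word of loops and `c`, `s` separately in another gives two loops with the same directions whose
  lengths differ by `δ` (`Setup.two_lengths`), and their concatenations have all the lengths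
  `n λ + j δ`, `j ≤ n`.

Given open sets `O` and `U`, a loop shadowing a member of `O` is connected to one shadowing a member
of `U` through a loop of almost arbitrary length; a bi-infinite extension of the result is the
required orbit (`ESCS.mixing_pos`). Negative times follow by exchanging `O` and `U`.
-/

open Metric Filter Topology Set

noncomputable section

namespace ESCSPaper

/-! ### The standard cone -/

/-- Angular distance between `a b : ℝ` regarded as angles modulo `θ`. -/
def angDist (θ a b : ℝ) : ℝ := sInf {d : ℝ | ∃ k : ℤ, d = |a - b + θ * k|}

/-- The distance on the standard cone `C(v, θ)` of cone angle `θ`, written in polar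
coordinates `(r, t)` around the vertex `v = (0, _)`; it is induced by the length
element `ds² = dr² + r² dt²`. -/
def coneDist (θ : ℝ) (x y : ℝ × ℝ) : ℝ :=
  if angDist θ x.2 y.2 ≤ Real.pi then
    Real.sqrt (x.1 ^ 2 + y.1 ^ 2 - 2 * x.1 * y.1 * Real.cos (angDist θ x.2 y.2))
  else x.1 + y.1

/-! ### Euclidean surfaces with conical singularities -/

/-- A Euclidean surface with conical singularities (e.s.c.s.): a closed (compact,
connected) surface of genus `≥ 2` (encoded by the fundamental group containing a
free group of rank two, which for closed surfaces characterises negative Euler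
characteristic, i.e. genus `≥ 2` in the orientable case), equipped with a length
metric which is locally Euclidean away from a finite set of conical points, each of
cone angle `> 2π`. -/
structure ESCS (S : Type) [MetricSpace S] : Type where
  compact : CompactSpace S
  connected : ConnectedSpace S
  /-- `S` is a surface: every point has a neighborhood homeomorphic to an open planar set. -/
  surface : ∀ x : S, ∃ U : Set S, U ∈ nhds x ∧ ∃ V : Set (ℝ × ℝ), IsOpen V ∧
    Nonempty (↥U ≃ₜ ↥V)
  /-- genus at least two: the fundamental group contains a free group of rank two. -/
  genus_ge_two : ∃ x : S, ∃ ι : FreeGroup Bool →* FundamentalGroup S x, Function.Injective ι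
  /-- the metric of `S` is a length metric. -/
  length_metric : ∀ x y : S, ∀ ε > (0:ℝ), ∃ γ : ℝ → S, Continuous γ ∧ γ 0 = x ∧ γ 1 = y ∧
    eVariationOn γ (Set.Icc 0 1) ≤ ENNReal.ofReal (dist x y + ε)
  /-- the (finitely many) conical points. -/
  conical : Finset S
  /-- the cone angle at each conical point. -/
  angle : S → ℝ
  angle_gt : ∀ s ∈ conical, 2 * Real.pi < angle s
  /-- every regular point has a neighborhood isometric to a Euclidean disk. -/
  euclidean_at : ∀ x : S, x ∉ conical → ∃ ε > (0:ℝ), ∃ f : S → EuclideanSpace ℝ (Fin 2),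
    (∀ y ∈ ball x ε, ∀ z ∈ ball x ε, dist (f y) (f z) = dist y z) ∧
    f '' ball x ε = ball (f x) ε
  /-- every conical point `s` has a neighborhood isometric to a neighborhood of the
  vertex of the standard cone `C(v, angle s)`. -/
  cone_at : ∀ s ∈ conical, ∃ ε > (0:ℝ), ∃ f : S → ℝ × ℝ,
    f s = (0, 0) ∧
    (∀ y ∈ ball s ε, ∀ z ∈ ball s ε, coneDist (angle s) (f y) (f z) = dist y z) ∧
    f '' ball s ε = insert ((0:ℝ), (0:ℝ)) (Set.Ioo 0 ε ×ˢ Set.Ico 0 (angle s))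

/-! ### Geodesics -/

/-- A local isometric map `ℝ → S`, i.e. a (unit speed, bi-infinite) geodesic of `S`. -/
def IsLocalGeodesic {S : Type} [MetricSpace S] (g : ℝ → S) : Prop :=
  ∀ t : ℝ, ∃ ε > (0:ℝ), ∀ s u : ℝ, |s - t| < ε → |u - t| < ε → dist (g s) (g u) = |s - u|

/-- Two periodic maps (closed curves) `ℝ → S` are freely homotopic: for suitable
periods, the corresponding loops (parametrized with period `1`) are homotopic through
closed loops. -/
def FreelyHomotopic {S : Type} [TopologicalSpace S] (g h : ℝ → S) : Prop :=
  ∃ T₁ > (0:ℝ), ∃ T₂ > (0:ℝ), Function.Periodic g T₁ ∧ Function.Periodic h T₂ ∧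
    ∃ F : ℝ → ℝ → S, Continuous (Function.uncurry F) ∧
      (∀ s : ℝ, F 0 s = g (T₁ * s)) ∧ (∀ s : ℝ, F 1 s = h (T₂ * s)) ∧
      ∀ u s : ℝ, F u (s + 1) = F u s

/-- `g` is a closed geodesic of `S` which is the unique closed geodesic in its free
homotopy class (up to re-parametrization). -/
def UniqueClosedGeodesic {S : Type} [MetricSpace S] (g : ℝ → S) : Prop :=
  IsLocalGeodesic g ∧ (∃ T > (0:ℝ), Function.Periodic g T) ∧
    ∀ h : ℝ → S, IsLocalGeodesic h → (∃ T > (0:ℝ), Function.Periodic h T) →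
      FreelyHomotopic g h → ∃ a : ℝ, ∀ t : ℝ, h t = g (t + a)

/-- `c'` is a parallel translate of the geodesic line `c` (the two lines bound a flat
strip): `c'` is a geodesic line which stays at constant distance from `c`. -/
def ParallelTranslate {X : Type} [MetricSpace X] (c c' : ℝ → X) : Prop :=
  Isometry c' ∧ ∃ d : ℝ, ∀ t : ℝ, dist (c' t) (c t) = d

/-! ### The universal cover and its deck group -/

/-- The universal cover `X` of `S`, with the lifted metric: a simply connected space
together with a covering projection `p : X → S` which is a local isometry. -/
structure UnivCover (S X : Type) [MetricSpace S] [MetricSpace X] : Type where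
  p : X → S
  covering : IsCoveringMap p
  localIsom : ∀ x : X, ∃ ε > (0:ℝ), ∀ y ∈ ball x ε, ∀ z ∈ ball x ε,
    dist (p y) (p z) = dist y z
  simplyConnected : SimplyConnectedSpace X

/-- The deck (covering) group `Γ ≅ π₁(S)` of the universal cover: the group of
isometries of `X` commuting with the projection. -/
def deck {S X : Type} [MetricSpace S] [MetricSpace X] (cov : UnivCover S X) :
    Subgroup (X ≃ᵢ X) where
  carrier := {φ : X ≃ᵢ X | ∀ x : X, cov.p (φ x) = cov.p x}
  one_mem' := fun _ => rfl
  mul_mem' := by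
    intro φ ψ hφ hψ x
    exact (hφ (ψ x)).trans (hψ x)
  inv_mem' := by
    intro φ hφ x
    have h := hφ (φ⁻¹ x)
    have h2 : φ (φ⁻¹ x) = x := by simp
    rw [h2] at h
    exact h.symm

/-! ### The visual boundary -/

/-- A geodesic ray: a map `ℝ → X` which is isometric on `[0, ∞)`. -/
def IsRay {X : Type} [MetricSpace X] (r : ℝ → X) : Prop :=
  ∀ s t : ℝ, 0 ≤ s → 0 ≤ t → dist (r s) (r t) = |s - t|

/-- The space of geodesic rays of `X`, with the topology of pointwise convergence
(which on rays agrees with uniform convergence on compact sets). -/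
abbrev RaySp (X : Type) [MetricSpace X] : Type := {r : ℝ → X // IsRay r}

/-- Two rays are asymptotic if they stay at bounded distance. -/
instance raySetoid (X : Type) [MetricSpace X] : Setoid (RaySp X) where
  r r₁ r₂ := ∃ C : ℝ, ∀ t : ℝ, 0 ≤ t → dist (r₁.1 t) (r₂.1 t) ≤ C
  iseqv := by
    refine ⟨fun r => ⟨0, fun t _ => by simp⟩, ?_, ?_⟩
    · rintro a b ⟨C, h⟩
      exact ⟨C, fun t ht => by rw [dist_comm]; exact h t ht⟩
    · rintro a b c ⟨C₁, h₁⟩ ⟨C₂, h₂⟩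
      exact ⟨C₁ + C₂, fun t ht =>
        (dist_triangle (a.1 t) (b.1 t) (c.1 t)).trans (add_le_add (h₁ t ht) (h₂ t ht))⟩

/-- The visual boundary `∂X̃`: asymptoty classes of geodesic rays, with the quotient
topology. -/
abbrev Bdry (X : Type) [MetricSpace X] : Type := Quotient (raySetoid X)

/-- The point of the visual boundary determined by the positive end of a geodesic
line `g`, i.e. `g(+∞)`. -/
def endPlus {X : Type} [MetricSpace X] (g : ℝ → X) (hg : Isometry g) : Bdry X :=
  ⟦⟨g, fun s t _ _ => by rw [hg.dist_eq, Real.dist_eq]⟩⟧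

/-- The point of the visual boundary determined by the negative end of a geodesic
line `g`, i.e. `g(−∞)`. -/
def endMinus {X : Type} [MetricSpace X] (g : ℝ → X) (hg : Isometry g) : Bdry X :=
  ⟦⟨fun t => g (-t), fun s t _ _ => by
      rw [hg.dist_eq, Real.dist_eq, show -s - -t = -(s - t) by ring, abs_neg]⟩⟧

/-- The induced action of an isometry of `X` on the visual boundary. -/
def bdryMap {X : Type} [MetricSpace X] (φ : X ≃ᵢ X) : Bdry X → Bdry X :=
  Quotient.map
    (fun r => ⟨fun t => φ (r.1 t), fun s t hs ht => by
      rw [φ.dist_eq]; exact r.2 s t hs ht⟩)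
    (by
      rintro r₁ r₂ ⟨C, h⟩
      exact ⟨C, fun t ht => by
        simpa only [φ.dist_eq] using h t ht⟩)

/-- A sequence of points of `X` converges to the boundary point `ξ` (in the cone
topology): the geodesic segments from a fixed origin to the points converge (uniformly
on compacta, equivalently pointwise) to a ray representing `ξ`, while their lengths
tend to infinity. -/
def TendstoBdry {X : Type} [MetricSpace X] (x : ℕ → X) (ξ : Bdry X) : Prop :=
  ∃ r : RaySp X, ⟦r⟧ = ξ ∧
    ∃ (σ : ℕ → ℝ → X) (d : ℕ → ℝ),
      (∀ n : ℕ, 0 ≤ d n ∧ σ n 0 = r.1 0 ∧ σ n (d n) = x n ∧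
        ∀ s t : ℝ, s ∈ Set.Icc 0 (d n) → t ∈ Set.Icc 0 (d n) →
          dist (σ n s) (σ n t) = |s - t|) ∧
      Tendsto d atTop atTop ∧
      ∀ t : ℝ, 0 ≤ t → Tendsto (fun n => σ n t) atTop (nhds (r.1 t))

/-- The set `F_h` of boundary points fixed by some nontrivial (hyperbolic) deck
transformation. -/
def Fh {S X : Type} [MetricSpace S] [MetricSpace X] (cov : UnivCover S X) :
    Set (Bdry X) :=
  {ξ : Bdry X | ∃ φ ∈ deck cov, φ ≠ 1 ∧ bdryMap φ ξ = ξ}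

/-! ### Busemann functions -/

/-- The Busemann function of a geodesic ray: `b_r(y) = lim_{t→∞} (d(y, r t) − t)`
(the function is nonincreasing in `t` and bounded below, so the limit is the inf). -/
def busemannFun {X : Type} [MetricSpace X] (r : RaySp X) (y : X) : ℝ :=
  ⨅ t : Set.Ici (0:ℝ), (dist y (r.1 t.1) - t.1)

/-- The generalized Busemann function `α(ξ, x, x') = "d(x',ξ) − d(x,ξ)"` for a boundary
point `ξ`: the difference of Busemann functions of a ray representing `ξ` (in a Hadamard
space this does not depend on the chosen representative). -/
def genBusemann {X : Type} [MetricSpace X] (ξ : Bdry X) (x y : X) : ℝ :=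
  busemannFun (Quotient.out ξ) y - busemannFun (Quotient.out ξ) x

/-! ### The space of geodesics and the geodesic flow -/

/-- `GS`: the space of (bi-infinite, locally isometric) geodesics of `S`, topologized
as a subspace of `C(ℝ, S)` with the compact-open topology. -/
abbrev GeodSp (S : Type) [MetricSpace S] : Type := {g : C(ℝ, S) // IsLocalGeodesic ⇑g}

/-- The geodesic flow: `(t · g)(s) = g(s + t)`. -/
def geodFlow {S : Type} [MetricSpace S] (t : ℝ) (g : GeodSp S) : GeodSp S :=
  ⟨⟨fun s => g.1 (s + t), g.1.continuous.comp (continuous_id.add continuous_const)⟩, by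
    intro u
    obtain ⟨ε, hε, h⟩ := g.2 (u + t)
    refine ⟨ε, hε, fun s v hs hv => ?_⟩
    have h1 : |s + t - (u + t)| < ε := by rwa [show s + t - (u + t) = s - u by ring]
    have h2 : |v + t - (u + t)| < ε := by rwa [show v + t - (u + t) = v - u by ring]
    have h3 := h (s + t) (v + t) h1 h2
    rwa [show s + t - (v + t) = s - v by ring] at h3⟩

/-- The stable set `W^s(g)` of `g ∈ GS`: geodesics `h` admitting lifts to the universal
cover asymptotic to a lift of `g` (same point at `+∞`). -/
def WsGS {S X : Type} [MetricSpace S] [MetricSpace X] (cov : UnivCover S X)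
    (g : GeodSp S) : Set (GeodSp S) :=
  {h : GeodSp S | ∃ (g' h' : ℝ → X) (hg : Isometry g') (hh : Isometry h'),
    (∀ t : ℝ, cov.p (g' t) = g.1 t) ∧ (∀ t : ℝ, cov.p (h' t) = h.1 t) ∧
    endPlus h' hh = endPlus g' hg}

/-- The strong stable set `W^ss(g)` of `g ∈ GS`: geodesics `h` admitting lifts
asymptotic to a lift of `g` whose time-`0` points are equidistant from the common
point at infinity (the generalized Busemann function vanishes). -/
def WssGS {S X : Type} [MetricSpace S] [MetricSpace X] (cov : UnivCover S X)
    (g : GeodSp S) : Set (GeodSp S) :=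
  {h : GeodSp S | ∃ (g' h' : ℝ → X) (hg : Isometry g') (hh : Isometry h'),
    (∀ t : ℝ, cov.p (g' t) = g.1 t) ∧ (∀ t : ℝ, cov.p (h' t) = h.1 t) ∧
    endPlus h' hh = endPlus g' hg ∧
    genBusemann (endPlus g' hg) (g' 0) (h' 0) = 0}

/-- `h` is `s_n`-mixing with `f`: for all neighborhoods `O ∋ h`, `U ∋ f`, eventually
`s_n · O ∩ U ≠ ∅`. -/
def SnMixing {S : Type} [MetricSpace S] (s : ℕ → ℝ) (h f : GeodSp S) : Prop :=
  ∀ O U : Set (GeodSp S), IsOpen O → IsOpen U → h ∈ O → f ∈ U →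
    ∀ᶠ n in atTop, (geodFlow (s n) '' O ∩ U).Nonempty

/-! ### Angles on a cone -/

section

lemma angDist_bddBelow (θ a b : ℝ) : BddBelow {d : ℝ | ∃ k : ℤ, d = |a - b + θ * k|} :=
  ⟨0, by rintro _ ⟨k, rfl⟩; exact abs_nonneg _⟩

lemma angDist_le (θ a b : ℝ) (k : ℤ) : angDist θ a b ≤ |a - b + θ * k| :=
  csInf_le (angDist_bddBelow θ a b) ⟨k, rfl⟩

lemma le_angDist {θ a b c : ℝ} (h : ∀ k : ℤ, c ≤ |a - b + θ * k|) : c ≤ angDist θ a b :=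
  le_csInf ⟨_, 0, rfl⟩ (by rintro _ ⟨k, rfl⟩; exact h k)

lemma angDist_nonneg (θ a b : ℝ) : 0 ≤ angDist θ a b := le_angDist fun _ => abs_nonneg _

/-- The infimum defining the angular distance is attained. -/
lemma angDist_lift {θ : ℝ} (hθ : 0 < θ) (a b : ℝ) :
    ∃ k : ℤ, angDist θ a b = |a - b + θ * k| ∧ |a - b + θ * k| ≤ θ / 2 := by
  refine ⟨-round ((a - b) / θ), le_antisymm (angDist_le _ _ _ _) (le_angDist fun k => ?_), ?_⟩
  · have h := round_le ((a - b) / θ) (-k)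
    have e1 : a - b + θ * ((-round ((a - b) / θ) : ℤ) : ℝ)
        = θ * ((a - b) / θ - round ((a - b) / θ)) := by
      push_cast; field_simp; ring
    have e2 : a - b + θ * (k : ℝ) = θ * ((a - b) / θ - ((-k : ℤ) : ℝ)) := by
      push_cast; field_simp; ring
    rw [e1, e2, abs_mul, abs_mul]
    gcongr
  · have h := abs_sub_round ((a - b) / θ)
    have e1 : a - b + θ * ((-round ((a - b) / θ) : ℤ) : ℝ)
        = θ * ((a - b) / θ - round ((a - b) / θ)) := by
      push_cast; field_simp; ring
    rw [e1, abs_mul, abs_of_pos hθ]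
    nlinarith

lemma angDist_comm (θ a b : ℝ) : angDist θ a b = angDist θ b a := by
  apply le_antisymm
  · refine le_angDist fun k => (angDist_le θ a b (-k)).trans (le_of_eq ?_)
    rw [← abs_neg]; congr 1; push_cast; ring
  · refine le_angDist fun k => (angDist_le θ b a (-k)).trans (le_of_eq ?_)
    rw [← abs_neg]; congr 1; push_cast; ring

lemma angDist_le_half {θ : ℝ} (hθ : 0 < θ) (a b : ℝ) : angDist θ a b ≤ θ / 2 := by
  obtain ⟨k, h1, h2⟩ := angDist_lift hθ a b
  exact h1.trans_le h2

lemma angDist_add_left (θ a b : ℝ) (k : ℤ) : angDist θ (a + θ * k) b = angDist θ a b := by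
  apply le_antisymm
  · refine le_angDist fun j => (angDist_le θ _ b (j - k)).trans (le_of_eq ?_)
    congr 1; push_cast; ring
  · refine le_angDist fun j => (angDist_le θ a b (j + k)).trans (le_of_eq ?_)
    congr 1; push_cast; ring

lemma angDist_add_right (θ a b : ℝ) (k : ℤ) : angDist θ a (b + θ * k) = angDist θ a b := by
  rw [angDist_comm, angDist_add_left, angDist_comm]

lemma angDist_triangle {θ : ℝ} (hθ : 0 < θ) (a b c : ℝ) :
    angDist θ a c ≤ angDist θ a b + angDist θ b c := by
  obtain ⟨k, h1, -⟩ := angDist_lift hθ a b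
  obtain ⟨j, h2, -⟩ := angDist_lift hθ b c
  rw [h1, h2]
  refine (angDist_le θ a c (k + j)).trans ((le_of_eq ?_).trans (abs_add_le _ _))
  congr 1; push_cast; ring

lemma angDist_le_abs (θ a b : ℝ) : angDist θ a b ≤ |a - b| := by
  simpa using angDist_le θ a b 0

lemma angDist_eq_abs {θ a b : ℝ} (h : |a - b| ≤ θ / 2) : angDist θ a b = |a - b| := by
  refine le_antisymm (angDist_le_abs θ a b) (le_angDist fun k => ?_)
  have hθ : 0 ≤ θ := by linarith [abs_nonneg (a - b)]
  rcases eq_or_ne k 0 with rfl | hk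
  · simp
  · have h1 : (1 : ℝ) ≤ |(k : ℝ)| := by
      have := Int.one_le_abs hk
      exact_mod_cast this
    have h2 : θ ≤ |θ * k| := by rw [abs_mul, abs_of_nonneg hθ]; nlinarith
    have h3 : |θ * k| ≤ |a - b + θ * k| + |a - b| := by
      have := abs_sub (a - b + θ * k) (a - b)
      rwa [show a - b + θ * k - (a - b) = θ * k by ring] at this
    linarith

lemma angDist_self {θ : ℝ} (hθ : 0 < θ) (a : ℝ) : angDist θ a a = 0 := by
  rw [angDist_eq_abs (by simp; linarith)]; simp

lemma angDist_add_add (θ a b c : ℝ) : angDist θ (a + c) (b + c) = angDist θ a b := by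
  unfold angDist; congr 1; ext d; simp

/-- The truncated cosine that enters the law of cosines on a cone. -/
def tcos (x : ℝ) : ℝ := Real.cos (min x Real.pi)

lemma tcos_anti {x y : ℝ} (hx : 0 ≤ x) (h : x ≤ y) : tcos y ≤ tcos x := by
  unfold tcos
  exact Real.cos_le_cos_of_nonneg_of_le_pi (le_min hx Real.pi_pos.le) (min_le_right _ _)
    (min_le_min_right _ h)

lemma tcos_of_le {x : ℝ} (h : x ≤ Real.pi) : tcos x = Real.cos x := by
  unfold tcos; rw [min_eq_left h]

lemma tcos_of_ge {x : ℝ} (h : Real.pi ≤ x) : tcos x = -1 := by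
  unfold tcos; rw [min_eq_right h, Real.cos_pi]

lemma neg_one_le_tcos (x : ℝ) : -1 ≤ tcos x := Real.neg_one_le_cos _
lemma tcos_le_one (x : ℝ) : tcos x ≤ 1 := Real.cos_le_one _

/-- The truncated cosine of an angular distance is at most the cosine of any lift of the
angle of size at most `2π`. -/
lemma tcos_angDist_le {θ a b : ℝ} (h : |a - b| ≤ 2 * Real.pi) (hθ : 2 * Real.pi < θ) :
    tcos (angDist θ a b) ≤ Real.cos (a - b) := by
  rw [← Real.cos_abs (a - b)]
  rcases le_total |a - b| Real.pi with h1 | h1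
  · rw [angDist_eq_abs (by linarith), tcos_of_le h1]
  · -- every lift has size at least `2π - |a - b|`
    have h2 : 2 * Real.pi - |a - b| ≤ angDist θ a b := by
      refine le_angDist fun k => ?_
      rcases eq_or_ne k 0 with rfl | hk
      · simp; linarith
      · have h1 : (1 : ℝ) ≤ |(k : ℝ)| := by
          have := Int.one_le_abs hk
          exact_mod_cast this
        have h2 : θ ≤ |θ * k| := by
          rw [abs_mul, abs_of_nonneg (by linarith [Real.pi_pos])]; nlinarith [Real.pi_pos]
        have h3 : |θ * k| ≤ |a - b + θ * k| + |a - b| := by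
          have := abs_sub (a - b + θ * k) (a - b)
          rwa [show a - b + θ * k - (a - b) = θ * k by ring] at this
        linarith
    calc tcos (angDist θ a b) ≤ tcos (2 * Real.pi - |a - b|) := tcos_anti (by linarith) h2
      _ = Real.cos |a - b| := by
        rw [tcos_of_le (by linarith), Real.cos_two_pi_sub]

lemma tcos_add_le {x y : ℝ} (hx : 0 ≤ x) (hy : 0 ≤ y) (h : Real.pi ≤ x + y) :
    tcos x + tcos y ≤ 0 := by
  rcases le_total Real.pi y with h1 | h1
  · rw [tcos_of_ge h1]; linarith [tcos_le_one x]
  · have : tcos x ≤ tcos (Real.pi - y) := tcos_anti (by linarith) (by linarith)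
    rw [tcos_of_le (x := Real.pi - y) (by linarith), Real.cos_pi_sub] at this
    rw [tcos_of_le h1]; linarith

/-- Polar coordinates around a cone point `v` of angle `θ`, valid up to radius `ε`; the
angle runs over all of `ℝ`, and the metric is given by the law of cosines. -/
structure ConeChart {S : Type} [MetricSpace S] (v : S) (θ ε : ℝ) (P : ℝ → ℝ → S) : Prop where
  angle : 2 * Real.pi < θ
  pos : 0 < ε
  zero : ∀ a, P a 0 = v
  law : ∀ a b r s, 0 ≤ r → r < ε → 0 ≤ s → s < ε →
    dist (P a r) (P b s) ^ 2 = r ^ 2 + s ^ 2 - 2 * r * s * tcos (angDist θ a b)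
  surj : ∀ y ∈ ball v ε, ∃ a, P a (dist y v) = y

lemma coneDist_sq {θ a b r s : ℝ} (hr : 0 ≤ r) (hs : 0 ≤ s) :
    coneDist θ (r, a) (s, b) ^ 2 = r ^ 2 + s ^ 2 - 2 * r * s * tcos (angDist θ a b) := by
  unfold coneDist
  split_ifs with h
  · simp only at h ⊢
    rw [tcos_of_le h, Real.sq_sqrt]
    nlinarith [Real.cos_le_one (angDist θ a b), mul_nonneg hr hs, sq_nonneg (r - s)]
  · simp only at h ⊢
    rw [tcos_of_ge (by linarith)]; ring

/-- The cone charts of the definition of an `ESCS` in polar form: the angular coordinate is read modulo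
`θ` by `toIcoMod`. -/
lemma ESCS.exists_chart {S : Type} [MetricSpace S] (hS : ESCS S) {v : S} (hv : v ∈ hS.conical) :
    ∃ ε P, ConeChart v (hS.angle v) ε P := by
  obtain ⟨ε, hε, f, hf0, hfd, hfi⟩ := hS.cone_at v hv
  have hang := hS.angle_gt v hv
  set θ := hS.angle v
  have hθ : 0 < θ := by linarith [Real.pi_pos]
  have hex : ∀ a r : ℝ, ∃ p ∈ ball v ε, 0 < r → r < ε → f p = (r, toIcoMod hθ 0 a) := by
    intro a r
    by_cases h : 0 < r ∧ r < ε
    · have : ((r, toIcoMod hθ 0 a) : ℝ × ℝ) ∈ f '' ball v ε := by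
        rw [hfi]
        right
        refine ⟨h, ?_⟩
        have := toIcoMod_mem_Ico hθ 0 a
        simpa using this
      obtain ⟨p, hp, hp'⟩ := this
      exact ⟨p, hp, fun _ _ => hp'⟩
    · exact ⟨v, mem_ball_self hε, fun h1 h2 => absurd ⟨h1, h2⟩ h⟩
  choose Q hQ hQf using hex
  have hang' : ∀ a b, angDist θ (toIcoMod hθ 0 a) (toIcoMod hθ 0 b) = angDist θ a b := by
    intro a b
    have key : ∀ a, toIcoMod hθ 0 a = a + θ * ((-toIcoDiv hθ 0 a : ℤ) : ℝ) := by
      intro a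
      have := toIcoMod_add_toIcoDiv_zsmul hθ 0 a
      rw [zsmul_eq_mul] at this
      push_cast
      linarith
    rw [key a, key b, angDist_add_left, angDist_add_right]
  let P : ℝ → ℝ → S := fun a r => if r ≤ 0 then v else Q a r
  have hPmem : ∀ a r, P a r ∈ ball v ε := by
    intro a r; simp only [P]; split_ifs
    · exact mem_ball_self hε
    · exact hQ a r
  have hPf : ∀ a r, 0 ≤ r → r < ε → ∃ a', f (P a r) = (r, a') ∧
      (0 < r → a' = toIcoMod hθ 0 a) := by
    intro a r h0 h1
    rcases h0.eq_or_lt with h | h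
    · subst h; exact ⟨0, by simp [P, hf0], fun h => absurd h (lt_irrefl _)⟩
    · exact ⟨_, by simp only [P]; rw [if_neg (by linarith)]; exact hQf a r h h1, fun _ => rfl⟩
  have law : ∀ a b r s, 0 ≤ r → r < ε → 0 ≤ s → s < ε →
      dist (P a r) (P b s) ^ 2 = r ^ 2 + s ^ 2 - 2 * r * s * tcos (angDist θ a b) := by
    intro a b r s hr hr' hs hs'
    obtain ⟨a', ha, ha'⟩ := hPf a r hr hr'
    obtain ⟨b', hb, hb'⟩ := hPf b s hs hs'
    rw [← hfd _ (hPmem _ _) _ (hPmem _ _), ha, hb, coneDist_sq hr hs]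
    rcases hr.eq_or_lt with h | h
    · subst h; ring
    rcases hs.eq_or_lt with h2 | h2
    · subst h2; ring
    rw [ha' h, hb' h2, hang']
  refine ⟨ε, P, hang, hε, fun a => by simp [P], law, ?_⟩
  intro y hy
  have hy' : f y ∈ insert ((0:ℝ), (0:ℝ)) (Set.Ioo 0 ε ×ˢ Set.Ico 0 θ) := by
    rw [← hfi]; exact ⟨y, hy, rfl⟩
  have hzero : ∀ z ∈ ball v ε, 0 ≤ (f z).1 → dist z v = (f z).1 := by
    intro z hz h0
    have h1 := hfd z hz v (mem_ball_self hε)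
    have h2 := coneDist_sq (θ := θ) (a := (f z).2) (b := 0) h0 le_rfl
    rw [← hf0] at h2
    simp only [Prod.mk.eta] at h2
    rw [h1] at h2
    have : dist z v ^ 2 = (f z).1 ^ 2 := by rw [h2]; ring
    exact (pow_left_inj₀ dist_nonneg h0 two_ne_zero).1 this
  have hinj : ∀ z ∈ ball v ε, ∀ w ∈ ball v ε, 0 ≤ (f z).1 → f z = f w → z = w := by
    intro z hz w hw h0 h
    have h1 := hfd z hz w hw
    have h2 := coneDist_sq (θ := θ) (a := (f z).2) (b := (f z).2) h0 h0
    rw [angDist_self hθ, tcos_of_le Real.pi_pos.le, Real.cos_zero] at h2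
    rw [← h] at h1
    simp only [Prod.mk.eta] at h2
    rw [h1] at h2
    have : dist z w ^ 2 = 0 := by rw [h2]; ring
    exact dist_eq_zero.1 (pow_eq_zero_iff two_ne_zero |>.1 this)
  rcases hy' with h | h
  · refine ⟨0, ?_⟩
    rw [hzero y hy (by rw [h])]
    rw [h]
    refine (hinj y hy _ (hPmem _ _) (by rw [h]) ?_).symm
    simp [P, h, hf0]
  · obtain ⟨h1, h2⟩ := h
    refine ⟨(f y).2, ?_⟩
    rw [hzero y hy h1.1.le]
    refine (hinj y hy _ (hPmem _ _) h1.1.le ?_).symm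
    simp only [P]
    rw [if_neg (by linarith [h1.1]), hQf _ _ h1.1 h1.2]
    rw [(toIcoMod_eq_self hθ).2 (by simpa using h2)]

end

/-! ### Local `CAT(0)` geometry -/

section

/-- The inequality of Bruhat and Tits for `p` and a midpoint `m` of `x` and `y`. -/
def CN {S : Type} [MetricSpace S] (p x y m : S) : Prop :=
  dist p m ^ 2 ≤ dist p x ^ 2 / 2 + dist p y ^ 2 / 2 - dist x y ^ 2 / 4

/-- Uniform local `CAT(0)` geometry at scale `r`: nearby points are joined by a segment, midpoints
satisfy the inequality of Bruhat and Tits, and segments can be extended to twice their length. -/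
structure LC (S : Type) [MetricSpace S] (r : ℝ) : Prop where
  pos : 0 < r
  geo : ∀ x y : S, dist x y < r → ∃ c : ℝ → S, c 0 = x ∧ c 1 = y ∧
    ∀ s ∈ Icc (0:ℝ) 1, ∀ t ∈ Icc (0:ℝ) 1, dist (c s) (c t) = |s - t| * dist x y
  cn : ∀ p x y m : S, dist x y < r → dist p x < r → dist x m = dist x y / 2 →
    dist m y = dist x y / 2 → CN p x y m
  ext : ∀ x y : S, 0 < dist x y → dist x y < r →
    ∃ z, dist y z = dist x y ∧ dist x z = 2 * dist x y

/-- The three properties of `LC`, for points of one given ball. -/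
structure LCAt {S : Type} [MetricSpace S] (x : S) (δ : ℝ) : Prop where
  pos : 0 < δ
  geo : ∀ y ∈ ball x δ, ∀ z ∈ ball x δ, ∃ c : ℝ → S, c 0 = y ∧ c 1 = z ∧
    ∀ s ∈ Icc (0:ℝ) 1, ∀ t ∈ Icc (0:ℝ) 1, dist (c s) (c t) = |s - t| * dist y z
  cn : ∀ y ∈ ball x δ, ∀ z ∈ ball x δ, ∃ m, ∀ p ∈ ball x δ, CN p y z m
  ext : ∀ y ∈ ball x δ, ∀ z ∈ ball x δ,
    ∃ w, dist z w = dist y z ∧ dist y w = 2 * dist y z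

/-- A Lebesgue number of the cover by good balls is a uniform scale. The inequality assumed for one
point `m` holds for every midpoint, since applying it to a midpoint shows that this is `m`. -/
lemma LC.of_at {S : Type} [MetricSpace S] [CompactSpace S] (h : ∀ x : S, ∃ δ, LCAt x δ) :
    ∃ r, LC S r := by
  choose δ hδ using h
  obtain ⟨L, hL, H⟩ := lebesgue_number_lemma_of_metric (s := (univ : Set S)) isCompact_univ
    (c := fun x => ball x (δ x)) (fun x => isOpen_ball)
    (fun x _ => mem_iUnion.2 ⟨x, mem_ball_self (hδ x).pos⟩)
  refine ⟨L, hL, ?_, ?_, ?_⟩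
  · intro x y hxy
    obtain ⟨i, hi⟩ := H x (mem_univ x)
    exact (hδ i).geo x (hi (mem_ball_self hL)) y (hi (by rwa [mem_ball, dist_comm]))
  · intro p x y m hxy hpx hxm hmy
    obtain ⟨i, hi⟩ := H x (mem_univ x)
    obtain ⟨m0, hm0⟩ := (hδ i).cn x (hi (mem_ball_self hL)) y (hi (by rwa [mem_ball, dist_comm]))
    have h1 := hm0 m (hi (by rw [mem_ball, dist_comm]; linarith [dist_nonneg (x := x) (y := y)]))
    have h2 : m = m0 := by
      unfold CN at h1
      rw [dist_comm m x, hxm, hmy] at h1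
      have : dist m m0 ^ 2 = 0 := le_antisymm (by linarith) (sq_nonneg _)
      exact dist_eq_zero.1 (pow_eq_zero_iff two_ne_zero |>.1 this)
    rw [h2]
    exact hm0 p (hi hpx)
  · intro x y _ hxy
    obtain ⟨i, hi⟩ := H x (mem_univ x)
    exact (hδ i).ext x (hi (mem_ball_self hL)) y (hi (by rwa [mem_ball, dist_comm]))

/-- Near a Euclidean point the three properties are inherited from the plane. -/
lemma lcAt_flat {S : Type} [MetricSpace S] {x : S} {ε : ℝ} (hε : 0 < ε)
    {f : S → EuclideanSpace ℝ (Fin 2)}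
    (hf : ∀ y ∈ ball x ε, ∀ z ∈ ball x ε, dist (f y) (f z) = dist y z)
    (hfi : f '' ball x ε = ball (f x) ε) : LCAt x (ε / 4) := by
  have hx : x ∈ ball x ε := mem_ball_self hε
  have hsub : ball x (ε / 4) ⊆ ball x ε := ball_subset_ball (by linarith)
  have hinv : ∀ w, ∃ p, w ∈ ball (f x) ε → p ∈ ball x ε ∧ f p = w := by
    intro w
    by_cases h : w ∈ ball (f x) ε
    · rw [← hfi] at h; obtain ⟨p, hp, hp'⟩ := h; exact ⟨p, fun _ => ⟨hp, hp'⟩⟩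
    · exact ⟨x, fun h' => absurd h' h⟩
  choose g hg using hinv
  have hnear : ∀ y ∈ ball x (ε / 4), dist (f y) (f x) < ε / 4 := by
    intro y hy; rw [hf y (hsub hy) x hx]; exact hy
  have hgd : ∀ w ∈ ball (f x) ε, ∀ w' ∈ ball (f x) ε, dist (g w) (g w') = dist w w' := by
    intro w hw w' hw'
    rw [← hf _ (hg w hw).1 _ (hg w' hw').1, (hg w hw).2, (hg w' hw').2]
  have hgf : ∀ y ∈ ball x ε, g (f y) = y := by
    intro y hy
    have h1 : f y ∈ ball (f x) ε := by rw [mem_ball, hf y hy x hx]; exact hy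
    rw [← dist_eq_zero, ← hf _ (hg _ h1).1 _ hy, (hg _ h1).2, dist_self]
  have hdg : ∀ y ∈ ball x ε, ∀ w ∈ ball (f x) ε, dist y (g w) = dist (f y) w := by
    intro y hy w hw
    rw [← hf _ hy _ (hg w hw).1, (hg w hw).2]
  refine ⟨by linarith, ?_, ?_, ?_⟩
  · intro y hy z hz
    have hmem : ∀ t ∈ Icc (0:ℝ) 1, AffineMap.lineMap (f y) (f z) t ∈ ball (f x) ε := by
      intro t ht
      have := (convex_ball (f x) (ε/4)).lineMap_mem (hnear y hy) (hnear z hz) ht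
      exact ball_subset_ball (by linarith) this
    refine ⟨fun t => g (AffineMap.lineMap (f y) (f z) t), ?_, ?_, ?_⟩
    · simp [hgf y (hsub hy)]
    · simp [hgf z (hsub hz)]
    · intro s hs t ht
      rw [hgd _ (hmem s hs) _ (hmem t ht), dist_lineMap_lineMap, Real.dist_eq,
        hf y (hsub hy) z (hsub hz)]
  · intro y hy z hz
    have hm : midpoint ℝ (f y) (f z) ∈ ball (f x) ε :=
      ball_subset_ball (by linarith) ((convex_ball (f x) (ε/4)).midpoint_mem (hnear y hy) (hnear z hz))
    refine ⟨g (midpoint ℝ (f y) (f z)), fun p hp => ?_⟩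
    unfold CN
    rw [hdg p (hsub hp) _ hm, ← hf p (hsub hp) y (hsub hy), ← hf p (hsub hp) z (hsub hz),
      ← hf y (hsub hy) z (hsub hz)]
    have := EuclideanGeometry.dist_sq_add_dist_sq_eq_two_mul_dist_midpoint_sq_add_half_dist_sq
      (f p) (f y) (f z)
    linarith
  · intro y hy z hz
    have hw : (2:ℝ) • f z - f y ∈ ball (f x) ε := by
      have h1 := hnear y hy
      have h2 := hnear z hz
      have h3 : dist ((2:ℝ) • f z - f y) (f x) ≤ 2 * dist (f z) (f x) + dist (f y) (f x) := by
        rw [dist_eq_norm, dist_eq_norm, dist_eq_norm,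
          show (2:ℝ) • f z - f y - f x = (2:ℝ) • (f z - f x) - (f y - f x) by module]
        refine (norm_sub_le _ _).trans ?_
        rw [norm_smul]; simp
      rw [mem_ball]; linarith
    refine ⟨g ((2:ℝ) • f z - f y), ?_, ?_⟩
    · rw [hdg z (hsub hz) _ hw, ← hf y (hsub hy) z (hsub hz), dist_eq_norm, dist_eq_norm,
        show f z - ((2:ℝ) • f z - f y) = f y - f z by module]
    · rw [hdg y (hsub hy) _ hw, ← hf y (hsub hy) z (hsub hz), dist_eq_norm, dist_eq_norm,
        show f y - ((2:ℝ) • f z - f y) = (2:ℝ) • (f y - f z) by module, norm_smul]; simp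

lemma complex_law (Y Z : ℂ) :
    ‖Y - Z‖ ^ 2 = ‖Y‖ ^ 2 + ‖Z‖ ^ 2 - 2 * ‖Y‖ * ‖Z‖ * Real.cos (Y.arg - Z.arg) := by
  have h1 := Complex.norm_mul_cos_arg Y
  have h2 := Complex.norm_mul_sin_arg Y
  have h3 := Complex.norm_mul_cos_arg Z
  have h4 := Complex.norm_mul_sin_arg Z
  have e : 2 * ‖Y‖ * ‖Z‖ * Real.cos (Y.arg - Z.arg) = 2 * (Y.re * Z.re + Y.im * Z.im) := by
    rw [Real.cos_sub, ← h1, ← h2, ← h3, ← h4]; ring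
  rw [e, Complex.sq_norm, Complex.sq_norm, Complex.sq_norm, Complex.normSq_apply,
    Complex.normSq_apply, Complex.normSq_apply]
  simp only [Complex.sub_re, Complex.sub_im]; ring

/-- `‖Z‖ cos (τ - arg Z)` is a linear function of `Z`. -/
lemma norm_mul_cos_sub (τ : ℝ) (Z : ℂ) :
    ‖Z‖ * Real.cos (τ - Z.arg) = Z.re * Real.cos τ + Z.im * Real.sin τ := by
  rw [Real.cos_sub, ← Complex.norm_mul_cos_arg Z, ← Complex.norm_mul_sin_arg Z]; ring

lemma abs_arg_sub_le {Y Z : ℂ} (hY : 0 ≤ Y.im) (hZ : 0 ≤ Z.im) : |Y.arg - Z.arg| ≤ Real.pi := by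
  have h1 := Complex.arg_nonneg_iff.2 hY
  have h2 := Complex.arg_nonneg_iff.2 hZ
  have h3 := Complex.arg_le_pi Y
  have h4 := Complex.arg_le_pi Z
  rw [abs_le]; constructor <;> linarith

/-- On a closed half-plane the function `‖Z‖ · tcos (angDist τ (arg Z))`, which carries the distance
to a point of a cone of angle `> 2π`, is midpoint concave. -/
lemma halfplane_concave {θ τ : ℝ} (hθ : 2 * Real.pi < θ) {Y Z M : ℂ} (hY : 0 ≤ Y.im)
    (hZ : 0 ≤ Z.im) (hM : 2 * M = Y + Z) (hτ : angDist θ τ M.arg = |τ - M.arg|) :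
    ‖Y‖ * tcos (angDist θ τ Y.arg) + ‖Z‖ * tcos (angDist θ τ Z.arg)
      ≤ 2 * (‖M‖ * tcos (angDist θ τ M.arg)) := by
  have hθ0 : 0 < θ := by linarith [Real.pi_pos]
  have hre : 2 * M.re = Y.re + Z.re := by simpa using congrArg Complex.re hM
  have him : 2 * M.im = Y.im + Z.im := by simpa using congrArg Complex.im hM
  have hMi : 0 ≤ M.im := by linarith
  rcases le_or_gt |τ - M.arg| Real.pi with h | h
  · have key : ∀ W : ℂ, 0 ≤ W.im → ‖W‖ * tcos (angDist θ τ W.arg) ≤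
        W.re * Real.cos τ + W.im * Real.sin τ := by
      intro W hW
      rw [← norm_mul_cos_sub]
      refine mul_le_mul_of_nonneg_left (tcos_angDist_le ?_ hθ) (norm_nonneg _)
      have := abs_sub_le τ M.arg W.arg
      linarith [abs_arg_sub_le hMi hW]
    have h1 := key Y hY
    have h2 := key Z hZ
    rw [hτ, tcos_of_le h, Real.cos_abs, norm_mul_cos_sub,
      show 2 * (M.re * Real.cos τ + M.im * Real.sin τ)
        = (2 * M.re) * Real.cos τ + (2 * M.im) * Real.sin τ by ring, hre, him]
    linarith
  · have key : ∀ W : ℂ, 0 ≤ W.im → ‖W‖ * tcos (angDist θ τ W.arg) ≤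
        -(W.re * Real.cos M.arg + W.im * Real.sin M.arg) := by
      intro W hW
      rw [← norm_mul_cos_sub, ← mul_neg]
      refine mul_le_mul_of_nonneg_left ?_ (norm_nonneg _)
      have h1 := abs_arg_sub_le hMi hW
      have h2 := angDist_triangle hθ0 τ W.arg M.arg
      have h3 := angDist_le_abs θ W.arg M.arg
      rw [abs_sub_comm] at h3
      rw [← Real.cos_abs, ← Real.cos_pi_sub]
      refine (tcos_anti (by linarith) (show Real.pi - |M.arg - W.arg| ≤ _ by linarith)).trans ?_
      rw [tcos_of_le (by linarith [abs_nonneg (M.arg - W.arg)])]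
    have h1 := key Y hY
    have h2 := key Z hZ
    rw [hτ, tcos_of_ge h.le]
    have h3 : M.re * Real.cos M.arg + M.im * Real.sin M.arg = ‖M‖ := by
      rw [← norm_mul_cos_sub]; simp
    rw [← h3, show 2 * ((M.re * Real.cos M.arg + M.im * Real.sin M.arg) * -1)
        = -((2 * M.re) * Real.cos M.arg + (2 * M.im) * Real.sin M.arg) by ring, hre, him]
    linarith

lemma angDist_reflect (θ a b : ℝ) : angDist θ (-a) (-b) = angDist θ a b := by
  rw [angDist_comm θ a b]
  unfold angDist; congr 1; ext d; constructor <;> rintro ⟨k, rfl⟩ <;> refine ⟨k, ?_⟩ <;>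
    congr 1 <;> ring

lemma angDist_sign (θ a b c σ : ℝ) (hσ : σ = 1 ∨ σ = -1) :
    angDist θ (a + σ * b) (a + σ * c) = angDist θ b c := by
  rw [add_comm a, add_comm a, angDist_add_add]
  rcases hσ with rfl | rfl
  · simp
  · simp [angDist_reflect]

namespace ConeChart

variable {S : Type} [MetricSpace S] {v : S} {θ ε : ℝ} {P : ℝ → ℝ → S}

lemma theta_pos (h : ConeChart v θ ε P) : 0 < θ := by linarith [h.angle, Real.pi_pos]

lemma dist_v (h : ConeChart v θ ε P) {a s : ℝ} (hs : 0 ≤ s) (hs' : s < ε) :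
    dist (P a s) v = s := by
  have := h.law a a s 0 hs hs' le_rfl h.pos
  rw [h.zero] at this
  refine (pow_left_inj₀ dist_nonneg hs two_ne_zero).1 ?_
  rw [this]; ring

lemma eq_of_angDist (h : ConeChart v θ ε P) {a b s : ℝ} (hs : 0 ≤ s) (hs' : s < ε)
    (hab : angDist θ a b = 0) : P a s = P b s := by
  have := h.law a b s s hs hs' hs hs'
  rw [hab, tcos_of_le Real.pi_pos.le, Real.cos_zero] at this
  rw [← dist_eq_zero, ← pow_eq_zero_iff two_ne_zero, this]; ring

/-- Two directions at the cone point that meet at an angle at least `π` fit together to a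
geodesic. -/
lemma dist_through (h : ConeChart v θ ε P) {a b s t : ℝ} (hs : 0 ≤ s) (hs' : s < ε)
    (ht : 0 ≤ t) (ht' : t < ε) (hab : Real.pi ≤ angDist θ a b) :
    dist (P a s) (P b t) = s + t := by
  refine (pow_left_inj₀ dist_nonneg (by positivity) two_ne_zero).1 ?_
  rw [h.law a b s t hs hs' ht ht', tcos_of_ge hab]; ring

lemma dist_radial (h : ConeChart v θ ε P) {a s t : ℝ} (hs : 0 ≤ s) (hs' : s < ε)
    (ht : 0 ≤ t) (ht' : t < ε) : dist (P a s) (P a t) = |s - t| := by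
  refine (pow_left_inj₀ dist_nonneg (abs_nonneg _) two_ne_zero).1 ?_
  rw [h.law a a s t hs hs' ht ht', angDist_self h.theta_pos, tcos_of_le Real.pi_pos.le,
    Real.cos_zero, sq_abs]; ring

lemma dist_line (h : ConeChart v θ ε P) {a b : ℝ} (hab : Real.pi ≤ angDist θ a b) {s t : ℝ}
    (hs : |s| < ε) (ht : |t| < ε) :
    dist (if s ≤ 0 then P a (-s) else P b s) (if t ≤ 0 then P a (-t) else P b t) = |s - t| := by
  rw [abs_lt] at hs ht
  split_ifs with h1 h2 h2
  · rw [h.dist_radial (by linarith) (by linarith) (by linarith) (by linarith), ← abs_neg]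
    congr 1; ring
  · rw [h.dist_through (by linarith) (by linarith) (by linarith) (by linarith) hab,
      abs_of_nonpos (by linarith)]; ring
  · rw [dist_comm, h.dist_through (by linarith) (by linarith) (by linarith) (by linarith) hab,
      abs_of_nonneg (by linarith)]; ring
  · rw [h.dist_radial (by linarith) (by linarith) (by linarith) (by linarith)]

/-- The half-plane starting at direction `a` and turning in the direction of `σ = ±1`, wrapped
isometrically around the cone point. -/
lemma dist_half (h : ConeChart v θ ε P) {a σ : ℝ} (hσ : σ = 1 ∨ σ = -1) {Y Z : ℂ}
    (hY : 0 ≤ Y.im) (hZ : 0 ≤ Z.im) (hY' : ‖Y‖ < ε) (hZ' : ‖Z‖ < ε) :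
    dist (P (a + σ * Y.arg) ‖Y‖) (P (a + σ * Z.arg) ‖Z‖) = ‖Y - Z‖ := by
  refine (pow_left_inj₀ dist_nonneg (norm_nonneg _) two_ne_zero).1 ?_
  have h1 := abs_arg_sub_le hY hZ
  rw [h.law _ _ _ _ (norm_nonneg _) hY' (norm_nonneg _) hZ', angDist_sign _ _ _ _ _ hσ,
    angDist_eq_abs (by linarith [h.angle]), tcos_of_le h1, Real.cos_abs, complex_law]

/-- Near a cone point of angle `> 2π` the geometry is `CAT(0)`: two points spanning an angle `≤ π` lie
in a flat half disc, where `halfplane_concave` applies, and otherwise the segment runs through `v`. -/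
lemma lcAt (h : ConeChart v θ ε P) : LCAt v (ε / 4) := by
  have hε := h.pos
  have hsub : ball v (ε / 4) ⊆ ball v ε := ball_subset_ball (by linarith)
  -- two points span an angle `α ∈ [0, θ/2]`, measured in one of the two orientations
  have pair : ∀ y ∈ ball v (ε / 4), ∀ z ∈ ball v (ε / 4), ∃ a σ α : ℝ, (σ = 1 ∨ σ = -1) ∧ 0 ≤ α ∧
      α ≤ θ / 2 ∧ P a (dist y v) = y ∧ P (a + σ * α) (dist z v) = z := by
    intro y hy z hz
    obtain ⟨a, ha⟩ := h.surj y (hsub hy)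
    obtain ⟨b, hb⟩ := h.surj z (hsub hz)
    obtain ⟨k, -, hk⟩ := angDist_lift h.theta_pos b a
    have hz' : P (a + (b - a + θ * k)) (dist z v) = z := by
      rw [← hb, hb]
      conv_rhs => rw [← hb]
      apply h.eq_of_angDist dist_nonneg (hsub hz)
      rw [show a + (b - a + θ * k) = b + θ * k by ring, angDist_add_left, angDist_self h.theta_pos]
    rcases le_total 0 (b - a + θ * k) with h0 | h0
    · exact ⟨a, 1, b - a + θ * k, Or.inl rfl, h0, (le_abs_self _).trans hk, ha, by rwa [one_mul]⟩
    · exact ⟨a, -1, -(b - a + θ * k), Or.inr rfl, by linarith, (neg_le_abs _).trans hk, ha,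
        by rw [neg_mul_neg, one_mul]; exact hz'⟩
  have angle : ∀ {a σ α : ℝ}, (σ = 1 ∨ σ = -1) → 0 ≤ α → α ≤ θ / 2 →
      angDist θ a (a + σ * α) = α := by
    intro a σ α hσ h0 h1
    have : |a - (a + σ * α)| = α := by
      rw [show a - (a + σ * α) = -(σ * α) by ring, abs_neg, abs_mul, abs_of_nonneg h0]
      rcases hσ with rfl | rfl <;> simp
    rw [angDist_eq_abs (by rw [this]; exact h1), this]
  -- when the angle is at most `π`, both points lie in a wrapped half-plane
  have half : ∀ {y z : S} {a σ α : ℝ}, y ∈ ball v (ε / 4) → z ∈ ball v (ε / 4) → 0 ≤ α →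
      α ≤ Real.pi → P a (dist y v) = y → P (a + σ * α) (dist z v) = z →
      ∃ Y Z : ℂ, 0 ≤ Y.im ∧ 0 ≤ Z.im ∧ ‖Y‖ < ε / 4 ∧ ‖Z‖ < ε / 4 ∧
        P (a + σ * Y.arg) ‖Y‖ = y ∧ P (a + σ * Z.arg) ‖Z‖ = z ∧ Y.im = 0 := by
    intro y z a σ α hy hz h0 h1 hya hza
    refine ⟨(dist y v : ℝ), (dist z v : ℝ) * Complex.exp (α * Complex.I), by simp, ?_, ?_, ?_, ?_,
      ?_, by simp⟩
    · rw [Complex.im_ofReal_mul, Complex.exp_ofReal_mul_I_im]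
      exact mul_nonneg dist_nonneg (Real.sin_nonneg_of_nonneg_of_le_pi h0 h1)
    · simpa using hy
    · rw [norm_mul, Complex.norm_exp_ofReal_mul_I]; simpa using hz
    · rw [Complex.arg_ofReal_of_nonneg dist_nonneg]
      simpa using hya
    · rw [norm_mul, Complex.norm_exp_ofReal_mul_I, mul_one, Complex.norm_real, Real.norm_eq_abs,
        abs_of_nonneg dist_nonneg]
      rcases (dist_nonneg (x := z) (y := v)).eq_or_lt with h2 | h2
      · rw [← h2, h.zero, ← hza, ← h2, h.zero]
      · rw [Complex.arg_real_mul _ h2, Complex.arg_exp_mul_I,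
          (toIocMod_eq_self _).2 ⟨by linarith [Real.pi_pos], by linarith⟩]
        exact hza
  refine ⟨by linarith, ?_, ?_, ?_⟩
  · intro y hy z hz
    obtain ⟨a, σ, α, hσ, h0, h1, hya, hza⟩ := pair y hy z hz
    rcases le_total α Real.pi with hα | hα
    · obtain ⟨Y, Z, hY, hZ, hYn, hZn, hYy, hZz, -⟩ := half hy hz h0 hα hya hza
      have hmem : ∀ t ∈ Icc (0:ℝ) 1, ‖AffineMap.lineMap Y Z t‖ < ε := by
        intro t ht
        have := (convex_ball (0:ℂ) ε).lineMap_mem (x := Y) (y := Z) (by simp; linarith)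
          (by simp; linarith) ht
        simpa using this
      have him : ∀ t ∈ Icc (0:ℝ) 1, 0 ≤ (AffineMap.lineMap Y Z t).im := by
        intro t ht
        simp [AffineMap.lineMap_apply]
        nlinarith [ht.1, ht.2]
      refine ⟨fun t => P (a + σ * (AffineMap.lineMap Y Z t).arg) ‖AffineMap.lineMap Y Z t‖,
        by simpa using hYy, by simpa using hZz, ?_⟩
      intro s hs t ht
      rw [h.dist_half hσ (him s hs) (him t ht) (hmem s hs) (hmem t ht), ← dist_eq_norm,
        dist_lineMap_lineMap, Real.dist_eq]
      congr 1
      rw [← hYy, ← hZz, h.dist_half hσ hY hZ (by linarith) (by linarith), dist_eq_norm]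
    · rw [← angle (a := a) hσ h0 h1] at hα
      set b := a + σ * α
      rw [mem_ball] at hy hz
      have hyz : dist y z = dist y v + dist z v := by
        conv_lhs => rw [← hya, ← hza]
        exact h.dist_through dist_nonneg (by linarith) dist_nonneg (by linarith) hα
      refine ⟨fun t => if -dist y v + t * dist y z ≤ 0 then P a (-(-dist y v + t * dist y z))
        else P b (-dist y v + t * dist y z), ?_, ?_, ?_⟩
      · simp [hya]
      · have : -dist y v + 1 * dist y z = dist z v := by rw [hyz]; ring
        simp only [this]
        split_ifs with h3
        · have h4 : dist z v = 0 := le_antisymm h3 dist_nonneg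
          rw [h4, neg_zero, h.zero]; exact (dist_eq_zero.1 h4).symm
        · exact hza
      · have hu : ∀ t ∈ Icc (0:ℝ) 1, |-dist y v + t * dist y z| < ε := by
          intro t ht
          rw [abs_lt, hyz]
          constructor <;> nlinarith [ht.1, ht.2, dist_nonneg (x := y) (y := v),
            dist_nonneg (x := z) (y := v)]
        intro s hs t ht
        rw [h.dist_line hα (hu s hs) (hu t ht),
          show -dist y v + s * dist y z - (-dist y v + t * dist y z) = (s - t) * dist y z by ring,
          abs_mul, abs_of_nonneg (dist_nonneg (x := y) (y := z))]
  · intro y hy z hz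
    obtain ⟨a, σ, α, hσ, h0, h1, hya, hza⟩ := pair y hy z hz
    rcases le_total α Real.pi with hα | hα
    · obtain ⟨Y, Z, hY, hZ, hYn, hZn, hYy, hZz, -⟩ := half hy hz h0 hα hya hza
      obtain ⟨M, hM⟩ : ∃ M : ℂ, 2 * M = Y + Z := ⟨(Y + Z) / 2, by ring⟩
      have him : 0 ≤ M.im := by
        have := congrArg Complex.im hM; simp at this; linarith
      have hMn : ‖M‖ < ε := by
        have h2 : ‖2 * M‖ ≤ ‖Y‖ + ‖Z‖ := hM ▸ norm_add_le Y Z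
        rw [norm_mul] at h2; norm_num at h2; linarith
      refine ⟨P (a + σ * M.arg) ‖M‖, fun p hp => ?_⟩
      obtain ⟨φ, hφ⟩ := h.surj p (hsub hp)
      have hps : dist p v < ε := hsub hp
      obtain ⟨τ, hτ, hτM⟩ : ∃ τ, (∀ ψ, angDist θ φ (a + σ * ψ) = angDist θ τ ψ) ∧
          angDist θ τ M.arg = |τ - M.arg| := by
        obtain ⟨k, hk, -⟩ := angDist_lift h.theta_pos φ (a + σ * M.arg)
        have h2 : ∀ ψ, angDist θ φ (a + σ * ψ) = angDist θ (σ * (φ - a + θ * k)) ψ := by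
          intro ψ
          rw [← angDist_sign θ a (σ * (φ - a + θ * k)) ψ σ hσ, ← mul_assoc]
          have : σ * σ = 1 := by rcases hσ with rfl | rfl <;> norm_num
          rw [this, one_mul, show a + (φ - a + θ * k) = φ + θ * k by ring, angDist_add_left]
        refine ⟨σ * (φ - a + θ * k), h2, ?_⟩
        rw [← h2, hk]
        rcases hσ with rfl | rfl
        · congr 1; ring
        · rw [← abs_neg]; congr 1; ring
      have key := halfplane_concave h.angle hY hZ hM hτM
      have law' : ∀ W : ℂ, ‖W‖ < ε → dist p (P (a + σ * W.arg) ‖W‖) ^ 2 = dist p v ^ 2 + ‖W‖ ^ 2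
          - 2 * dist p v * ‖W‖ * tcos (angDist θ τ W.arg) := by
        intro W hW
        conv_lhs => rw [← hφ]
        rw [h.law _ _ _ _ dist_nonneg hps (norm_nonneg _) hW, hτ]
      have hyz : dist y z = ‖Y - Z‖ := by
        rw [← hYy, ← hZz, h.dist_half hσ hY hZ (by linarith) (by linarith)]
      unfold CN
      rw [law' M hMn, hyz]
      conv_rhs => rw [← hYy, ← hZz]
      rw [law' Y (by linarith), law' Z (by linarith)]
      have par : ‖Y - Z‖ ^ 2 = 2 * ‖Y‖ ^ 2 + 2 * ‖Z‖ ^ 2 - 4 * ‖M‖ ^ 2 := by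
        have h3 := parallelogram_law_with_norm ℝ Y Z
        rw [← hM, norm_mul] at h3; norm_num at h3; nlinarith
      rw [par]
      nlinarith [dist_nonneg (x := p) (y := v)]
    · rw [← angle (a := a) hσ h0 h1] at hα
      set b := a + σ * α
      rw [mem_ball] at hy hz
      have hyz : dist y z = dist y v + dist z v := by
        conv_lhs => rw [← hya, ← hza]
        exact h.dist_through dist_nonneg (by linarith) dist_nonneg (by linarith) hα
      have hdy : 0 ≤ dist y v := dist_nonneg
      have hdz : 0 ≤ dist z v := dist_nonneg
      have main : ∀ p ∈ ball v (ε / 4), ∃ s A B, 0 ≤ s ∧ A + B ≤ 0 ∧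
          (∀ t, 0 ≤ t → t < ε → dist p (P a t) ^ 2 = s ^ 2 + t ^ 2 - 2 * s * t * A) ∧
          (∀ t, 0 ≤ t → t < ε → dist p (P b t) ^ 2 = s ^ 2 + t ^ 2 - 2 * s * t * B) := by
        intro p hp
        obtain ⟨φ, hφ⟩ := h.surj p (hsub hp)
        have hps : dist p v < ε := hsub hp
        refine ⟨dist p v, tcos (angDist θ φ a), tcos (angDist θ φ b), dist_nonneg,
          tcos_add_le (angDist_nonneg _ _ _) (angDist_nonneg _ _ _) ?_, ?_, ?_⟩
        · have := angDist_triangle h.theta_pos a φ b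
          rw [angDist_comm θ a φ] at this; linarith
        · intro t ht ht'
          conv_lhs => rw [← hφ]
          rw [h.law _ _ _ _ dist_nonneg hps ht ht']
        · intro t ht ht'
          conv_lhs => rw [← hφ]
          rw [h.law _ _ _ _ dist_nonneg hps ht ht']
      rcases le_total (dist z v) (dist y v) with h2 | h2
      · refine ⟨P a ((dist y v - dist z v) / 2), fun p hp => ?_⟩
        obtain ⟨s, A, B, hs, hAB, hA, hB⟩ := main p hp
        have e1 := hA _ hdy (by linarith)
        have e2 := hB _ hdz (by linarith)
        rw [hya] at e1; rw [hza] at e2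
        unfold CN
        rw [hA _ (by linarith) (by linarith), e1, e2, hyz]
        nlinarith [mul_nonneg hs hdz]
      · refine ⟨P b ((dist z v - dist y v) / 2), fun p hp => ?_⟩
        obtain ⟨s, A, B, hs, hAB, hA, hB⟩ := main p hp
        have e1 := hA _ hdy (by linarith)
        have e2 := hB _ hdz (by linarith)
        rw [hya] at e1; rw [hza] at e2
        unfold CN
        rw [hB _ (by linarith) (by linarith), e1, e2, hyz]
        nlinarith [mul_nonneg hs hdy]
  · intro y hy z hz
    obtain ⟨a, σ, α, hσ, h0, h1, hya, hza⟩ := pair y hy z hz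
    rcases le_total α Real.pi with hα | hα
    · obtain ⟨Y, Z, hY, hZ, hYn, hZn, hYy, hZz, hY0⟩ := half hy hz h0 hα hya hza
      have him : 0 ≤ (2 * Z - Y).im := by simp [hY0]; exact hZ
      have hn : ‖2 * Z - Y‖ < ε := by
        have := norm_sub_le (2 * Z) Y
        rw [norm_mul] at this; norm_num at this; linarith
      refine ⟨P (a + σ * (2 * Z - Y).arg) ‖2 * Z - Y‖, ?_, ?_⟩
      · rw [← hYy, ← hZz, h.dist_half hσ hZ him (by linarith) hn,
          h.dist_half hσ hY hZ (by linarith) (by linarith)]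
        congr 1; ring
      · rw [← hYy, ← hZz, h.dist_half hσ hY him (by linarith) hn,
          h.dist_half hσ hY hZ (by linarith) (by linarith),
          show Y - (2 * Z - Y) = 2 * (Y - Z) by ring, norm_mul]
        norm_num
    · rw [← angle (a := a) hσ h0 h1] at hα
      set b := a + σ * α
      rw [mem_ball] at hy hz
      have hyz : dist y z = dist y v + dist z v := by
        conv_lhs => rw [← hya, ← hza]
        exact h.dist_through dist_nonneg (by linarith) dist_nonneg (by linarith) hα
      have hdy : 0 ≤ dist y v := dist_nonneg
      have hdz : 0 ≤ dist z v := dist_nonneg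
      refine ⟨P b (dist y v + 2 * dist z v), ?_, ?_⟩
      · have := h.dist_radial (a := b) (t := dist y v + 2 * dist z v) hdz (by linarith)
          (by linarith) (by linarith)
        rw [hza] at this
        rw [this, hyz, abs_of_nonpos (by linarith)]; ring
      · have := h.dist_through (t := dist y v + 2 * dist z v) hdy (by linarith)
          (by linarith) (by linarith) hα
        rw [hya] at this
        rw [this, hyz]; ring

end ConeChart

lemma ESCS.exists_LC {S : Type} [MetricSpace S] (hS : ESCS S) : ∃ r, LC S r := by
  have := hS.compact
  refine LC.of_at fun x => ?_
  by_cases hx : x ∈ hS.conical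
  · obtain ⟨ε, P, h⟩ := hS.exists_chart hx
    exact ⟨_, h.lcAt⟩
  · obtain ⟨ε, hε, f, h1, h2⟩ := hS.euclidean_at x hx
    exact ⟨_, lcAt_flat hε h1 h2⟩

end

/-! ### Local geodesics in a locally `CAT(0)` space -/

section

/-- A continuous function that is midpoint convex near every interior point is convex: its leftmost
maximum over any chord would otherwise be interior. -/
lemma convexOn_of_local {f : ℝ → ℝ} {a b : ℝ} (hc : ContinuousOn f (Icc a b))
    {δ : ℝ} (hδ : 0 < δ) (H : ∀ t h, 0 < h → h < δ → a ≤ t - h → t + h ≤ b →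
      2 * f t ≤ f (t - h) + f (t + h)) : ConvexOn ℝ (Icc a b) f := by
  -- a maximum principle on subintervals
  have maxp : ∀ x y k l : ℝ, a ≤ x → x ≤ y → y ≤ b → f x ≤ k * x + l → f y ≤ k * y + l →
      ∀ t ∈ Icc x y, f t ≤ k * t + l := by
    intro x y k l hax hxy hyb hx hy t ht
    set F : ℝ → ℝ := fun t => f t - (k * t + l) with hF
    have hFc : ContinuousOn F (Icc x y) :=
      (hc.mono (Icc_subset_Icc hax hyb)).sub (by fun_prop)
    obtain ⟨m, hm, hmax⟩ := isCompact_Icc.exists_isMaxOn ⟨x, left_mem_Icc.2 hxy⟩ hFc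
    have hcl : IsClosed (Icc x y ∩ F ⁻¹' {F m}) :=
      hFc.preimage_isClosed_of_isClosed isClosed_Icc isClosed_singleton
    have hcpt : IsCompact (Icc x y ∩ F ⁻¹' {F m}) :=
      isCompact_Icc.of_isClosed_subset hcl inter_subset_left
    obtain ⟨u, hu, humin⟩ := hcpt.exists_isLeast ⟨m, hm, rfl⟩
    have huF : F u = F m := hu.2
    suffices F u ≤ 0 by
      have h1 : F t ≤ F m := hmax ht
      have : F t ≤ 0 := by linarith
      simp only [hF] at this; linarith
    rcases hu.1.1.eq_or_lt with h1 | h1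
    · rw [← h1]; simp only [hF]; linarith
    rcases hu.1.2.eq_or_lt with h2 | h2
    · rw [h2]; simp only [hF]; linarith
    exfalso
    obtain ⟨h, h0, hh⟩ : ∃ h, 0 < h ∧ h < min δ (min (u - x) (y - u)) :=
      exists_between (lt_min hδ (lt_min (by linarith) (by linarith)))
    have hh1 := hh.trans_le (min_le_left _ _)
    have hh2 := (hh.trans_le (min_le_right _ _)).trans_le (min_le_left _ _)
    have hh3 := (hh.trans_le (min_le_right _ _)).trans_le (min_le_right _ _)
    have h3 := H u h h0 hh1 (by linarith) (by linarith)
    have h4 : F (u + h) ≤ F m := hmax ⟨by linarith, by linarith⟩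
    have h5 : F (u - h) ≤ F m := hmax ⟨by linarith, by linarith⟩
    have h6 : F (u - h) ≠ F m := by
      intro h7
      have := humin ⟨⟨by linarith, by linarith⟩, h7⟩
      linarith
    have h7 : F (u - h) < F m := lt_of_le_of_ne h5 h6
    simp only [hF] at h4 h7 huF
    linarith
  refine LinearOrder.convexOn_of_lt (convex_Icc a b) ?_
  intro x hx y hy hxy p q hp hq hpq
  have hyx : y - x ≠ 0 := by linarith
  have := maxp x y ((f y - f x) / (y - x)) (f x - (f y - f x) / (y - x) * x) hx.1 hxy.le hy.2
    (by linarith) (by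
      have : (f y - f x) / (y - x) * (y - x) = f y - f x := div_mul_cancel₀ _ hyx
      linarith) (p • x + q • y)
      (by
        simp only [smul_eq_mul]
        have hp' : p = 1 - q := by linarith
        subst hp'
        constructor <;> nlinarith)
  refine this.trans (le_of_eq ?_)
  simp only [smul_eq_mul]
  have hp' : p = 1 - q := by linarith
  subst hp'
  field_simp
  ring

lemma continuousOn_dist {S : Type} [MetricSpace S] {f g : ℝ → S} {s : Set ℝ}
    (hf : ContinuousOn f s) (hg : ContinuousOn g s) : ContinuousOn (fun t => dist (f t) (g t)) s :=
  fun x hx => (hf x hx).dist (hg x hx)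

/-- `g` is a local geodesic of speed `L` on `[a, b]`, distances being realised at scale `r / 16`. -/
def IsG {S : Type} [MetricSpace S] (r : ℝ) (g : ℝ → S) (a b L : ℝ) : Prop :=
  0 ≤ L ∧ ∀ s ∈ Icc a b, ∀ t ∈ Icc a b, L * |s - t| < r / 16 → dist (g s) (g t) = L * |s - t|

/-- A Lipschitz bound at small scale on an interval holds at all scales. -/
lemma lipschitz_of_local {S : Type} [MetricSpace S] {g : ℝ → S} {a b K η : ℝ} (hη : 0 < η)
    (h : ∀ s ∈ Icc a b, ∀ t ∈ Icc a b, |s - t| < η → dist (g s) (g t) ≤ K * |s - t|) :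
    ∀ s ∈ Icc a b, ∀ t ∈ Icc a b, dist (g s) (g t) ≤ K * |s - t| := by
  have key : ∀ n : ℕ, ∀ s ∈ Icc a b, ∀ t ∈ Icc a b, s ≤ t → t - s ≤ n * (η / 2) →
      dist (g s) (g t) ≤ K * (t - s) := by
    intro n
    induction n with
    | zero =>
      intro s hs t ht hst h1
      have : s = t := by simp at h1; linarith
      subst this; simp
    | succ n ih =>
      intro s hs t ht hst h1
      rcases le_total (t - s) (η / 2) with h2 | h2
      · have := h s hs t ht (by rw [abs_sub_comm, abs_of_nonneg (by linarith)]; linarith)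
        rwa [abs_sub_comm, abs_of_nonneg (by linarith)] at this
      · have hu : t - η / 2 ∈ Icc a b := ⟨by linarith [hs.1], by linarith [ht.2]⟩
        have e1 := ih s hs (t - η / 2) hu (by linarith) (by push_cast at h1; linarith)
        have e2 := h (t - η / 2) hu t ht (by rw [abs_lt]; constructor <;> linarith)
        rw [abs_sub_comm, abs_of_nonneg (by linarith)] at e2
        have := dist_triangle (g s) (g (t - η / 2)) (g t)
        linarith
  intro s hs t ht
  obtain ⟨n, hn⟩ := exists_nat_gt (|s - t| / (η / 2))
  rw [div_lt_iff₀ (by linarith)] at hn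
  rcases le_total s t with hst | hst
  · rw [abs_sub_comm, abs_of_nonneg (by linarith)] at hn ⊢
    exact key n s hs t ht hst hn.le
  · rw [abs_of_nonneg (by linarith)] at hn ⊢
    rw [dist_comm]
    exact key n t ht s hs hst hn.le

variable {S : Type} [MetricSpace S] {r : ℝ}

lemma exists_scale {r : ℝ} (hr : 0 < r) (L : ℝ) : ∃ η > 0, ∀ x, |x| < η → L * |x| < r := by
  refine ⟨r / (|L| + 1), by positivity, fun x hx => ?_⟩
  rw [lt_div_iff₀ (by positivity)] at hx
  nlinarith [abs_nonneg x, le_abs_self L, abs_nonneg L]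

lemma IsG.lipschitz (hr : 0 < r) {g : ℝ → S} {a b L : ℝ} (h : IsG r g a b L) :
    ∀ s ∈ Icc a b, ∀ t ∈ Icc a b, dist (g s) (g t) ≤ L * |s - t| := by
  obtain ⟨η, hη, H⟩ := exists_scale (show 0 < r / 16 by linarith) L
  exact lipschitz_of_local hη fun s hs t ht hst => (h.2 s hs t ht (H _ hst)).le

lemma IsG.continuousOn (hr : 0 < r) {g : ℝ → S} {a b L : ℝ} (h : IsG r g a b L) :
    ContinuousOn g (Icc a b) := by
  have : LipschitzOnWith (Real.toNNReal L) g (Icc a b) := by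
    refine LipschitzOnWith.of_dist_le_mul fun s hs t ht => ?_
    rw [Real.coe_toNNReal _ h.1, Real.dist_eq]
    exact h.lipschitz hr s hs t ht
  exact this.continuousOn

lemma IsG.mono {g : ℝ → S} {a b a' b' L : ℝ} (h : IsG r g a b L) (ha : a ≤ a') (hb : b' ≤ b) :
    IsG r g a' b' L :=
  ⟨h.1, fun s hs t ht => h.2 s ⟨ha.trans hs.1, hs.2.trans hb⟩ t ⟨ha.trans ht.1, ht.2.trans hb⟩⟩

lemma IsG.affine {g : ℝ → S} {a b L : ℝ} (h : IsG r g a b L) {a' b' : ℝ} (p q : ℝ)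
    (hm : ∀ t ∈ Icc a' b', p * t + q ∈ Icc a b) :
    IsG r (fun t => g (p * t + q)) a' b' (L * |p|) := by
  refine ⟨mul_nonneg h.1 (abs_nonneg _), fun s hs t ht hst => ?_⟩
  have e : L * |p| * |s - t| = L * |p * s + q - (p * t + q)| := by
    rw [show p * s + q - (p * t + q) = p * (s - t) by ring, abs_mul]; ring
  rw [e] at hst ⊢
  exact h.2 _ (hm s hs) _ (hm t ht) hst

lemma IsG.congr {g g' : ℝ → S} {a b L : ℝ} (h : IsG r g a b L) (e : ∀ t ∈ Icc a b, g' t = g t) :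
    IsG r g' a b L :=
  ⟨h.1, fun s hs t ht => by rw [e s hs, e t ht]; exact h.2 s hs t ht⟩

lemma IsG.const (hr : 0 < r) (x : S) (a b : ℝ) : IsG r (fun _ => x) a b 0 :=
  ⟨le_rfl, fun s _ t _ _ => by simp⟩

/-- Local geodesics realise distances at the uniform scale `r / 16`: the function
`d(g s, g u)² - L² (u - s)²` is convex in `u` and vanishes near `s`. -/
lemma LC.isG_of_local (h : LC S r) {g : ℝ → S} {a b L η : ℝ} (hL : 0 ≤ L) (hη : 0 < η)
    (hg : ∀ s ∈ Icc a b, ∀ t ∈ Icc a b, |s - t| < η → dist (g s) (g t) = L * |s - t|) :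
    IsG r g a b L := by
  have hr := h.pos
  have lip := lipschitz_of_local hη fun s hs t ht hst => (hg s hs t ht hst).le
  have key : ∀ s ∈ Icc a b, ∀ t ∈ Icc a b, s < t → L * (t - s) < r / 16 →
      dist (g s) (g t) = L * (t - s) := by
    intro s hs t ht hst hLt
    have up : ∀ u ∈ Icc s t, dist (g s) (g u) ≤ L * (u - s) := by
      intro u hu
      have := lip s hs u ⟨hs.1.trans hu.1, hu.2.trans ht.2⟩
      rwa [abs_sub_comm, abs_of_nonneg (by linarith [hu.1])] at this
    have sub : Icc s t ⊆ Icc a b := Icc_subset_Icc hs.1 ht.2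
    have gc : ContinuousOn g (Icc s t) := by
      have : LipschitzOnWith (Real.toNNReal L) g (Icc s t) := by
        refine LipschitzOnWith.of_dist_le_mul fun s hs t ht => ?_
        rw [Real.coe_toNNReal _ hL, Real.dist_eq]
        exact lip s (sub hs) t (sub ht)
      exact this.continuousOn
    set F : ℝ → ℝ := fun u => dist (g s) (g u) ^ 2 - L ^ 2 * (u - s) ^ 2 with hF
    have hconv : ConvexOn ℝ (Icc s t) F := by
      refine convexOn_of_local (δ := η / 2) ?_ (by linarith) ?_
      · exact ((continuousOn_dist continuousOn_const gc).pow 2).sub (by fun_prop)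
      · intro u e he he' hau hub
        have m1 : u - e ∈ Icc s t := ⟨hau, by linarith⟩
        have m2 : u + e ∈ Icc s t := ⟨by linarith, hub⟩
        have m3 : u ∈ Icc s t := ⟨by linarith, by linarith⟩
        have d1 : dist (g (u - e)) (g (u + e)) = 2 * (L * e) := by
          have e1 : |u - e - (u + e)| = 2 * e := by
            rw [show u - e - (u + e) = -(2 * e) by ring, abs_neg, abs_of_pos (by linarith)]
          rw [hg _ (sub m1) _ (sub m2) (by rw [e1]; linarith), e1]; ring
        have d2 : dist (g (u - e)) (g u) = L * e := by
          have e1 : |u - e - u| = e := by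
            rw [show u - e - u = -e by ring, abs_neg, abs_of_pos he]
          rw [hg _ (sub m1) _ (sub m3) (by rw [e1]; linarith), e1]
        have d3 : dist (g u) (g (u + e)) = L * e := by
          have e1 : |u - (u + e)| = e := by
            rw [show u - (u + e) = -e by ring, abs_neg, abs_of_pos he]
          rw [hg _ (sub m3) _ (sub m2) (by rw [e1]; linarith), e1]
        have hLe : 2 * (L * e) ≤ L * (t - s) := by nlinarith
        have d4 : dist (g s) (g (u - e)) < r := by
          have := up _ m1
          have : L * (u - e - s) ≤ L * (t - s) := by nlinarith
          linarith
        have := h.cn (g s) (g (u - e)) (g (u + e)) (g u) (by rw [d1]; linarith) d4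
          (by rw [d1, d2]; ring) (by rw [d1, d3]; ring)
        unfold CN at this
        rw [d1] at this
        simp only [hF]
        nlinarith
    rcases lt_or_ge (t - s) η with h1 | h1
    · have := hg s hs t ht (by rwa [abs_sub_comm, abs_of_pos (by linarith)])
      rwa [abs_sub_comm, abs_of_pos (by linarith)] at this
    · have hF0 : F s = 0 := by simp [hF]
      have hm : s + η / 2 ∈ Icc s t := ⟨by linarith, by linarith⟩
      have hF1 : F (s + η / 2) = 0 := by
        have e1 : |s - (s + η / 2)| = η / 2 := by
          rw [show s - (s + η / 2) = -(η / 2) by ring, abs_neg, abs_of_pos (by linarith)]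
        have := hg s hs _ (sub hm) (by rw [e1]; linarith)
        simp only [hF]
        rw [this, e1]; ring
      have hts : 0 < t - s := by linarith
      have := hconv.2 (left_mem_Icc.2 hst.le) (right_mem_Icc.2 hst.le)
        (show 0 ≤ 1 - η / 2 / (t - s) by rw [sub_nonneg, div_le_one hts]; linarith)
        (show 0 ≤ η / 2 / (t - s) by positivity) (by ring)
      have e2 : (1 - η / 2 / (t - s)) • s + (η / 2 / (t - s)) • t = s + η / 2 := by
        simp only [smul_eq_mul]; field_simp; ring
      rw [e2, hF0, hF1] at this
      simp only [smul_eq_mul, mul_zero, zero_add] at this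
      have hpos : 0 < η / 2 / (t - s) := by positivity
      have hFt : 0 ≤ F t := nonneg_of_mul_nonneg_right (by linarith) hpos
      refine le_antisymm (up t (right_mem_Icc.2 hst.le)) ?_
      simp only [hF] at hFt
      refine (pow_le_pow_iff_left₀ (mul_nonneg hL hts.le) dist_nonneg two_ne_zero).1 ?_
      rw [mul_pow]; linarith
  refine ⟨hL, fun s hs t ht hst => ?_⟩
  rcases lt_trichotomy s t with h1 | h1 | h1
  · rw [abs_sub_comm, abs_of_pos (by linarith)] at hst ⊢
    exact key s hs t ht h1 hst
  · subst h1; simp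
  · rw [abs_of_pos (by linarith)] at hst ⊢
    rw [dist_comm]
    exact key t ht s hs h1 hst

/-- Midpoints of two sides of a small triangle are at most half the third side apart. -/
lemma LC.mid_triangle (h : LC S r) {x y y' m m' : S} (hxy : dist x y < r / 2)
    (hxy' : dist x y' < r / 2) (h1 : dist x m = dist x y / 2)
    (h2 : dist m y = dist x y / 2) (h3 : dist x m' = dist x y' / 2)
    (h4 : dist m' y' = dist x y' / 2) : dist m m' ≤ dist y y' / 2 := by
  have hr := h.pos
  have a1 := h.cn m x y' m' (by linarith) (by rw [dist_comm]; linarith) h3 h4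
  have a2 := h.cn y' x y m (by linarith) (by rw [dist_comm]; linarith) h1 h2
  unfold CN at a1 a2
  rw [dist_comm m x, h1, dist_comm m y'] at a1
  rw [dist_comm y' x, dist_comm y' y] at a2
  refine (pow_le_pow_iff_left₀ dist_nonneg (by positivity) two_ne_zero).1 ?_
  nlinarith

/-- Nonpositive curvature in the sense of Busemann for small quadrilaterals, obtained by cutting along
a diagonal. -/
lemma LC.busemann (h : LC S r) {x y x' y' m m' : S} (hxy : dist x y < r / 4)
    (hxy' : dist x' y' < r / 4) (hx : dist x x' ≤ r / 4) (h1 : dist x m = dist x y / 2)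
    (h2 : dist m y = dist x y / 2) (h3 : dist x' m' = dist x' y' / 2)
    (h4 : dist m' y' = dist x' y' / 2) :
    2 * dist m m' ≤ dist x x' + dist y y' := by
  have hr := h.pos
  have hd : dist x' y < r / 2 := by
    have := dist_triangle x' x y; rw [dist_comm x' x] at this; linarith
  obtain ⟨c, c0, c1, hc⟩ := h.geo x' y (by linarith)
  have e1 : dist x' (c (1 / 2)) = dist x' y / 2 := by
    have := hc 0 (by norm_num) (1/2) (by norm_num)
    rw [c0] at this; rw [this]; norm_num; ring
  have e2 : dist (c (1 / 2)) y = dist x' y / 2 := by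
    have := hc (1/2) (by norm_num) 1 (by norm_num)
    rw [c1] at this; rw [this]; norm_num; ring
  have a1 := h.mid_triangle (x := y) (y := x) (y' := x') (m := m) (m' := c (1/2))
    (by rw [dist_comm]; linarith) (by rw [dist_comm]; linarith)
    (by rw [dist_comm y m, h2, dist_comm y x]) (by rw [dist_comm m x, h1, dist_comm y x])
    (by rw [dist_comm y, e2, dist_comm y]) (by rw [dist_comm _ x', e1, dist_comm y])
  have a2 := h.mid_triangle (x := x') (y := y) (y' := y') (m := c (1/2)) (m' := m')
    (by linarith) (by linarith) e1 e2 h3 h4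
  have := dist_triangle m (c (1/2)) m'
  linarith

/-- The distance between two local geodesics that stay close to each other is convex. -/
lemma LC.convex (h : LC S r) {c c' : ℝ → S} {a b L L' : ℝ} (hc : IsG r c a b L)
    (hc' : IsG r c' a b L') (hd : ∀ s ∈ Icc a b, dist (c s) (c' s) ≤ r / 4) :
    ConvexOn ℝ (Icc a b) fun s => dist (c s) (c' s) := by
  have hr := h.pos
  obtain ⟨η, hη, H⟩ := exists_scale (show 0 < r / 16 by linarith) L
  obtain ⟨η', hη', H'⟩ := exists_scale (show 0 < r / 16 by linarith) L'
  have mid : ∀ (c : ℝ → S) (L η : ℝ), IsG r c a b L → (∀ x, |x| < η → L * |x| < r / 16) →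
      ∀ t e, 0 < e → e < η / 2 → a ≤ t - e → t + e ≤ b →
      dist (c (t - e)) (c (t + e)) < r / 4 ∧
      dist (c (t - e)) (c t) = dist (c (t - e)) (c (t + e)) / 2 ∧
      dist (c t) (c (t + e)) = dist (c (t - e)) (c (t + e)) / 2 := by
    intro c L η hc H t e he he' hta htb
    have e1 : |t - e - (t + e)| = 2 * e := by
      rw [show t - e - (t + e) = -(2 * e) by ring, abs_neg, abs_of_pos (by linarith)]
    have e2 : |t - e - t| = e := by rw [show t - e - t = -e by ring, abs_neg, abs_of_pos he]
    have e3 : |t - (t + e)| = e := by rw [show t - (t + e) = -e by ring, abs_neg, abs_of_pos he]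
    have m1 : t - e ∈ Icc a b := ⟨hta, by linarith⟩
    have m2 : t + e ∈ Icc a b := ⟨by linarith, htb⟩
    have m3 : t ∈ Icc a b := ⟨by linarith, by linarith⟩
    have b1 := H (t - e - (t + e)) (by rw [e1]; linarith)
    have d1 := hc.2 _ m1 _ m2 b1
    have d2 := hc.2 _ m1 _ m3 (H _ (by rw [e2]; linarith))
    have d3 := hc.2 _ m3 _ m2 (H _ (by rw [e3]; linarith))
    rw [e1] at b1
    rw [e1] at d1; rw [e2] at d2; rw [e3] at d3
    refine ⟨by rw [d1]; linarith, by rw [d1, d2]; ring, by rw [d1, d3]; ring⟩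
  refine convexOn_of_local (continuousOn_dist (hc.continuousOn hr) (hc'.continuousOn hr))
    (δ := min η η' / 2) (by positivity) ?_
  intro t e he he' hta htb
  obtain ⟨p1, p2, p3⟩ := mid c L η hc H t e he (by linarith [min_le_left η η']) hta htb
  obtain ⟨q1, q2, q3⟩ := mid c' L' η' hc' H' t e he (by linarith [min_le_right η η']) hta htb
  exact h.busemann p1 q1 (hd _ ⟨hta, by linarith⟩) p2 p3 q2 q3

lemma LC.convex_le (h : LC S r) {c c' : ℝ → S} {L L' : ℝ} (hc : IsG r c 0 1 L)
    (hc' : IsG r c' 0 1 L') (hd : ∀ s ∈ Icc (0:ℝ) 1, dist (c s) (c' s) ≤ r / 4) :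
    ∀ s ∈ Icc (0:ℝ) 1,
      dist (c s) (c' s) ≤ (1 - s) * dist (c 0) (c' 0) + s * dist (c 1) (c' 1) := by
  intro s hs
  have := (h.convex hc hc' hd).2 (left_mem_Icc.2 zero_le_one) (right_mem_Icc.2 zero_le_one)
    (show 0 ≤ 1 - s by linarith [hs.2]) hs.1 (by ring)
  simpa using this

/-- Close local geodesics with the same endpoints coincide. -/
lemma LC.eq_of_ends (h : LC S r) {c c' : ℝ → S} {a b L L' : ℝ} (hc : IsG r c a b L)
    (hc' : IsG r c' a b L') (hd : ∀ s ∈ Icc a b, dist (c s) (c' s) ≤ r / 4)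
    (h0 : c a = c' a) (h1 : c b = c' b) : ∀ s ∈ Icc a b, c s = c' s := by
  intro s hs
  have hab : a ≤ b := hs.1.trans hs.2
  have := (h.convex hc hc' hd).le_max_of_mem_Icc (left_mem_Icc.2 hab) (right_mem_Icc.2 hab) hs
  simp only [h0, h1, dist_self, max_self] at this
  exact dist_le_zero.1 this

lemma IsG.speed_unique (hr : 0 < r) {c c' : ℝ → S} {a b L L' : ℝ} (hc : IsG r c a b L)
    (hc' : IsG r c' a b L') (hab : a < b) (he : ∀ s ∈ Icc a b, c s = c' s) : L = L' := by
  obtain ⟨η, hη, H⟩ := exists_scale (show 0 < r / 16 by linarith) L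
  obtain ⟨η', hη', H'⟩ := exists_scale (show 0 < r / 16 by linarith) L'
  obtain ⟨e, he0, he1⟩ : ∃ e, 0 < e ∧ e < min (min η η') (b - a) :=
    exists_between (lt_min (lt_min hη hη') (by linarith))
  have g1 := (he1.trans_le (min_le_left _ _)).trans_le (min_le_left _ _)
  have g2 := (he1.trans_le (min_le_left _ _)).trans_le (min_le_right _ _)
  have g3 := he1.trans_le (min_le_right _ _)
  have m1 : a ∈ Icc a b := ⟨le_rfl, hab.le⟩
  have m2 : a + e ∈ Icc a b := ⟨by linarith, by linarith⟩
  have e1 : |a - (a + e)| = e := by rw [show a - (a + e) = -e by ring, abs_neg, abs_of_pos he0]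
  have d1 := hc.2 _ m1 _ m2 (H _ (by rw [e1]; exact g1))
  have d2 := hc'.2 _ m1 _ m2 (H' _ (by rw [e1]; exact g2))
  rw [he _ m1, he _ m2, d2, e1] at d1
  exact (mul_right_cancel₀ he0.ne' d1).symm

end

/-! ### Moving the endpoints of a local geodesic -/

section

variable {S : Type} [MetricSpace S] {r : ℝ}

/-- Existence of a local geodesic with prescribed endpoints near a given one whose length is at most
`A`. -/
def NearExists (S : Type) [MetricSpace S] (r A : ℝ) : Prop :=
  ∀ (c : ℝ → S) (L : ℝ) (x y : S), IsG r c 0 1 L → L ≤ A → dist (c 0) x ≤ r / 32 →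
    dist (c 1) y ≤ r / 32 → ∃ c' L', IsG r c' 0 1 L' ∧ c' 0 = x ∧ c' 1 = y ∧
      ∀ s ∈ Icc (0:ℝ) 1, dist (c s) (c' s) ≤ r / 32

lemma LC.near_base (h : LC S r) : NearExists S r (r / 32) := by
  intro c L x y hc hL hx hy
  have hr := h.pos
  have lip := hc.lipschitz hr
  have h01 : dist (c 0) (c 1) ≤ L := by simpa using lip 0 (by simp) 1 (by simp)
  have hxy : dist x y ≤ 3 * (r / 32) := by
    have := dist_triangle4 x (c 0) (c 1) y
    rw [dist_comm x (c 0)] at this; linarith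
  obtain ⟨c', c0, c1, hc'⟩ := h.geo x y (by linarith)
  have hG : IsG r c' 0 1 (dist x y) :=
    ⟨dist_nonneg, fun s hs t ht _ => by rw [hc' s hs t ht, mul_comm]⟩
  have crude : ∀ s ∈ Icc (0:ℝ) 1, dist (c s) (c' s) ≤ r / 4 := by
    intro s hs
    have a1 := lip s hs 0 (by simp)
    have a2 := hc' 0 (by simp) s hs
    rw [c0] at a2
    have a3 := dist_triangle4 (c s) (c 0) x (c' s)
    have a4 : L * |s - 0| ≤ L := by
      rw [sub_zero, abs_of_nonneg hs.1]; nlinarith [hs.2, hc.1]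
    have a5 : |0 - s| * dist x y ≤ dist x y := by
      rw [zero_sub, abs_neg, abs_of_nonneg hs.1]; nlinarith [hs.2, dist_nonneg (x := x) (y := y)]
    linarith
  refine ⟨c', _, hG, c0, c1, fun s hs => ?_⟩
  have := h.convex_le hc hG crude s hs
  rw [c0, c1] at this
  nlinarith [hs.1, hs.2]

/-- The gluing step: existence up to length `A` gives existence up to length `3A/2`. The two inner
endpoints of overlapping pieces of two thirds of the length are the fixed point of a contraction. -/
lemma LC.near_step [CompactSpace S] (h : LC S r) {A : ℝ} (hA : NearExists S r A) :
    NearExists S r (3 / 2 * A) := by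
  intro c L x y hc hL hx hy
  have hr := h.pos
  have hcA : IsG r (fun t => c (2 / 3 * t + 0)) 0 1 (L * |2 / 3|) :=
    hc.affine _ _ fun t ht => ⟨by linarith [ht.1], by linarith [ht.2]⟩
  have hcB : IsG r (fun t => c (2 / 3 * t + 1 / 3)) 0 1 (L * |2 / 3|) :=
    hc.affine _ _ fun t ht => ⟨by linarith [ht.1], by linarith [ht.2]⟩
  have hL' : L * |2 / 3| ≤ A := by rw [abs_of_pos (by norm_num)]; linarith
  have exA : ∀ q, ∃ (f : ℝ → S) (l : ℝ), dist (c (2 / 3)) q ≤ r / 32 → IsG r f 0 1 l ∧ f 0 = x ∧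
      f 1 = q ∧ ∀ s ∈ Icc (0:ℝ) 1, dist (c (2 / 3 * s)) (f s) ≤ r / 32 := by
    intro q
    by_cases hq : dist (c (2 / 3)) q ≤ r / 32
    · obtain ⟨f, l, h1⟩ := hA _ _ x q hcA hL' (by simpa using hx) (by simpa using hq)
      exact ⟨f, l, fun _ => by simpa using h1⟩
    · exact ⟨c, 0, fun h' => absurd h' hq⟩
  have exB : ∀ p, ∃ (f : ℝ → S) (l : ℝ), dist (c (1 / 3)) p ≤ r / 32 → IsG r f 0 1 l ∧ f 0 = p ∧
      f 1 = y ∧ ∀ s ∈ Icc (0:ℝ) 1, dist (c (2 / 3 * s + 1 / 3)) (f s) ≤ r / 32 := by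
    intro p
    by_cases hp : dist (c (1 / 3)) p ≤ r / 32
    · obtain ⟨f, l, h1⟩ := hA _ _ p y hcB hL' (by simpa using hp) (by norm_num; exact hy)
      exact ⟨f, l, fun _ => h1⟩
    · exact ⟨c, 0, fun h' => absurd h' hp⟩
  choose FA lA hFA using exA
  choose FB lB hFB using exB
  set K : Set (S × S) := {z | dist (c (1 / 3)) z.1 ≤ r / 32 ∧ dist (c (2 / 3)) z.2 ≤ r / 32}
  have hKc : IsClosed K := by
    apply IsClosed.inter
    · exact isClosed_le (continuous_const.dist continuous_fst) continuous_const
    · exact isClosed_le (continuous_const.dist continuous_snd) continuous_const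
  have half : (1 / 2 : ℝ) ∈ Icc (0:ℝ) 1 := by norm_num
  set Φ : S × S → S × S := fun z => (FA z.2 (1 / 2), FB z.1 (1 / 2))
  have hmaps : MapsTo Φ K K := by
    intro z hz
    have a1 := (hFA z.2 hz.2).2.2.2 _ half
    have a2 := (hFB z.1 hz.1).2.2.2 _ half
    norm_num at a1 a2
    constructor
    · simpa [Φ] using a1
    · simpa [Φ] using a2
  have hcontr : ContractingWith (1 / 2) (hmaps.restrict Φ K K) := by
    refine ⟨by norm_num, LipschitzWith.of_dist_le_mul ?_⟩
    rintro ⟨z, hz⟩ ⟨w, hw⟩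
    simp only [Subtype.dist_eq, MapsTo.val_restrict_apply, Φ]
    obtain ⟨a1, a2, a3, a4⟩ := hFA z.2 hz.2
    obtain ⟨b1, b2, b3, b4⟩ := hFA w.2 hw.2
    obtain ⟨a1', a2', a3', a4'⟩ := hFB z.1 hz.1
    obtain ⟨b1', b2', b3', b4'⟩ := hFB w.1 hw.1
    have t1 := h.convex_le a1 b1 (fun s hs => by
      have := dist_triangle_left (FA z.2 s) (FA w.2 s) (c (2 / 3 * s))
      linarith [a4 s hs, b4 s hs]) _ half
    have t2 := h.convex_le a1' b1' (fun s hs => by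
      have := dist_triangle_left (FB z.1 s) (FB w.1 s) (c (2 / 3 * s + 1 / 3))
      linarith [a4' s hs, b4' s hs]) _ half
    rw [a2, b2, a3, b3, dist_self] at t1
    rw [a2', b2', a3', b3', dist_self] at t2
    rw [Prod.dist_eq, Prod.dist_eq]
    push_cast
    refine max_le ?_ ?_
    · nlinarith [le_max_right (dist z.1 w.1) (dist z.2 w.2)]
    · nlinarith [le_max_left (dist z.1 w.1) (dist z.2 w.2)]
  obtain ⟨⟨p, q⟩, hpq, hfix, -⟩ := hcontr.exists_fixedPoint' hKc.isComplete hmaps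
    (x := (c (1 / 3), c (2 / 3))) ⟨by simp; positivity, by simp; positivity⟩ (edist_ne_top _ _)
  have hfix' : Φ (p, q) = (p, q) := hfix
  have hp : FA q (1 / 2) = p := congrArg Prod.fst hfix'
  have hq : FB p (1 / 2) = q := congrArg Prod.snd hfix'
  obtain ⟨a1, a2, a3, a4⟩ := hFA q hpq.2
  obtain ⟨b1, b2, b3, b4⟩ := hFB p hpq.1
  -- on the overlap both pieces join `p` to `q`
  have hB' : IsG r (fun t => FB p (1 * t + -(1 / 2))) (1 / 2) 1 (lB p * |1|) :=
    b1.affine _ _ fun t ht => ⟨by linarith [ht.1], by linarith [ht.2]⟩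
  have agree : ∀ t ∈ Icc (1 / 2 : ℝ) 1, FA q t = FB p (1 * t + -(1 / 2)) := by
    refine h.eq_of_ends (a1.mono (by norm_num) le_rfl) hB' ?_ ?_ ?_
    · intro s hs
      have e1 := a4 s ⟨by linarith [hs.1], hs.2⟩
      have e2 := b4 (1 * s + -(1 / 2)) ⟨by linarith [hs.1], by linarith [hs.2]⟩
      rw [show 2 / 3 * (1 * s + -(1 / 2)) + 1 / 3 = 2 / 3 * s by ring] at e2
      have := dist_triangle_left (FA q s) (FB p (1 * s + -(1 / 2))) (c (2 / 3 * s))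
      linarith
    · rw [hp]; norm_num; exact b2.symm
    · rw [a3]; norm_num; norm_num at hq; exact hq.symm
  have hl : lA q = lB p := by
    have := IsG.speed_unique hr (a1.mono (by norm_num) le_rfl) hB' (by norm_num) agree
    simpa using this
  set c' : ℝ → S := fun t => if t ≤ 1 / 2 then FA q (3 / 2 * t) else FB p (3 / 2 * t - 1 / 2)
  have e1 : ∀ t ≤ (2 / 3 : ℝ), c' t = FA q (3 / 2 * t) := by
    intro t ht
    simp only [c']
    split_ifs with h1
    · rfl
    · rw [agree _ ⟨by linarith, by linarith⟩]; congr 1; ring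
  have e2 : ∀ t ≥ (1 / 3 : ℝ), c' t = FB p (3 / 2 * t - 1 / 2) := by
    intro t ht
    simp only [c']
    split_ifs with h1
    · rw [agree _ ⟨by linarith, by linarith⟩]; congr 1; ring
    · rfl
  obtain ⟨η, hη, H⟩ := exists_scale (show 0 < r / 16 by linarith) (lA q * (3 / 2))
  refine ⟨c', lA q * (3 / 2), ?_, ?_, ?_, ?_⟩
  · refine h.isG_of_local (mul_nonneg a1.1 (by norm_num)) (lt_min hη (show (0:ℝ) < 1 / 3 by norm_num))
      ?_
    intro s hs t ht hst
    have hs1 := H _ (hst.trans_le (min_le_left _ _))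
    have hs2 := abs_lt.1 (hst.trans_le (min_le_right _ _))
    have conv : lA q * (3 / 2) * |s - t| = lA q * |3 / 2 * s - 3 / 2 * t| := by
      rw [← mul_sub, abs_mul, abs_of_pos (show (0:ℝ) < 3 / 2 by norm_num)]; ring
    by_cases hcase : s ≤ 2 / 3 ∧ t ≤ 2 / 3
    · rw [e1 s hcase.1, e1 t hcase.2, conv]
      rw [conv] at hs1
      exact a1.2 _ ⟨by linarith [hs.1], by linarith⟩ _ ⟨by linarith [ht.1], by linarith⟩ hs1
    · have : 1 / 3 ≤ s ∧ 1 / 3 ≤ t := by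
        rw [not_and_or, not_le, not_le] at hcase
        rcases hcase with h1 | h1 <;> constructor <;> linarith
      rw [e2 s this.1, e2 t this.2, conv]
      rw [conv] at hs1
      have := b1.2 (3 / 2 * s - 1 / 2) ⟨by linarith, by linarith [hs.2]⟩ (3 / 2 * t - 1 / 2)
        ⟨by linarith, by linarith [ht.2]⟩
      rw [← hl, show 3 / 2 * s - 1 / 2 - (3 / 2 * t - 1 / 2) = 3 / 2 * s - 3 / 2 * t by ring] at this
      exact this hs1
  · rw [e1 0 (by norm_num), mul_zero, a2]
  · rw [e2 1 (by norm_num)]; norm_num; exact b3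
  · intro s hs
    rcases le_total s (1 / 2) with h1 | h1
    · rw [e1 s (by linarith)]
      have := a4 (3 / 2 * s) ⟨by linarith [hs.1], by linarith⟩
      rwa [show 2 / 3 * (3 / 2 * s) = s by ring] at this
    · rw [e2 s (by linarith)]
      have := b4 (3 / 2 * s - 1 / 2) ⟨by linarith, by linarith [hs.2]⟩
      rwa [show 2 / 3 * (3 / 2 * s - 1 / 2) + 1 / 3 = s by ring] at this

/-- Induction on the length, by factors `3 / 2`. -/
lemma LC.near [CompactSpace S] (h : LC S r) (A : ℝ) : NearExists S r A := by
  have hr := h.pos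
  have key : ∀ n : ℕ, NearExists S r ((3 / 2) ^ n * (r / 32)) := by
    intro n
    induction n with
    | zero => simpa using h.near_base
    | succ n ih => rw [pow_succ', mul_assoc]; exact h.near_step ih
  obtain ⟨n, hn⟩ := pow_unbounded_of_one_lt (A / (r / 32)) (show (1:ℝ) < 3 / 2 by norm_num)
  rw [div_lt_iff₀ (by linarith)] at hn
  intro c L x y hc hL
  exact key n c L x y hc (hL.trans hn.le)

/-- Moving the far endpoint of a local geodesic. -/
lemma LC.move [CompactSpace S] (h : LC S r) {c : ℝ → S} {L : ℝ} (hc : IsG r c 0 1 L) {y : S}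
    (hy : dist (c 1) y ≤ r / 32) : ∃ c' L', IsG r c' 0 1 L' ∧ c' 0 = c 0 ∧ c' 1 = y ∧
      ∀ s ∈ Icc (0:ℝ) 1, dist (c s) (c' s) ≤ s * dist (c 1) y := by
  have hr := h.pos
  obtain ⟨c', L', h1, h2, h3, h4⟩ := h.near L c L (c 0) y hc le_rfl (by simp; positivity) hy
  refine ⟨c', L', h1, h2, h3, fun s hs => ?_⟩
  have := h.convex_le hc h1 (fun s hs => (h4 s hs).trans (by linarith)) s hs
  rw [h2, h3, dist_self] at this
  linarith

/-- Lengths of nearby local geodesics with the same starting point differ by at most the distance of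
the endpoints. -/
lemma IsG.length_le (hr : 0 < r) {c c' : ℝ → S} {L L' D : ℝ} (hc : IsG r c 0 1 L)
    (hc' : IsG r c' 0 1 L') (h0 : c 0 = c' 0)
    (hd : ∀ s ∈ Icc (0:ℝ) 1, dist (c s) (c' s) ≤ s * D) : L' ≤ L + D := by
  obtain ⟨η, hη, H⟩ := exists_scale (show 0 < r / 16 by linarith) L
  obtain ⟨η', hη', H'⟩ := exists_scale (show 0 < r / 16 by linarith) L'
  obtain ⟨e, he0, he1⟩ : ∃ e, 0 < e ∧ e < min (min η η') 1 :=
    exists_between (lt_min (lt_min hη hη') (by norm_num))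
  have g1 := (he1.trans_le (min_le_left _ _)).trans_le (min_le_left _ _)
  have g2 := (he1.trans_le (min_le_left _ _)).trans_le (min_le_right _ _)
  have g3 := he1.trans_le (min_le_right _ _)
  have m2 : e ∈ Icc (0:ℝ) 1 := ⟨by linarith, by linarith⟩
  have e1 : |0 - e| = e := by rw [zero_sub, abs_neg, abs_of_pos he0]
  have d1 := hc.2 0 (by simp) _ m2 (H _ (by rw [e1]; exact g1))
  have d2 := hc'.2 0 (by simp) _ m2 (H' _ (by rw [e1]; exact g2))
  rw [e1] at d1 d2
  have := dist_triangle (c' 0) (c e) (c' e)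
  rw [← h0, d1, h0, d2] at this
  have := hd e m2
  nlinarith

end

/-! ### Families of local geodesics with a moving endpoint -/

section

variable {S : Type} [MetricSpace S] {r : ℝ}

/-- `c t` (`t ≥ 0`) is a continuous family of local geodesics of length `L t` from `x` to `T t`. -/
structure IsFam (r : ℝ) (T : ℝ → S) (δ : ℝ) (x : S) (c : ℝ → ℝ → S) (L : ℝ → ℝ) : Prop where
  pos : 0 < δ
  small : ∀ t t', |t - t'| ≤ δ → dist (T t) (T t') ≤ r / 32
  isG : ∀ t, 0 ≤ t → IsG r (c t) 0 1 (L t)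
  zero : ∀ t, 0 ≤ t → c t 0 = x
  one : ∀ t, 0 ≤ t → c t 1 = T t
  close : ∀ t u, 0 ≤ t → 0 ≤ u → |t - u| ≤ δ → ∀ s ∈ Icc (0:ℝ) 1,
    dist (c t s) (c u s) ≤ s * dist (T t) (T u)

/-- The endpoint of a local geodesic can be dragged along any uniformly continuous path, by moving it
in steps of size `δ`. -/
lemma LC.family [CompactSpace S] (h : LC S r) {T : ℝ → S} {δ : ℝ} (hδ : 0 < δ)
    (hT : ∀ t t', |t - t'| ≤ δ → dist (T t) (T t') ≤ r / 32) {c₀ : ℝ → S} {L₀ : ℝ}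
    (hc₀ : IsG r c₀ 0 1 L₀) (h1 : c₀ 1 = T 0) :
    ∃ c L, IsFam r T δ (c₀ 0) c L ∧ (∀ s ∈ Icc (0:ℝ) 1, c 0 s = c₀ s) ∧ L 0 = L₀ := by
  have hr := h.pos
  -- `step G y` moves the endpoint of the geodesic `G` to `y`
  have ex : ∀ (G : ℝ → S) (y : S), ∃ G' : ℝ → S, (∃ l, IsG r G 0 1 l) → dist (G 1) y ≤ r / 32 →
      (∃ l, IsG r G' 0 1 l) ∧ G' 0 = G 0 ∧ G' 1 = y ∧
        ∀ s ∈ Icc (0:ℝ) 1, dist (G s) (G' s) ≤ s * dist (G 1) y := by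
    intro G y
    by_cases hG : (∃ l, IsG r G 0 1 l) ∧ dist (G 1) y ≤ r / 32
    · obtain ⟨⟨l, hl⟩, hy⟩ := hG
      obtain ⟨c', L', e1, e2, e3, e4⟩ := h.move hl hy
      exact ⟨c', fun _ _ => ⟨⟨L', e1⟩, e2, e3, e4⟩⟩
    · exact ⟨G, fun a b => absurd ⟨a, b⟩ hG⟩
  choose step hstep using ex
  set G : ℕ → ℝ → S := fun n => Nat.rec c₀ (fun n g => step g (T ((n + 1 : ℕ) * δ))) n with hGdef
  have hG0 : G 0 = c₀ := rfl
  have hGs : ∀ n, G (n + 1) = step (G n) (T ((n + 1 : ℕ) * δ)) := fun n => rfl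
  have hgrid : ∀ n : ℕ, dist (T (n * δ)) (T ((n + 1 : ℕ) * δ)) ≤ r / 32 := fun n => hT _ _ (by
    rw [show (n:ℝ) * δ - ((n + 1 : ℕ) : ℝ) * δ = -δ by push_cast; ring, abs_neg, abs_of_pos hδ])
  have hG : ∀ n, (∃ l, IsG r (G n) 0 1 l) ∧ G n 0 = c₀ 0 ∧ G n 1 = T (n * δ) := by
    intro n
    induction n with
    | zero => exact ⟨⟨L₀, hc₀⟩, rfl, by simpa [hG0] using h1⟩
    | succ n ih =>
      obtain ⟨i1, i2, i3⟩ := ih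
      obtain ⟨e1, e2, e3, -⟩ := hstep (G n) (T ((n + 1 : ℕ) * δ)) i1 (by rw [i3]; exact hgrid n)
      rw [hGs]
      exact ⟨e1, e2.trans i2, e3⟩
  have hGc : ∀ n, ∀ s ∈ Icc (0:ℝ) 1, dist (G n s) (G (n + 1) s) ≤ r / 32 := by
    intro n s hs
    obtain ⟨i1, i2, i3⟩ := hG n
    obtain ⟨-, -, -, e4⟩ := hstep (G n) (T ((n + 1 : ℕ) * δ)) i1 (by rw [i3]; exact hgrid n)
    have := e4 s hs
    rw [i3] at this
    rw [hGs]
    nlinarith [hgrid n, hs.1, hs.2, dist_nonneg (x := T (n * δ)) (y := T ((n + 1 : ℕ) * δ))]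
  set c : ℝ → ℝ → S := fun t => step (G ⌊t / δ⌋₊) (T t) with hcdef
  have hfl : ∀ t, 0 ≤ t → |(⌊t / δ⌋₊ : ℝ) * δ - t| ≤ δ := by
    intro t ht
    have a1 := Nat.floor_le (show 0 ≤ t / δ by positivity)
    have a2 := Nat.lt_floor_add_one (t / δ)
    rw [le_div_iff₀ hδ] at a1
    rw [div_lt_iff₀ hδ] at a2
    rw [abs_le]; constructor <;> linarith
  have hc : ∀ t, 0 ≤ t → (∃ l, IsG r (c t) 0 1 l) ∧ c t 0 = c₀ 0 ∧ c t 1 = T t ∧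
      ∀ s ∈ Icc (0:ℝ) 1, dist (G ⌊t / δ⌋₊ s) (c t s) ≤ s * dist (T (⌊t / δ⌋₊ * δ)) (T t) := by
    intro t ht
    obtain ⟨i1, i2, i3⟩ := hG ⌊t / δ⌋₊
    obtain ⟨e1, e2, e3, e4⟩ := hstep (G ⌊t / δ⌋₊) (T t) i1 (by rw [i3]; exact hT _ _ (hfl t ht))
    rw [i3] at e4
    exact ⟨e1, e2.trans i2, e3, e4⟩
  have hc' : ∀ t, 0 ≤ t → ∀ s ∈ Icc (0:ℝ) 1, dist (G ⌊t / δ⌋₊ s) (c t s) ≤ r / 32 := by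
    intro t ht s hs
    have := (hc t ht).2.2.2 s hs
    have h2 := hT _ _ (hfl t ht)
    nlinarith [hs.1, hs.2, dist_nonneg (x := T (⌊t / δ⌋₊ * δ)) (y := T t)]
  have ex2 : ∀ t, ∃ l, 0 ≤ t → IsG r (c t) 0 1 l := by
    intro t
    by_cases ht : 0 ≤ t
    · obtain ⟨l, hl⟩ := (hc t ht).1; exact ⟨l, fun _ => hl⟩
    · exact ⟨0, fun h' => absurd h' ht⟩
  choose L hL using ex2
  have main : ∀ t t', 0 ≤ t → t ≤ t' → t' - t ≤ δ → ∀ s ∈ Icc (0:ℝ) 1,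
      dist (c t s) (c t' s) ≤ s * dist (T t) (T t') := by
    intro t t' ht htt hd s hs
    have ht' := ht.trans htt
    have hfl1 : ⌊t' / δ⌋₊ = ⌊t / δ⌋₊ ∨ ⌊t' / δ⌋₊ = ⌊t / δ⌋₊ + 1 := by
      have m1 : ⌊t / δ⌋₊ ≤ ⌊t' / δ⌋₊ := Nat.floor_mono (by gcongr)
      have m2 : ⌊t' / δ⌋₊ ≤ ⌊t / δ⌋₊ + 1 := by
        rw [← Nat.floor_add_one (by positivity)]
        apply Nat.floor_mono
        rw [div_add_one hδ.ne']; gcongr; linarith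
      omega
    have tube : ∀ s ∈ Icc (0:ℝ) 1, dist (c t s) (c t' s) ≤ r / 4 := by
      intro s hs
      have q1 := hc' t ht s hs
      have q2 := hc' t' ht' s hs
      rw [dist_comm] at q1
      rcases hfl1 with e | e
      · rw [e] at q2
        have := dist_triangle (c t s) (G ⌊t / δ⌋₊ s) (c t' s)
        linarith
      · have q3 := hGc ⌊t / δ⌋₊ s hs
        rw [e] at q2
        have := dist_triangle4 (c t s) (G ⌊t / δ⌋₊ s) (G (⌊t / δ⌋₊ + 1) s) (c t' s)
        linarith
    have := h.convex_le (hL t ht) (hL t' ht') tube s hs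
    rw [(hc t ht).2.1, (hc t' ht').2.1, (hc t ht).2.2.1, (hc t' ht').2.2.1, dist_self] at this
    linarith
  have h00 : ∀ s ∈ Icc (0:ℝ) 1, c 0 s = c₀ s := by
    intro s hs
    have := (hc 0 le_rfl).2.2.2 s hs
    simp only [zero_div, Nat.floor_zero, Nat.cast_zero, zero_mul, dist_self, mul_zero] at this
    exact (dist_le_zero.1 this).symm
  refine ⟨c, L, ⟨hδ, hT, hL, fun t ht => (hc t ht).2.1, fun t ht => (hc t ht).2.2.1, ?_⟩, h00, ?_⟩
  · intro t t' ht ht' hd s hs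
    rcases le_total t t' with h2 | h2
    · exact main t t' ht h2 (by linarith [neg_abs_le (t - t')]) s hs
    · rw [dist_comm, dist_comm (T t)]
      exact main t' t ht' h2 (by linarith [le_abs_self (t - t')]) s hs
  · exact IsG.speed_unique hr (hL 0 le_rfl) hc₀ one_pos h00

/-- Along a `K`-Lipschitz path the family is `K`-Lipschitz, and so are the lengths. -/
lemma IsFam.lip {T : ℝ → S} {δ : ℝ} {x : S} {c : ℝ → ℝ → S} {L : ℝ → ℝ} (hr : 0 < r)
    (h : IsFam r T δ x c L) {K : ℝ} (hT : ∀ t t', dist (T t) (T t') ≤ K * |t - t'|) :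
    (∀ t t', 0 ≤ t → 0 ≤ t' → ∀ s ∈ Icc (0:ℝ) 1, dist (c t s) (c t' s) ≤ s * K * |t - t'|) ∧
    (∀ t t', 0 ≤ t → 0 ≤ t' → |L t - L t'| ≤ K * |t - t'|) := by
  have hδ := h.pos
  have len1 : ∀ t t', 0 ≤ t → 0 ≤ t' → |t - t'| ≤ δ → L t' ≤ L t + K * |t - t'| := by
    intro t t' ht ht' hd
    refine IsG.length_le hr (h.isG t ht) (h.isG t' ht') ((h.zero t ht).trans (h.zero t' ht').symm) ?_
    intro s hs
    refine (h.close t t' ht ht' hd s hs).trans ?_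
    exact mul_le_mul_of_nonneg_left (hT t t') hs.1
  refine ⟨fun t t' ht ht' s hs => ?_, fun t t' ht ht' => ?_⟩
  · refine lipschitz_of_local (a := 0) (b := max t t') (g := fun t => c t s) hδ ?_ t
      ⟨ht, le_max_left _ _⟩ t' ⟨ht', le_max_right _ _⟩
    intro u hu v hv huv
    rw [mul_assoc]
    exact (h.close u v hu.1 hv.1 huv.le s hs).trans (mul_le_mul_of_nonneg_left (hT u v) hs.1)
  · have := lipschitz_of_local (a := 0) (b := max t t') (g := L) (K := K) hδ ?_ t
      ⟨ht, le_max_left _ _⟩ t' ⟨ht', le_max_right _ _⟩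
    · rwa [Real.dist_eq] at this
    · intro u hu v hv huv
      rw [Real.dist_eq, abs_le]
      have a1 := len1 u v hu.1 hv.1 huv.le
      have a2 := len1 v u hv.1 hu.1 (by rw [abs_sub_comm]; exact huv.le)
      rw [abs_sub_comm v u] at a2
      constructor <;> linarith

/-- Local geodesics minimise length among nearby paths with the same endpoints. -/
lemma LC.le_of_path [CompactSpace S] (h : LC S r) {c σ : ℝ → S} {L K : ℝ} (hc : IsG r c 0 1 L)
    (hK : 0 ≤ K) (hσ : ∀ s ∈ Icc (0:ℝ) 1, ∀ t ∈ Icc (0:ℝ) 1, dist (σ s) (σ t) ≤ K * |s - t|)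
    (h0 : σ 0 = c 0) (h1 : σ 1 = c 1) (hd : ∀ s ∈ Icc (0:ℝ) 1, dist (σ s) (c s) ≤ r / 32) :
    L ≤ K := by
  have hr := h.pos
  -- clamp the path to `[0, 1]`
  set T : ℝ → S := fun t => σ (projIcc (0:ℝ) 1 (zero_le_one (α := ℝ)) t) with hTdef
  have hTI : ∀ t ∈ Icc (0:ℝ) 1, T t = σ t := fun t ht => by simp [hTdef, projIcc_of_mem _ ht]
  have hT : ∀ t t', dist (T t) (T t') ≤ K * |t - t'| := by
    intro t t'
    refine (hσ _ (projIcc (0:ℝ) 1 (zero_le_one (α := ℝ)) t).2 _ (projIcc (0:ℝ) 1 (zero_le_one (α := ℝ)) t').2).trans ?_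
    exact mul_le_mul_of_nonneg_left (abs_projIcc_sub_projIcc (zero_le_one (α := ℝ))) hK
  obtain ⟨δ, hδ, Hδ⟩ : ∃ δ > 0, (K + L) * δ ≤ r / 32 := by
    refine ⟨r / 32 / (K + L + 1), by have := hc.1; positivity, ?_⟩
    have := hc.1
    rw [mul_div_assoc', div_le_iff₀ (by positivity)]
    nlinarith
  have hL0 := hc.1
  obtain ⟨d, Λ, hfam, hd0, hΛ0⟩ := h.family (T := T) hδ (fun t t' htt => (hT t t').trans (by
    nlinarith)) (IsG.const hr (σ 0) 0 1) (by simp [hTI])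
  have hlip := (hfam.lip hr hT).2
  -- on a grid, the family consists of initial segments of `c`, up to the distance of endpoints
  have key : ∀ n : ℕ, ∀ t ∈ Icc (0:ℝ) 1, t ≤ n * δ → ∀ s ∈ Icc (0:ℝ) 1,
      dist (d t s) (c (t * s + 0)) ≤ s * dist (σ t) (c t) := by
    intro n
    induction n with
    | zero =>
      intro t ht htn s hs
      have : t = 0 := le_antisymm (by simpa using htn) ht.1
      subst this
      rw [hd0 s hs]; simp [h0]
    | succ n ih =>
      intro t ht htn s hs
      set t' := max 0 (t - δ)
      have ht'0 : 0 ≤ t' := le_max_left _ _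
      have ht't : t' ≤ t := max_le ht.1 (by linarith)
      have htt' : t - t' ≤ δ := by linarith [le_max_right 0 (t - δ)]
      have ih' := ih t' ⟨ht'0, ht't.trans ht.2⟩ (by
        refine max_le (by positivity) ?_
        push_cast at htn; linarith)
      have hct : IsG r (fun s => c (t * s + 0)) 0 1 (L * |t|) := hc.affine _ _ fun s hs =>
        ⟨by nlinarith [ht.1, hs.1], by nlinarith [ht.1, ht.2, hs.1, hs.2]⟩
      have tube : ∀ s ∈ Icc (0:ℝ) 1, dist (d t s) (c (t * s + 0)) ≤ r / 4 := by
        intro s hs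
        have q1 := hfam.close t t' ht.1 ht'0 (by rw [abs_of_nonneg (by linarith)]; exact htt') s hs
        have q2 := ih' s hs
        have q3 := hc.lipschitz hr (t' * s + 0) ⟨by nlinarith [hs.1], by
          nlinarith [ht.2, hs.1, hs.2]⟩ (t * s + 0)
          ⟨by nlinarith [ht.1, hs.1], by nlinarith [ht.1, ht.2, hs.1, hs.2]⟩
        have q4 := hT t t'
        have q5 := hd t' ⟨ht'0, ht't.trans ht.2⟩
        have q6 : |t' * s + 0 - (t * s + 0)| ≤ δ := by
          rw [show t' * s + 0 - (t * s + 0) = -((t - t') * s) by ring, abs_neg,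
            abs_of_nonneg (mul_nonneg (by linarith) hs.1)]
          nlinarith [hs.1, hs.2]
        rw [abs_of_nonneg (by linarith)] at q4
        have q7 := dist_triangle4 (d t s) (d t' s) (c (t' * s + 0)) (c (t * s + 0))
        have q8 : s * dist (T t) (T t') ≤ dist (T t) (T t') := by
          nlinarith [hs.2, dist_nonneg (x := T t) (y := T t')]
        have q9 : s * dist (σ t') (c t') ≤ dist (σ t') (c t') := by
          nlinarith [hs.2, dist_nonneg (x := σ t') (y := c t')]
        nlinarith
      have := h.convex_le (hfam.isG t ht.1) hct tube s hs
      rw [hfam.zero t ht.1, hfam.one t ht.1, hTI t ht] at this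
      simp only [mul_zero, mul_one, add_zero, h0, dist_self, zero_add] at this ⊢
      exact this
  obtain ⟨n, hn⟩ := exists_nat_gt (1 / δ)
  rw [div_lt_iff₀ hδ] at hn
  have hfin : ∀ s ∈ Icc (0:ℝ) 1, d 1 s = c s := by
    intro s hs
    have := key n 1 (by simp) hn.le s hs
    rw [h1] at this
    simpa using this
  have e1 : Λ 1 = L := IsG.speed_unique hr (hfam.isG 1 zero_le_one) hc one_pos hfin
  have := hlip 1 0 zero_le_one le_rfl
  rw [hΛ0, e1] at this
  simp only [sub_zero, abs_one, mul_one] at this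
  exact (le_abs_self _).trans this

end

/-! ### Convexity and first variation of length -/

section

variable {S : Type} [MetricSpace S] {r : ℝ}

/-- The length of the geodesics of a family is a convex function of the endpoint along a geodesic:
the midpoint curve of two members has at most the mean speed. -/
lemma LC.fam_convex [CompactSpace S] (h : LC S r) {T : ℝ → S} {δ a b : ℝ} {x : S} {c : ℝ → ℝ → S}
    {L : ℝ → ℝ} (hf : IsFam r T δ x c L) (hlip : ∀ t t', dist (T t) (T t') ≤ 1 * |t - t'|)
    (ha : 0 ≤ a) (hT : IsG r T a b 1) : ConvexOn ℝ (Icc a b) L := by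
  have hr := h.pos
  obtain ⟨l1, l2⟩ := hf.lip hr hlip
  have hcont : ContinuousOn L (Icc a b) := by
    have : LipschitzOnWith 1 L (Icc a b) := by
      refine LipschitzOnWith.of_dist_le_mul fun s hs t ht => ?_
      rw [Real.dist_eq, Real.dist_eq]
      simpa using l2 s t (ha.trans hs.1) (ha.trans ht.1)
    exact this.continuousOn
  refine convexOn_of_local hcont (δ := r / 128) (by linarith) ?_
  intro t e he he' hta htb
  have t0 : 0 ≤ t - e := by linarith
  have t1 : 0 ≤ t := by linarith
  have t2 : 0 ≤ t + e := by linarith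
  have e1 : |t - e - (t + e)| = 2 * e := by
    rw [show t - e - (t + e) = -(2 * e) by ring, abs_neg, abs_of_pos (by linarith)]
  have e2 : |t - e - t| = e := by rw [show t - e - t = -e by ring, abs_neg, abs_of_pos he]
  have e3 : |t - (t + e)| = e := by rw [show t - (t + e) = -e by ring, abs_neg, abs_of_pos he]
  have m1 : t - e ∈ Icc a b := ⟨hta, by linarith⟩
  have m2 : t + e ∈ Icc a b := ⟨by linarith, htb⟩
  have m3 : t ∈ Icc a b := ⟨by linarith, by linarith⟩
  have d1 := hT.2 _ m1 _ m2 (by rw [e1]; linarith)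
  have d2 := hT.2 _ m1 _ m3 (by rw [e2]; linarith)
  have d3 := hT.2 _ m3 _ m2 (by rw [e3]; linarith)
  rw [e1] at d1; rw [e2] at d2; rw [e3] at d3
  have near : ∀ s ∈ Icc (0:ℝ) 1, dist (c (t - e) s) (c (t + e) s) ≤ 2 * e := by
    intro s hs
    have := l1 (t - e) (t + e) t0 t2 s hs
    rw [e1] at this
    nlinarith [hs.1, hs.2]
  have near' : ∀ s ∈ Icc (0:ℝ) 1, dist (c (t - e) s) (c t s) ≤ e := by
    intro s hs
    have := l1 (t - e) t t0 t1 s hs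
    rw [e2] at this
    nlinarith [hs.1, hs.2]
  have ex : ∀ s, ∃ m, s ∈ Icc (0:ℝ) 1 →
      (dist (c (t - e) s) m = dist (c (t - e) s) (c (t + e) s) / 2 ∧
      dist m (c (t + e) s) = dist (c (t - e) s) (c (t + e) s) / 2) ∧ (s = 1 → m = T t) := by
    intro s
    by_cases hs : s ∈ Icc (0:ℝ) 1
    · by_cases hs1 : s = 1
      · refine ⟨T t, fun _ => ⟨?_, fun _ => rfl⟩⟩
        rw [hs1, hf.one _ t0, hf.one _ t2, d1, d2, d3]
        constructor <;> ring
      · obtain ⟨γ, g0, g1, hγ⟩ := h.geo (c (t - e) s) (c (t + e) s) (by linarith [near s hs])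
        refine ⟨γ (1 / 2), fun _ => ⟨⟨?_, ?_⟩, fun h' => absurd h' hs1⟩⟩
        · have := hγ 0 (by simp) (1 / 2) (by norm_num)
          rw [g0] at this; rw [this, zero_sub, abs_neg, abs_of_pos (by norm_num)]; ring
        · have := hγ (1 / 2) (by norm_num) 1 (by simp)
          rw [g1] at this
          rw [this, show (1:ℝ) / 2 - 1 = -(1 / 2) by norm_num, abs_neg,
            abs_of_pos (by norm_num)]; ring
    · exact ⟨T t, fun h' => absurd h' hs⟩
  choose m hm using ex
  have hL1 := hf.isG _ t0
  have hL2 := hf.isG _ t2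
  have key : L t ≤ (L (t - e) + L (t + e)) / 2 := by
    refine h.le_of_path (σ := m) (hf.isG t t1) (by linarith [hL1.1, hL2.1]) ?_ ?_ ?_ ?_
    · obtain ⟨η, hη, H⟩ := exists_scale (show 0 < r / 16 by linarith) (L (t - e))
      refine lipschitz_of_local hη fun s hs s' hs' hss => ?_
      have b0 := H _ hss
      have b1 := hL1.lipschitz hr s hs s' hs'
      have b2 := hL2.lipschitz hr s hs s' hs'
      have := h.busemann (by linarith [near s hs]) (by linarith [near s' hs']) (by linarith)
        (hm s hs).1.1 (hm s hs).1.2 (hm s' hs').1.1 (hm s' hs').1.2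
      linarith
    · have := (hm 0 (by simp)).1.1
      rw [hf.zero _ t0, hf.zero _ t2, dist_self, zero_div] at this
      rw [hf.zero _ t1]; exact (dist_eq_zero.1 this).symm
    · rw [hf.one _ t1]; exact (hm 1 (by simp)).2 rfl
    · intro s hs
      have b1 := (hm s hs).1.1
      have b2 := dist_triangle_left (m s) (c t s) (c (t - e) s)
      linarith [near s hs, near' s hs]
  linarith

/-- Cutting a corner: the length of a nearby geodesic is at most that of the curve which leaves the
first one at distance `u` from its end. -/
lemma LC.cut [CompactSpace S] (h : LC S r) {c c' : ℝ → S} {L L' u : ℝ} (hc : IsG r c 0 1 L)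
    (hc' : IsG r c' 0 1 L') (h0 : c 0 = c' 0)
    (hd : ∀ s ∈ Icc (0:ℝ) 1, dist (c s) (c' s) ≤ r / 32) (hL : 0 < L) (hu : 0 ≤ u) (huL : u ≤ L)
    (hur : u ≤ r / 32) (hq : dist (c (1 - u / L)) (c' 1) ≤ r / 32) :
    L' ≤ L - u + dist (c (1 - u / L)) (c' 1) := by
  have hr := h.pos
  set p := 1 - u / L with hp
  have hp1 : p ≤ 1 := by have : 0 ≤ u / L := by positivity
                         linarith
  have hp0 : 0 ≤ p := by have : u / L ≤ 1 := by rw [div_le_one hL]; exact huL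
                         linarith
  have hLp : L * |p| = L - u := by rw [abs_of_nonneg hp0, hp]; field_simp
  have mem : ∀ s ∈ Icc (0:ℝ) 1, p * s + 0 ∈ Icc (0:ℝ) 1 := fun s hs =>
    ⟨by nlinarith [hs.1], by nlinarith [hs.1, hs.2]⟩
  have hG := hc.affine p 0 mem
  rw [hLp] at hG
  obtain ⟨e, l, e1, e2, e3, e4⟩ := h.move hG (y := c' 1) (by simpa using hq)
  simp only [mul_one, add_zero, mul_zero] at e2 e3 e4
  have hle : l ≤ L - u + dist (c p) (c' 1) :=
    IsG.length_le hr hG e1 (by simp [e2]) (fun s hs => by simpa using e4 s hs)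
  have : ∀ s ∈ Icc (0:ℝ) 1, e s = c' s := by
    refine h.eq_of_ends e1 hc' (fun s hs => ?_) (e2.trans h0) e3
    have q1 := e4 s hs
    have q2 := hd s hs
    have q3 := hc.lipschitz hr (p * s) (by simpa using mem s hs) s hs
    have q4 := dist_triangle4 (e s) (c (p * s)) (c s) (c' s)
    rw [dist_comm (e s) (c (p * s))] at q4
    have q5 : L * |p * s - s| ≤ u := by
      rw [show p * s - s = -(u / L * s) by rw [hp]; ring, abs_neg, abs_of_nonneg
        (mul_nonneg (by positivity) hs.1), show L * (u / L * s) = u * s by field_simp]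
      nlinarith [hs.1, hs.2]
    nlinarith [hs.1, hs.2, dist_nonneg (x := c p) (y := c' 1)]
  rw [← IsG.speed_unique hr e1 hc' one_pos this]
  exact hle

/-- The estimate behind the first variation. A point `q` of the new geodesic, at distance `w` from its
endpoint, has distance `w'` from the cone point and sees the motion of the endpoint, of length `u`,
at an angle of truncated cosine `K`; `K₀` is that of the original geodesic, and `law1`, `law2`,
`law3` are laws of cosines, `D` and `D₀` being distances to the point at radius `w` in the direction
of motion. -/
lemma fv_algebra {w w' u K K₀ D D₀ η : ℝ} (hw : 0 < w) (hu : 0 < u) (hη : 0 < η) (u2 : u ≤ w / 4)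
    (u3 : u < η * w / 20) (hqv1 : w' ≤ w + 2 * u) (hqv2 : w - 2 * u ≤ w') (hK1 : K ≤ 1)
    (hK2 : -1 ≤ K) (hK3 : K₀ ≤ 1) (hK4 : -1 ≤ K₀) (hDn : 0 ≤ D) (hD0n : 0 ≤ D₀)
    (hD : D₀ ≤ D + 2 * u) (law1 : w ^ 2 = w' ^ 2 + u ^ 2 - 2 * w' * u * K)
    (law2 : D ^ 2 = w' ^ 2 + w ^ 2 - 2 * w' * w * K)
    (law3 : D₀ ^ 2 = w ^ 2 + w ^ 2 - 2 * w * w * K₀) : w' - u * K ≤ w ∧ K ≤ K₀ + η := by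
  have main : w' - u * K ≤ w := by
    apply le_of_sq_le_sq _ hw.le
    nlinarith [mul_nonneg (sub_nonneg.2 hK1) (show 0 ≤ 1 + K by linarith), sq_nonneg u]
  have hD0 : D₀ ≤ 2 * w := by
    apply le_of_sq_le_sq _ (by linarith)
    nlinarith [mul_nonneg hw.le hw.le]
  have hDD : D₀ ^ 2 - 8 * u * w ≤ D ^ 2 := by
    rcases le_total D₀ (2 * u) with h3 | h3
    · nlinarith
    · nlinarith
  have hKK : w' * (K - K₀) ≤ 10 * u := by
    have e1 : 2 * w * (w' * (K - K₀)) =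
        (w' ^ 2 - w ^ 2) + 2 * w * (K₀ * (w - w')) + (D₀ ^ 2 - D ^ 2) := by
      rw [law2, law3]; ring
    have e2 : w' ^ 2 - w ^ 2 ≤ 2 * u * (2 * w + 2 * u) := by
      nlinarith [mul_nonneg (sub_nonneg.2 hqv1) (show 0 ≤ w + w' by linarith), mul_pos hu hw]
    have e3 : K₀ * (w - w') ≤ 2 * u := by
      have h1 : |w - w'| ≤ 2 * u := by rw [abs_le]; constructor <;> linarith
      have h2 : |K₀| ≤ 1 := abs_le.2 ⟨hK4, hK3⟩
      calc K₀ * (w - w') ≤ |K₀ * (w - w')| := le_abs_self _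
        _ = |K₀| * |w - w'| := abs_mul _ _
        _ ≤ 1 * |w - w'| := by gcongr
        _ ≤ 2 * u := by linarith
    have : 2 * w * (w' * (K - K₀)) ≤ 2 * w * (10 * u) := by
      rw [e1]; nlinarith [mul_pos hu hw, mul_le_mul_of_nonneg_left e3 hw.le]
    exact le_of_mul_le_mul_left this (by linarith)
  have hfin : K ≤ K₀ + η := by
    by_contra hcon
    push Not at hcon
    nlinarith [mul_pos hw hη]
  exact ⟨main, hfin⟩

/-- First variation of length at a cone point: if a geodesic arrives at `v` from the direction `x`,
then moving its endpoint by `u` in the direction `o` does not shorten it by much more than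
`u cos ∠(x, o)`. -/
lemma LC.first_variation [CompactSpace S] (h : LC S r) {v : S} {θ ε : ℝ} {P : ℝ → ℝ → S}
    (hP : ConeChart v θ ε P) {c : ℝ → S} {L w x : ℝ} (hc : IsG r c 0 1 L) (h1 : c 1 = v)
    (hw : 0 < w) (hwL : w < L) (hwε : w < ε / 4) (hwr : w < r / 64) (hx : c (1 - w / L) = P x w)
    (o : ℝ) {η : ℝ} (hη : 0 < η) :
    ∃ u₀ > 0, ∀ u, 0 < u → u < u₀ → ∀ c' L', IsG r c' 0 1 L' → c' 0 = c 0 → c' 1 = P o u →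
      (∀ s ∈ Icc (0:ℝ) 1, dist (c s) (c' s) ≤ s * u) →
      L - u * (tcos (angDist θ x o) + η) ≤ L' := by
  have hr := h.pos
  refine ⟨min (min (L - w) (w / 4)) (η * w / 20), by
    refine lt_min (lt_min (by linarith) (by linarith)) (by positivity), ?_⟩
  intro u hu hu0 c' L' hc' h0' h1' hd
  have u1 : u < L - w := (hu0.trans_le (min_le_left _ _)).trans_le (min_le_left _ _)
  have u2 : u < w / 4 := (hu0.trans_le (min_le_left _ _)).trans_le (min_le_right _ _)
  have u3 : u < η * w / 20 := hu0.trans_le (min_le_right _ _)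
  have len1 : L' ≤ L + u := IsG.length_le hr hc hc' h0'.symm hd
  have len2 : L ≤ L' + u := IsG.length_le hr hc' hc h0' fun s hs => by
    rw [dist_comm]; exact hd s hs
  have hL : 0 < L := by linarith
  have hL' : 0 < L' := by linarith
  set q := c' (1 - w / L') with hq
  have memq : 1 - w / L' ∈ Icc (0:ℝ) 1 := by
    have : w / L' ≤ 1 := by rw [div_le_one hL']; linarith
    have : 0 ≤ w / L' := by positivity
    constructor <;> linarith
  have memq2 : 1 - w / L ∈ Icc (0:ℝ) 1 := by
    have : w / L ≤ 1 := by rw [div_le_one hL]; linarith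
    have : 0 ≤ w / L := by positivity
    constructor <;> linarith
  -- `q` is close to the corresponding point of `c`
  have hqx : dist q (P x w) ≤ 2 * u := by
    rw [← hx]
    have a1 := hd _ memq
    have a2 := hc.lipschitz hr _ memq _ memq2
    have a3 := dist_triangle q (c (1 - w / L')) (c (1 - w / L))
    rw [dist_comm q (c (1 - w / L'))] at a3
    have a4 : L * |1 - w / L' - (1 - w / L)| ≤ u := by
      rw [show 1 - w / L' - (1 - w / L) = w * (L' - L) / (L * L') by field_simp; ring, abs_div,
        abs_mul, abs_of_pos hw, abs_of_pos (mul_pos hL hL'),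
        show L * (w * |L' - L| / (L * L')) = w * |L' - L| / L' by field_simp,
        div_le_iff₀ hL']
      have : |L' - L| ≤ u := by rw [abs_le]; constructor <;> linarith
      nlinarith
    nlinarith [memq.1, memq.2]
  have hPv : ∀ a s, 0 ≤ s → s < ε → dist (P a s) v = s := by
    intro a s h0 hs
    have := hP.law a a s 0 h0 hs le_rfl hP.pos
    rw [hP.zero] at this
    have h2 : dist (P a s) v ^ 2 = s ^ 2 := by rw [this]; ring
    exact (sq_eq_sq₀ dist_nonneg h0).1 h2
  have hqv1 : dist q v ≤ w + 2 * u := by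
    have := dist_triangle q (P x w) v
    rw [hPv x w hw.le (by linarith)] at this; linarith
  have hqv2 : w - 2 * u ≤ dist q v := by
    have := dist_triangle (P x w) q v
    rw [hPv x w hw.le (by linarith), dist_comm (P x w)] at this; linarith
  obtain ⟨x', hx'⟩ := hP.surj q (by rw [mem_ball]; linarith)
  set w' := dist q v with hw'
  have hcut := h.cut hc' hc h0' (fun s hs => by
    rw [dist_comm]; nlinarith [hd s hs, hs.1, hs.2]) hL' hw.le (by linarith) (by linarith)
    (by rw [h1]; show dist q v ≤ r / 32; linarith)
  rw [h1] at hcut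
  have hcut' : L ≤ L' - w + w' := hcut
  have dw : dist q (P o u) = w := by
    rw [← h1']
    have e : L' * |1 - w / L' - 1| = w := by
      rw [show 1 - w / L' - 1 = -(w / L') by ring, abs_neg, abs_of_pos (by positivity)]
      field_simp
    rw [hq, hc'.2 _ memq _ (by simp) (by rw [e]; linarith), e]
  set K := tcos (angDist θ x' o) with hK
  set K₀ := tcos (angDist θ x o) with hK₀
  have law1 := hP.law x' o w' u (by linarith) (by linarith) hu.le (by linarith)
  have law2 := hP.law x' o w' w (by linarith) (by linarith) hw.le (by linarith)
  have law3 := hP.law x o w w hw.le (by linarith) hw.le (by linarith)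
  rw [hx', dw] at law1
  rw [hx'] at law2
  have hK1 : K ≤ 1 := tcos_le_one _
  have hK2 : -1 ≤ K := neg_one_le_tcos _
  have hK3 : K₀ ≤ 1 := tcos_le_one _
  have hK4 : -1 ≤ K₀ := neg_one_le_tcos _
  set D := dist q (P o w)
  set D₀ := dist (P x w) (P o w)
  have hD : D₀ ≤ D + 2 * u := by
    have := dist_triangle (P x w) q (P o w)
    rw [dist_comm (P x w) q] at this; linarith
  have := fv_algebra hw hu hη (by linarith) u3 hqv1 hqv2 hK1 hK2 hK3 hK4 dist_nonneg dist_nonneg hD law1 law2 law3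
  nlinarith [this.1, this.2]

end

/-! ### Gluing, extending and steering local geodesics -/

section

variable {S : Type} [MetricSpace S] {r : ℝ}

/-- Geodesics that overlap on an interval of length `e` can be glued. -/
lemma LC.glue_overlap (h : LC S r) {g : ℝ → S} {a b c e : ℝ} (he : 0 < e) (h1 : IsG r g a b 1)
    (h2 : IsG r g (b - e) c 1) : IsG r g a c 1 := by
  have hr := h.pos
  refine h.isG_of_local zero_le_one (lt_min he (show 0 < r / 16 by linarith)) ?_
  intro s hs t ht hst
  have g1 := hst.trans_le (min_le_left _ _)
  have g2 := hst.trans_le (min_le_right _ _)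
  rw [abs_lt] at g1
  by_cases hcase : s ≤ b ∧ t ≤ b
  · exact h1.2 s ⟨hs.1, hcase.1⟩ t ⟨ht.1, hcase.2⟩ (by linarith)
  · have : b - e ≤ s ∧ b - e ≤ t := by
      rw [not_and_or, not_le, not_le] at hcase
      rcases hcase with h1 | h1 <;> constructor <;> linarith
    exact h2.2 s ⟨this.1, hs.2⟩ t ⟨this.2, ht.2⟩ (by linarith)

/-- A concatenation of two local geodesics is a local geodesic if the two ends at some distance `e`
from the junction are at distance `2e`. -/
lemma LC.glue (h : LC S r) {g : ℝ → S} {a b c e : ℝ} (he : 0 < e) (hae : a ≤ b - e)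
    (hbe : b + e ≤ c) (h1 : IsG r g a b 1) (h2 : IsG r g b c 1)
    (hd : dist (g (b - e)) (g (b + e)) = 2 * e) : IsG r g a c 1 := by
  have hr := h.pos
  have lip1 := h1.lipschitz hr
  have lip2 := h2.lipschitz hr
  have exact2 : ∀ s ∈ Icc (b - e) b, ∀ t ∈ Icc b (b + e), dist (g s) (g t) = t - s := by
    intro s hs t ht
    have a1 := lip1 (b - e) ⟨hae, by linarith⟩ s ⟨by linarith [hs.1], hs.2⟩
    have a2 := lip1 s ⟨by linarith [hs.1], hs.2⟩ b ⟨by linarith, le_rfl⟩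
    have a3 := lip2 b ⟨le_rfl, by linarith⟩ t ⟨ht.1, by linarith [ht.2]⟩
    have a4 := lip2 t ⟨ht.1, by linarith [ht.2]⟩ (b + e) ⟨by linarith, hbe⟩
    rw [abs_sub_comm, abs_of_nonneg (by linarith [hs.1])] at a1
    rw [abs_sub_comm, abs_of_nonneg (by linarith [hs.2])] at a2
    rw [abs_sub_comm, abs_of_nonneg (by linarith [ht.1])] at a3
    rw [abs_sub_comm, abs_of_nonneg (by linarith [ht.2])] at a4
    have a5 := dist_triangle (g s) (g b) (g t)
    have a6 := dist_triangle4 (g (b - e)) (g s) (g t) (g (b + e))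
    linarith
  have hmid : IsG r g (b - e) (b + e) 1 := by
    refine ⟨zero_le_one, fun s hs t ht hst => ?_⟩
    rw [one_mul]
    rcases le_total s b with hs' | hs' <;> rcases le_total t b with ht' | ht'
    · simpa using h1.2 s ⟨by linarith [hs.1], hs'⟩ t ⟨by linarith [ht.1], ht'⟩ hst
    · rw [exact2 s ⟨hs.1, hs'⟩ t ⟨ht', ht.2⟩, abs_sub_comm, abs_of_nonneg (by linarith)]
    · rw [dist_comm, exact2 t ⟨ht.1, ht'⟩ s ⟨hs', hs.2⟩, abs_of_nonneg (by linarith)]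
    · simpa using h2.2 s ⟨hs', by linarith [hs.2]⟩ t ⟨ht', by linarith [ht.2]⟩ hst
  refine h.glue_overlap (b := b + e) he ?_ (h2.mono (by linarith) le_rfl)
  exact h.glue_overlap he h1 hmid

/-- One step of geodesic extension to the right. -/
lemma LC.extend_step (h : LC S r) {g : ℝ → S} {a b e : ℝ} (he : 0 < e) (her : e < r / 32)
    (hae : a ≤ b - e) (hg : IsG r g a b 1) :
    ∃ g' : ℝ → S, (∀ t ≤ b, g' t = g t) ∧ IsG r g' a (b + e) 1 := by
  have hr := h.pos
  have d0 : dist (g (b - e)) (g b) = e := by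
    have := hg.2 (b - e) ⟨hae, by linarith⟩ b ⟨by linarith, le_rfl⟩
    rw [show b - e - b = -e by ring, abs_neg, abs_of_pos he, one_mul] at this
    exact this (by linarith)
  obtain ⟨z, z1, z2⟩ := h.ext (g (b - e)) (g b) (by linarith) (by linarith)
  rw [d0] at z1 z2
  obtain ⟨c, c0, c1, hc⟩ := h.geo (g b) z (by linarith)
  rw [z1] at hc
  set g' : ℝ → S := fun t => if t ≤ b then g t else c ((t - b) / e)
  have hl : ∀ t ≤ b, g' t = g t := fun t ht => if_pos ht
  have hr' : ∀ t, b ≤ t → g' t = c ((t - b) / e) := by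
    intro t ht
    by_cases htb : t ≤ b
    · have : t = b := le_antisymm htb ht
      subst this
      rw [hl _ le_rfl, sub_self, zero_div, c0]
    · exact if_neg htb
  refine ⟨g', hl, h.glue he hae le_rfl (hg.congr fun t ht => hl t ht.2) ?_ ?_⟩
  · refine ⟨zero_le_one, fun s hs t ht _ => ?_⟩
    rw [hr' s hs.1, hr' t ht.1, hc _ ⟨div_nonneg (by linarith [hs.1]) he.le, by
      rw [div_le_one he]; linarith [hs.2]⟩ _ ⟨div_nonneg (by linarith [ht.1]) he.le, by
      rw [div_le_one he]; linarith [ht.2]⟩, ← sub_div, abs_div, abs_of_pos he]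
    rw [show s - b - (t - b) = s - t by ring]
    field_simp
  · rw [hl _ (by linarith), hr' _ (by linarith), add_sub_cancel_left, div_self he.ne', c1, z2]

/-- Local geodesics extend indefinitely to the right. -/
lemma LC.extend_ray (h : LC S r) {g : ℝ → S} {a b : ℝ} (hab : a < b) (hg : IsG r g a b 1) :
    ∃ g' : ℝ → S, (∀ t ≤ b, g' t = g t) ∧ ∀ A B, IsG r g A b 1 → IsG r g' A B 1 := by
  have hr := h.pos
  obtain ⟨e, he, he'⟩ : ∃ e, 0 < e ∧ e < min (b - a) (r / 32) :=
    exists_between (lt_min (by linarith) (by linarith))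
  have e1 := he'.trans_le (min_le_left _ _)
  have e2 := he'.trans_le (min_le_right _ _)
  have ex : ∀ (g : ℝ → S) (b : ℝ), ∃ g' : ℝ → S, a ≤ b - e → IsG r g a b 1 →
      (∀ t ≤ b, g' t = g t) ∧ IsG r g' a (b + e) 1 := by
    intro g b
    by_cases hb : a ≤ b - e ∧ IsG r g a b 1
    · obtain ⟨g', hg'⟩ := h.extend_step he e2 hb.1 hb.2
      exact ⟨g', fun _ _ => hg'⟩
    · exact ⟨g, fun h1 h2 => absurd ⟨h1, h2⟩ hb⟩
  choose step hstep using ex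
  set G : ℕ → ℝ → S := fun n => Nat.rec g (fun n g => step g (b + n * e)) n
  have hGs : ∀ n, G (n + 1) = step (G n) (b + n * e) := fun n => rfl
  have hb : ∀ n : ℕ, a ≤ b + n * e - e := fun n => by
    have : 0 ≤ (n:ℝ) * e := by positivity
    linarith
  have hG : ∀ n : ℕ, IsG r (G n) a (b + n * e) 1 := by
    intro n
    induction n with
    | zero => show IsG r g a (b + ((0:ℕ):ℝ) * e) 1; simpa using hg
    | succ n ih =>
      have := (hstep (G n) (b + n * e) (hb n) ih).2
      rw [hGs]; push_cast
      rwa [add_assoc, ← add_one_mul] at this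
  have hGe : ∀ n : ℕ, ∀ t ≤ b + n * e, G (n + 1) t = G n t := fun n =>
    (hstep (G n) (b + n * e) (hb n) (hG n)).1
  have hGm : ∀ n k : ℕ, ∀ t ≤ b + n * e, G (n + k) t = G n t := by
    intro n k t ht
    induction k with
    | zero => rfl
    | succ k ih =>
      rw [← add_assoc, hGe (n + k) t ?_, ih]
      push_cast
      have : 0 ≤ (k:ℝ) * e := by positivity
      nlinarith
  set g' : ℝ → S := fun t => G ⌈(t - b) / e⌉₊ t
  have hg' : ∀ n : ℕ, ∀ t ≤ b + n * e, g' t = G n t := by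
    intro n t ht
    have hle : ⌈(t - b) / e⌉₊ ≤ n := by
      rw [Nat.ceil_le, div_le_iff₀ he]; linarith
    have hce := Nat.le_ceil ((t - b) / e)
    rw [div_le_iff₀ he] at hce
    obtain ⟨k, hk⟩ := Nat.exists_eq_add_of_le hle
    show G _ t = G n t
    conv_rhs => rw [hk]
    rw [hGm _ k t (by linarith)]
  have h0 : ∀ t ≤ b, g' t = g t := fun t ht => hg' 0 t (by simpa using ht)
  refine ⟨g', h0, fun A B hA => ?_⟩
  obtain ⟨n, hn⟩ := exists_nat_gt ((B - b) / e)
  rw [div_lt_iff₀ he] at hn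
  have i1 : IsG r g' A b 1 := hA.congr fun t ht => h0 t ht.2
  have i2 : IsG r g' a (b + n * e) 1 := (hG n).congr fun t ht => hg' n t ht.2
  exact h.glue_overlap he i1 (i2.mono (by linarith) (by linarith))

lemma IsG.rev {g : ℝ → S} {a b : ℝ} (hg : IsG r g a b 1) (q : ℝ) :
    IsG r (fun t => g (-t + q)) (q - b) (q - a) 1 := by
  have := hg.affine (a' := q - b) (b' := q - a) (-1) q
    (fun t ht => ⟨by linarith [ht.2], by linarith [ht.1]⟩)
  simpa using this

lemma IsG.shift {g : ℝ → S} {a b : ℝ} (hg : IsG r g a b 1) (q : ℝ) :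
    IsG r (fun t => g (t + q)) (a - q) (b - q) 1 := by
  have := hg.affine (a' := a - q) (b' := b - q) 1 q
    (fun t ht => ⟨by linarith [ht.1], by linarith [ht.2]⟩)
  simpa using this

/-- Local geodesics extend to bi-infinite ones. -/
lemma LC.extend_line (h : LC S r) {g : ℝ → S} {a b : ℝ} (hab : a < b) (hg : IsG r g a b 1) :
    ∃ g' : ℝ → S, (∀ t ∈ Icc a b, g' t = g t) ∧ ∀ A B, IsG r g' A B 1 := by
  obtain ⟨g₁, e1, i1⟩ := h.extend_ray hab hg
  have j1 : ∀ B, IsG r (fun t => g₁ (-t + 0)) (0 - B) (0 - a) 1 := fun B => (i1 a B hg).rev 0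
  obtain ⟨g₂, e2, i2⟩ := h.extend_ray (show 0 - b < 0 - a by linarith) (j1 b)
  refine ⟨fun t => g₂ (-t + 0), fun t ht => ?_, fun A B => ?_⟩
  · show g₂ (-t + 0) = g t
    rw [e2 _ (by linarith [ht.1])]
    simp only [add_zero, neg_neg]
    exact e1 t ht.2
  · have := (i2 (0 - B) (0 - A) (j1 B)).rev 0
    simpa using this

/-- Any local geodesic can be steered to end at a given point, moving it by a bounded amount at its
far end. -/
lemma LC.steer [CompactSpace S] [ConnectedSpace S] (h : LC S r) (v : S) :
    ∃ D > 0, ∀ (c : ℝ → S) (L : ℝ), IsG r c 0 1 L → ∃ c' L', IsG r c' 0 1 L' ∧ c' 0 = c 0 ∧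
      c' 1 = v ∧ ∀ s ∈ Icc (0:ℝ) 1, dist (c s) (c' s) ≤ s * D := by
  have hr := h.pos
  set A : ℕ → Set S := fun n => {x | ∀ (c : ℝ → S) (L : ℝ), IsG r c 0 1 L → c 1 = x →
    ∃ c' L', IsG r c' 0 1 L' ∧ c' 0 = c 0 ∧ c' 1 = v ∧
      ∀ s ∈ Icc (0:ℝ) 1, dist (c s) (c' s) ≤ s * (n * (r / 32))}
  have hA0 : v ∈ A 0 := fun c L hc h1 => ⟨c, L, hc, rfl, h1, fun s hs => by simp⟩
  have hstep : ∀ n, ∀ x ∈ A n, ∀ y, dist x y ≤ r / 32 → y ∈ A (n + 1) := by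
    intro n x hx y hxy c L hc hy
    obtain ⟨c₁, L₁, e1, e2, e3, e4⟩ := h.move hc (y := x) (by rw [hy, dist_comm]; exact hxy)
    obtain ⟨c₂, L₂, f1, f2, f3, f4⟩ := hx c₁ L₁ e1 e3
    refine ⟨c₂, L₂, f1, f2.trans e2, f3, fun s hs => ?_⟩
    have := dist_triangle (c s) (c₁ s) (c₂ s)
    have a1 := e4 s hs
    have a2 := f4 s hs
    rw [hy, dist_comm y x] at a1
    have a3 := mul_le_mul_of_nonneg_left hxy hs.1
    push_cast
    linarith
  have hmono : Monotone A := monotone_nat_of_le_succ fun n x hx =>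
    hstep n x hx x (by rw [dist_self]; linarith)
  have hopen : IsOpen (⋃ n, A n) := by
    rw [Metric.isOpen_iff]
    intro x hx
    obtain ⟨n, hn⟩ := mem_iUnion.1 hx
    refine ⟨r / 32, by linarith, fun y hy => mem_iUnion.2 ⟨n + 1, hstep n x hn y ?_⟩⟩
    rw [dist_comm]; exact (mem_ball.1 hy).le
  have hclosed : IsClosed (⋃ n, A n) := by
    rw [← isOpen_compl_iff, Metric.isOpen_iff]
    intro x hx
    refine ⟨r / 32, by linarith, fun y hy hy' => hx ?_⟩
    obtain ⟨n, hn⟩ := mem_iUnion.1 hy'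
    exact mem_iUnion.2 ⟨n + 1, hstep n y hn x (mem_ball.1 hy).le⟩
  have huniv : (⋃ n, A n) = univ :=
    IsClopen.eq_univ ⟨hclosed, hopen⟩ ⟨v, mem_iUnion.2 ⟨0, hA0⟩⟩
  obtain ⟨n, hn⟩ := isCompact_univ.elim_directed_cover (fun n => interior (A (n + 1)))
    (fun n => isOpen_interior) (fun x _ => by
      have hx : x ∈ ⋃ n, A n := huniv ▸ mem_univ x
      obtain ⟨n, hn⟩ := mem_iUnion.1 hx
      refine mem_iUnion.2 ⟨n, mem_interior_iff_mem_nhds.2 (Metric.mem_nhds_iff.2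
        ⟨r / 32, by linarith, fun y hy => hstep n x hn y ?_⟩)⟩
      rw [dist_comm]; exact (mem_ball.1 hy).le)
    (directed_of_isDirected_le fun i j hij => interior_mono (hmono (by omega)))
  refine ⟨(n + 1 : ℕ) * (r / 32), by positivity, fun c L hc => ?_⟩
  exact interior_subset (hn (mem_univ (c 1))) c L hc rfl

/-- Rescaling to unit speed. -/
lemma IsG.unit {c : ℝ → S} {L : ℝ} (hc : IsG r c 0 1 L) (hL : 0 < L) :
    IsG r (fun t => c (t / L)) 0 L 1 := by
  have := hc.affine (a' := 0) (b' := L) (1 / L) 0 (fun t ht => by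
    rw [add_zero, one_div_mul_eq_div]
    exact ⟨div_nonneg ht.1 hL.le, by rw [div_le_one hL]; exact ht.2⟩)
  rw [abs_of_pos (by positivity), mul_one_div_cancel hL.ne'] at this
  refine this.congr fun t _ => ?_
  rw [add_zero, one_div_mul_eq_div]

/-- Rescaling from unit speed. -/
lemma IsG.scaled {g : ℝ → S} {L : ℝ} (hg : IsG r g 0 L 1) (hL : 0 ≤ L) :
    IsG r (fun s => g (L * s)) 0 1 L := by
  have := hg.affine (a' := 0) (b' := 1) L 0 (fun t ht => by
    constructor <;> nlinarith [ht.1, ht.2])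
  rw [abs_of_nonneg hL, one_mul] at this
  simpa using this

/-- Comparison, in unit speed parametrisation, of geodesics that are close in the proportional
one. -/
lemma IsG.unit_close (hr : 0 < r) {c c' : ℝ → S} {L L' D : ℝ} (hc : IsG r c 0 1 L)
    (hc' : IsG r c' 0 1 L') (h0 : c 0 = c' 0)
    (hd : ∀ s ∈ Icc (0:ℝ) 1, dist (c s) (c' s) ≤ s * D) (hL : 0 < L) (hL' : 0 < L') {t : ℝ}
    (ht : 0 ≤ t) (htL : t ≤ L) (htL' : t ≤ L') :
    dist (c (t / L)) (c' (t / L')) ≤ 2 * D * t / L' := by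
  have len1 : L' ≤ L + D := IsG.length_le hr hc hc' h0 hd
  have len2 : L ≤ L' + D := IsG.length_le hr hc' hc h0.symm fun s hs => by
    rw [dist_comm]; exact hd s hs
  have m1 : t / L ∈ Icc (0:ℝ) 1 := ⟨by positivity, by rw [div_le_one hL]; exact htL⟩
  have m2 : t / L' ∈ Icc (0:ℝ) 1 := ⟨by positivity, by rw [div_le_one hL']; exact htL'⟩
  have a1 := hd _ m2
  have a2 := hc.lipschitz hr _ m1 _ m2
  have a3 := dist_triangle (c (t / L)) (c (t / L')) (c' (t / L'))
  have a4 : L * |t / L - t / L'| ≤ D * t / L' := by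
    rw [show t / L - t / L' = t * (L' - L) / (L * L') by field_simp, abs_div, abs_mul,
      abs_of_nonneg ht, abs_of_pos (mul_pos hL hL'),
      show L * (t * |L' - L| / (L * L')) = |L' - L| * t / L' by field_simp]
    have : |L' - L| ≤ D := by rw [abs_le]; constructor <;> linarith
    gcongr
  have a5 : t / L' * D = D * t / L' := by ring
  have a6 : 2 * D * t / L' = D * t / L' + D * t / L' := by ring
  linarith

end

/-! ### Geodesics in a flat surface -/

section

variable {S : Type} [MetricSpace S] {r : ℝ}

/-- Geodesics of the plane are affine. -/
lemma affine_of_dist {φ : ℝ → EuclideanSpace ℝ (Fin 2)} {a b L : ℝ} (hab : a < b)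
    (h : ∀ s ∈ Icc a b, ∀ t ∈ Icc a b, dist (φ s) (φ t) = L * |s - t|) :
    ∃ A B : EuclideanSpace ℝ (Fin 2), ∀ s ∈ Icc a b, φ s = A + s • B := by
  have hba : 0 < b - a := by linarith
  refine ⟨φ a - (a / (b - a)) • (φ b - φ a), (1 / (b - a)) • (φ b - φ a), fun s hs => ?_⟩
  have ma : a ∈ Icc a b := ⟨le_rfl, hab.le⟩
  have mb : b ∈ Icc a b := ⟨hab.le, le_rfl⟩
  have e1 : dist (φ a) (φ s) = (s - a) / (b - a) * dist (φ a) (φ b) := by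
    rw [h a ma s hs, h a ma b mb, abs_sub_comm, abs_of_nonneg (by linarith [hs.1]),
      abs_sub_comm a b, abs_of_pos hba]
    field_simp
  have e2 : dist (φ s) (φ b) = (1 - (s - a) / (b - a)) * dist (φ a) (φ b) := by
    rw [h s hs b mb, h a ma b mb, abs_sub_comm, abs_of_nonneg (by linarith [hs.2]),
      abs_sub_comm a b, abs_of_pos hba]
    field_simp; ring
  rw [eq_lineMap_of_dist_eq_mul_of_dist_eq_mul e1 e2, AffineMap.lineMap_apply]
  simp only [vsub_eq_sub, vadd_eq_add, smul_smul]
  rw [show (s - a) / (b - a) = s * (1 / (b - a)) - a / (b - a) by ring, sub_smul]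
  abel

/-- A quadratic polynomial with three zeros vanishes; used to propagate the formula for the squared
distance of two planar geodesics. -/
lemma quad_zero {p q k a m s : ℝ} (ham : a < m) (h1 : p + a * q + a ^ 2 * k = 0)
    (h2 : p + m * q + m ^ 2 * k = 0)
    (h3 : p + (a + m) / 2 * q + ((a + m) / 2) ^ 2 * k = 0) : p + s * q + s ^ 2 * k = 0 := by
  have hk : (m - a) ^ 2 * k = 0 := by linear_combination 2 * h1 + 2 * h2 - 4 * h3
  have hk0 : k = 0 := by
    rcases mul_eq_zero.1 hk with h | h
    · exact absurd h (by have : 0 < m - a := by linarith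
                         positivity)
    · exact h
  subst hk0
  have hq : (m - a) * q = 0 := by linear_combination h2 - h1
  have hq0 : q = 0 := by
    rcases mul_eq_zero.1 hq with h | h
    · linarith
    · exact h
  subst hq0
  linarith

/-- Every ball of radius `ε` is isometric to a subset of the Euclidean plane. -/
def FlatAt (S : Type) [MetricSpace S] (ε : ℝ) : Prop :=
  ∀ x : S, ∃ f : S → EuclideanSpace ℝ (Fin 2), ∀ y ∈ ball x ε, ∀ z ∈ ball x ε,
    dist (f y) (f z) = dist y z

/-- In a flat surface, close geodesics from the same point diverge linearly. -/
lemma flat_diverge (hr : 0 < r) {ε : ℝ} (hε : 0 < ε) (hf : FlatAt S ε) {c c' : ℝ → S}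
    {L L' κ e : ℝ} (hc : IsG r c 0 1 L) (hc' : IsG r c' 0 1 L') (he : 0 < e) (hκ : 0 ≤ κ)
    (hκε : κ ≤ ε / 4) (h0 : ∀ s ∈ Icc (0:ℝ) 1, s ≤ e → dist (c s) (c' s) = s * κ) :
    ∀ s ∈ Icc (0:ℝ) 1, dist (c s) (c' s) = s * κ := by
  obtain ⟨η, hη, hηe, hηL, hηL'⟩ : ∃ η > 0, 2 * η ≤ e ∧ L * (2 * η) < min (r / 16) (ε / 4) ∧
      L' * (2 * η) < min (r / 16) (ε / 4) := by
    have hm : 0 < min (r / 16) (ε / 4) := lt_min (by linarith) (by linarith)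
    refine ⟨min (e / 2) (min (r / 16) (ε / 4) / (4 * (L + L' + 1))), ?_, ?_, ?_, ?_⟩
    · have := hc.1; have := hc'.1; exact lt_min (by linarith) (by positivity)
    · linarith [min_le_left (e / 2) (min (r / 16) (ε / 4) / (4 * (L + L' + 1)))]
    · have h1 := hc.1; have h2 := hc'.1
      have := min_le_right (e / 2) (min (r / 16) (ε / 4) / (4 * (L + L' + 1)))
      set q := min (e / 2) (min (r / 16) (ε / 4) / (4 * (L + L' + 1)))
      rw [le_div_iff₀ (by positivity)] at this
      have hq : 0 < q := lt_min (by linarith) (by positivity)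
      nlinarith [mul_nonneg hq.le h1, mul_nonneg hq.le h2]
    · have h1 := hc.1; have h2 := hc'.1
      have := min_le_right (e / 2) (min (r / 16) (ε / 4) / (4 * (L + L' + 1)))
      set q := min (e / 2) (min (r / 16) (ε / 4) / (4 * (L + L' + 1)))
      rw [le_div_iff₀ (by positivity)] at this
      have hq : 0 < q := lt_min (by linarith) (by positivity)
      nlinarith [mul_nonneg hq.le h1, mul_nonneg hq.le h2]
  have key : ∀ n : ℕ, ∀ s ∈ Icc (0:ℝ) 1, s ≤ e + n * η → dist (c s) (c' s) = s * κ := by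
    intro n
    induction n with
    | zero => intro s hs hse; exact h0 s hs (by simpa using hse)
    | succ n ih =>
      intro s hs hse
      by_cases hsn : s ≤ e + n * η
      · exact ih s hs hsn
      push Not at hsn
      push_cast at hse
      have hnη : 0 ≤ (n:ℝ) * η := by positivity
      set a := s - 2 * η with ha
      have ha0 : 0 ≤ a := by linarith
      have hsub : ∀ t ∈ Icc a s, t ∈ Icc (0:ℝ) 1 := fun t ht =>
        ⟨ha0.trans ht.1, ht.2.trans hs.2⟩
      have hle : ∀ t ∈ Icc a s, ∀ t' ∈ Icc a s, |t - t'| ≤ 2 * η := fun t ht t' ht' => by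
        rw [abs_le]; constructor <;> linarith [ht.1, ht.2, ht'.1, ht'.2]
      have ama : a ∈ Icc a s := ⟨le_rfl, by linarith⟩
      obtain ⟨f, hfx⟩ := hf (c a)
      have hcb : ∀ t ∈ Icc a s, c t ∈ ball (c a) ε := fun t ht => by
        rw [mem_ball]
        have := hc.lipschitz hr t (hsub t ht) a (hsub a ama)
        have h2 := mul_le_mul_of_nonneg_left (hle t ht a ama) hc.1
        have := min_le_right (r / 16) (ε / 4)
        linarith
      have hcb' : ∀ t ∈ Icc a s, c' t ∈ ball (c a) ε := fun t ht => by
        rw [mem_ball]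
        have := hc'.lipschitz hr t (hsub t ht) a (hsub a ama)
        have h2 := mul_le_mul_of_nonneg_left (hle t ht a ama) hc'.1
        have h3 := ih a (hsub a ama) (by linarith)
        have h4 := dist_triangle (c' t) (c' a) (c a)
        rw [dist_comm (c' a) (c a)] at h4
        have := min_le_right (r / 16) (ε / 4)
        nlinarith [(hsub a ama).2]
      obtain ⟨A, B, hAB⟩ := affine_of_dist (φ := fun t => f (c t)) (L := L)
        (show a < s by linarith) (fun t ht t' ht' => by
          rw [hfx _ (hcb t ht) _ (hcb t' ht')]
          refine hc.2 t (hsub t ht) t' (hsub t' ht') ?_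
          have h2 := mul_le_mul_of_nonneg_left (hle t ht t' ht') hc.1
          linarith [min_le_left (r / 16) (ε / 4)])
      obtain ⟨A', B', hAB'⟩ := affine_of_dist (φ := fun t => f (c' t)) (L := L')
        (show a < s by linarith) (fun t ht t' ht' => by
          rw [hfx _ (hcb' t ht) _ (hcb' t' ht')]
          refine hc'.2 t (hsub t ht) t' (hsub t' ht') ?_
          have h2 := mul_le_mul_of_nonneg_left (hle t ht t' ht') hc'.1
          linarith [min_le_left (r / 16) (ε / 4)])
      have hd : ∀ t ∈ Icc a s, dist (c t) (c' t) ^ 2 = ‖A - A'‖ ^ 2 +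
          t * (2 * inner ℝ (A - A') (B - B')) + t ^ 2 * ‖B - B'‖ ^ 2 := by
        intro t ht
        rw [← hfx _ (hcb t ht) _ (hcb' t ht), hAB t ht, hAB' t ht, dist_eq_norm,
          show A + t • B - (A' + t • B') = (A - A') + t • (B - B') by rw [smul_sub]; abel,
          norm_add_sq_real, norm_smul, inner_smul_right, mul_pow, Real.norm_eq_abs, sq_abs]
        ring
      have hz : ∀ t ∈ Icc a (s - η), ‖A - A'‖ ^ 2 +
          t * (2 * inner ℝ (A - A') (B - B')) + t ^ 2 * (‖B - B'‖ ^ 2 - κ ^ 2) = 0 := by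
        intro t ht
        have ht' : t ∈ Icc a s := ⟨ht.1, by linarith [ht.2]⟩
        have h1 := hd t ht'
        rw [ih t (hsub t ht') (by linarith [ht.2])] at h1
        linarith
      have hs0 := quad_zero (s := s) (show a < s - η by linarith)
        (hz a ⟨le_rfl, by linarith⟩) (hz (s - η) ⟨by linarith, le_rfl⟩)
        (hz ((a + (s - η)) / 2) ⟨by linarith, by linarith⟩)
      have h1 := hd s ⟨by linarith, le_rfl⟩
      have h2 : dist (c s) (c' s) ^ 2 = (s * κ) ^ 2 := by rw [h1]; linarith
      exact (sq_eq_sq₀ dist_nonneg (mul_nonneg hs.1 hκ)).1 h2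
  intro s hs
  obtain ⟨n, hn⟩ := exists_nat_gt (1 / η)
  rw [div_lt_iff₀ hη] at hn
  exact key n s hs (by linarith [hs.2])

/-- The initial velocity of a local geodesic, read in a flat chart at its origin. -/
lemma exists_velocity (hr : 0 < r) {ε : ℝ} (hε : 0 < ε) {x : S}
    {f : S → EuclideanSpace ℝ (Fin 2)}
    (hf : ∀ y ∈ ball x ε, ∀ z ∈ ball x ε, dist (f y) (f z) = dist y z) {c : ℝ → S} {L : ℝ}
    (hc : IsG r c 0 1 L) (h0 : c 0 = x) : ∃ z : EuclideanSpace ℝ (Fin 2), ‖z‖ = L ∧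
      ∃ e > 0, ∀ s ∈ Icc (0:ℝ) 1, s ≤ e → f (c s) = f x + s • z ∧ c s ∈ ball x ε := by
  obtain ⟨η, hη, H⟩ := exists_scale (show 0 < min (r / 16) ε from lt_min (by linarith) hε) L
  set e := min (η / 2) 1 with he
  have e0 : 0 < e := lt_min (by linarith) one_pos
  have e1 : e ≤ 1 := min_le_right _ _
  have e2 : e < η := by linarith [min_le_left (η / 2) 1]
  have hsub : ∀ t ∈ Icc 0 e, t ∈ Icc (0:ℝ) 1 := fun t ht => ⟨ht.1, ht.2.trans e1⟩
  have hH : ∀ t ∈ Icc 0 e, ∀ t' ∈ Icc 0 e, L * |t - t'| < min (r / 16) ε := fun t ht t' ht' =>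
    H _ (by rw [abs_lt]; constructor <;> linarith [ht.1, ht.2, ht'.1, ht'.2])
  have m0 : (0:ℝ) ∈ Icc 0 e := ⟨le_rfl, e0.le⟩
  have hb : ∀ t ∈ Icc 0 e, c t ∈ ball x ε := fun t ht => by
    rw [mem_ball, ← h0]
    have := hc.lipschitz hr t (hsub t ht) 0 (hsub 0 m0)
    have := (hH t ht 0 m0).trans_le (min_le_right _ _)
    linarith
  have hdist : ∀ t ∈ Icc 0 e, ∀ t' ∈ Icc 0 e, dist (f (c t)) (f (c t')) = L * |t - t'| :=
    fun t ht t' ht' => by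
      rw [hf _ (hb t ht) _ (hb t' ht')]
      exact hc.2 t (hsub t ht) t' (hsub t' ht') ((hH t ht t' ht').trans_le (min_le_left _ _))
  obtain ⟨A, B, hAB⟩ := affine_of_dist (φ := fun t => f (c t)) e0 hdist
  have hA : f x = A := by
    have := hAB 0 m0
    simpa [h0] using this
  refine ⟨B, ?_, e, e0, fun s hs hse => ⟨by rw [hAB s ⟨hs.1, hse⟩, hA], hb s ⟨hs.1, hse⟩⟩⟩
  have me : e ∈ Icc 0 e := ⟨e0.le, le_rfl⟩
  have := hdist e me 0 m0
  rw [hAB e me, hAB 0 m0, dist_eq_norm] at this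
  simp only [zero_smul, add_zero, add_sub_cancel_left, sub_zero, norm_smul, Real.norm_eq_abs] at this
  rw [mul_comm] at this
  exact mul_right_cancel₀ (by rw [abs_of_pos e0]; exact e0.ne') this

end

/-! ### Homotopy classes of geodesic loops -/

section

variable {S : Type} [MetricSpace S] {r : ℝ}

open unitInterval in
/-- Going up one side of a square and along the top is homotopic to the opposite side when
the bottom is collapsed. -/
lemma square_homotopic {X : Type} [TopologicalSpace X] {p : X} (F : C(I × I, X))
    (q₀ q₁ γ : Path p p) (h0 : ∀ s, F (0, s) = q₀ s) (h1 : ∀ s, F (1, s) = q₁ s)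
    (ht : ∀ t, F (t, 1) = γ t) (hb : ∀ t, F (t, 0) = p) :
    Path.Homotopic.Quotient.mk q₁ =
      (Path.Homotopic.Quotient.mk q₀).trans (Path.Homotopic.Quotient.mk γ) := by
  let a : Path ((0, 0) : I × I) (0, 1) := ⟨⟨fun s => (0, s), by fun_prop⟩, rfl, rfl⟩
  let b : Path ((0, 1) : I × I) (1, 1) := ⟨⟨fun s => (s, 1), by fun_prop⟩, rfl, rfl⟩
  let d : Path ((0, 0) : I × I) (1, 0) := ⟨⟨fun s => (s, 0), by fun_prop⟩, rfl, rfl⟩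
  let e : Path ((1, 0) : I × I) (1, 1) := ⟨⟨fun s => (1, s), by fun_prop⟩, rfl, rfl⟩
  haveI : ContractibleSpace I := (convex_Icc (0:ℝ) 1).contractibleSpace ⟨0, by simp⟩
  have H : (a.trans b).Homotopic (d.trans e) := SimplyConnectedSpace.paths_homotopic _ _
  have H2 := (H.map F).pathCast (x₂ := p) (x₃ := p) (by rw [hb]) (by rw [ht]; simp)
  have e1 : ((a.trans b).map F.continuous).cast (by rw [hb]) (by rw [ht]; simp) = q₀.trans γ := by
    ext s
    simp only [Path.cast_coe, Path.map_coe, Function.comp_apply, Path.trans_apply]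
    split_ifs
    · exact h0 _
    · exact ht _
  have e2 : ((d.trans e).map F.continuous).cast (by rw [hb]) (by rw [ht]; simp) =
      (Path.refl p).trans q₁ := by
    ext s
    simp only [Path.cast_coe, Path.map_coe, Function.comp_apply, Path.trans_apply]
    split_ifs
    · exact hb _
    · exact h1 _
  have H3 : (q₀.trans γ).Homotopic ((Path.refl p).trans q₁) := by
    rw [← e1, ← e2]; exact H2
  rw [← Path.Homotopic.Quotient.mk_trans, Path.Homotopic.Quotient.eq.2 H3]
  exact (Path.Homotopic.Quotient.eq.2 ⟨Path.Homotopy.reflTrans q₁⟩).symm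

open unitInterval in
/-- Dragging the endpoint of a geodesic loop along a loop `γ` multiplies its homotopy class by that of
`γ` and increases its length by at most a constant depending on `γ` only. -/
lemma LC.word_step [CompactSpace S] (h : LC S r) {p : S} (γ : Path p p) :
    ∃ C : ℝ, ∀ (c₀ : ℝ → S) (L₀ : ℝ), IsG r c₀ 0 1 L₀ → c₀ 0 = p → c₀ 1 = p →
      ∃ (c₁ : ℝ → S) (L₁ : ℝ), IsG r c₁ 0 1 L₁ ∧ c₁ 0 = p ∧ c₁ 1 = p ∧ L₁ ≤ L₀ + C ∧
        ∀ q₀ : Path p p, (∀ s : I, q₀ s = c₀ s) → ∃ q₁ : Path p p, (∀ s : I, q₁ s = c₁ s) ∧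
          Path.Homotopic.Quotient.mk q₁ =
            (Path.Homotopic.Quotient.mk q₀).trans (Path.Homotopic.Quotient.mk γ) := by
  have hr := h.pos
  set T : ℝ → S := fun t => γ.extend t with hTdef
  have hTc : Continuous T := γ.extend.continuous
  obtain ⟨N, hN, hsm⟩ : ∃ N : ℕ, 0 < N ∧ ∀ t t', |t - t'| ≤ 1 / (N:ℝ) →
      dist (T t) (T t') ≤ r / 32 := by
    have hu : UniformContinuous γ := CompactSpace.uniformContinuous_of_continuous γ.continuous
    obtain ⟨δ, hδ, H⟩ := Metric.uniformContinuous_iff.1 hu (r / 32) (by linarith)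
    obtain ⟨N, hN⟩ := exists_nat_one_div_lt hδ
    refine ⟨N + 1, by omega, fun t t' htt => (H ?_).le⟩
    have : dist (projIcc 0 1 (zero_le_one (α := ℝ)) t) (projIcc 0 1 (zero_le_one (α := ℝ)) t') ≤
        |t - t'| := by
      rw [Subtype.dist_eq, Real.dist_eq]
      exact abs_projIcc_sub_projIcc (zero_le_one (α := ℝ))
    push_cast at htt
    exact this.trans_lt (htt.trans_lt hN)
  have hNR : (0:ℝ) < N := by exact_mod_cast hN
  refine ⟨N * (r / 32), fun c₀ L₀ hc h0 h1 => ?_⟩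
  obtain ⟨c, L, hf, hc0, hL0⟩ := h.family (T := T) (one_div_pos.2 hNR) hsm hc
    (by rw [h1, hTdef]; simp)
  have hgrid : ∀ k : ℕ, L (k / N) ≤ L₀ + k * (r / 32) := by
    intro k
    induction k with
    | zero => simp [hL0]
    | succ k ih =>
      have hk : (0:ℝ) ≤ k / N := by positivity
      have hk' : (0:ℝ) ≤ (k + 1 : ℕ) / N := by positivity
      have hd : |((k:ℝ) / N) - ((k + 1 : ℕ) : ℝ) / N| ≤ 1 / N := by
        rw [← sub_div]; push_cast
        rw [show (k:ℝ) - (k + 1) = -1 by ring, neg_div, abs_neg, abs_of_pos (by positivity)]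
      have := IsG.length_le hr (hf.isG _ hk) (hf.isG _ hk')
        ((hf.zero _ hk).trans (hf.zero _ hk').symm)
        (D := r / 32) (fun s hs => (hf.close _ _ hk hk' hd s hs).trans
          (mul_le_mul_of_nonneg_left (hsm _ _ hd) hs.1))
      push_cast at this ⊢
      linarith
  have hone : c 1 1 = p := by rw [hf.one 1 zero_le_one, hTdef]; simp
  refine ⟨c 1, L 1, hf.isG 1 zero_le_one, by rw [hf.zero 1 zero_le_one, h0], hone, ?_, ?_⟩
  · have := hgrid N
    rwa [div_self hNR.ne'] at this
  intro q₀ hq₀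
  have hcont : Continuous (fun z : I × I => c z.1 z.2) := by
    rw [continuous_iff_continuousAt]
    rintro ⟨t₀, s₀⟩
    rw [ContinuousAt, tendsto_iff_dist_tendsto_zero]
    have hA : Continuous (fun z : I × I => dist (T z.1) (T t₀) + dist (c t₀ z.2) (c t₀ s₀)) := by
      refine Continuous.add (by fun_prop) ?_
      have hcc := continuousOn_iff_continuous_restrict.1
        ((hf.isG t₀ t₀.2.1).continuousOn hr)
      exact (hcc.comp continuous_snd).dist continuous_const
    have hA0 := hA.tendsto (t₀, s₀)
    simp only [dist_self, add_zero] at hA0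
    refine squeeze_zero' (Eventually.of_forall fun _ => dist_nonneg) ?_ hA0
    have hnear : ∀ᶠ z : I × I in 𝓝 (t₀, s₀), |(z.1 : ℝ) - t₀| < 1 / N := by
      have : Continuous (fun z : I × I => |(z.1 : ℝ) - t₀|) := by fun_prop
      have h2 := this.tendsto (t₀, s₀)
      simp only [sub_self, abs_zero] at h2
      exact h2.eventually_lt_const (by positivity)
    filter_upwards [hnear] with z hz
    refine (dist_triangle _ (c t₀ z.2) _).trans (add_le_add_left ?_ _)
    refine (hf.close _ _ z.1.2.1 t₀.2.1 hz.le _ z.2.2).trans ?_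
    exact mul_le_of_le_one_left dist_nonneg z.2.2.2
  let q₁ : Path p p := ⟨⟨fun s => c 1 s, hcont.comp (Continuous.prodMk_right (1:I))⟩,
    by simpa using (hf.zero 1 zero_le_one).trans h0, by simpa using hone⟩
  refine ⟨q₁, fun s => rfl, ?_⟩
  refine square_homotopic ⟨fun z : I × I => c z.1 z.2, hcont⟩ q₀ q₁ γ ?_ ?_ ?_ ?_
  · intro s; rw [hq₀]; exact hc0 s s.2
  · intro s; rfl
  · intro t
    change c t ((1:I):ℝ) = γ t
    rw [Icc.coe_one, hf.one t t.2.1, hTdef]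
    simp
  · intro t
    change c t ((0:I):ℝ) = p
    rw [Icc.coe_zero, hf.zero t t.2.1, h0]

end

/-! ### Free subgroups and the existence of a conical point -/

section

variable {S : Type} [MetricSpace S] {r : ℝ}

/-- The positive word `w` as an element of the free group. -/
def posWord (w : List Bool) : FreeGroup Bool := FreeGroup.mk (w.map fun b => (b, true))

lemma posWord_cons (b : Bool) (w : List Bool) :
    posWord (b :: w) = FreeGroup.of b * posWord w := by
  simp [posWord, FreeGroup.of, FreeGroup.mul_mk]

lemma posWord_injective : Function.Injective posWord := by
  have key : ∀ w : List Bool, FreeGroup.reduce (w.map fun b => (b, true)) =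
      w.map fun b => (b, true) := by
    intro w
    induction w with
    | nil => simp
    | cons b w ih =>
      rw [List.map_cons, FreeGroup.reduce.cons, ih]
      cases w <;> simp
  intro w w' hw
  have := congrArg FreeGroup.toWord hw
  rw [posWord, posWord, FreeGroup.toWord_mk, FreeGroup.toWord_mk, key, key] at this
  exact List.map_injective_iff.2 (fun a b hab => by simpa using hab) this

open unitInterval in
/-- The positive words of length `n` in two loops are represented by geodesic loops of length `O(n)`. -/
lemma LC.words [CompactSpace S] (h : LC S r) {p : S} (ι : FreeGroup Bool →* FundamentalGroup S p) :
    ∃ C : ℝ, ∀ w : List Bool, ∃ (c : ℝ → S) (L : ℝ), IsG r c 0 1 L ∧ c 0 = p ∧ c 1 = p ∧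
      L ≤ C * w.length ∧ ∃ q : Path p p, (∀ s : I, q s = c s) ∧
        Path.Homotopic.Quotient.mk q = (ι (posWord w)).toPath := by
  choose γ hγ using fun b : Bool => Path.Homotopic.Quotient.mk_surjective (ι (FreeGroup.of b)).toPath
  choose C hC using fun b : Bool => h.word_step (γ b)
  refine ⟨max (C true) (C false), fun w => ?_⟩
  induction w with
  | nil =>
    refine ⟨fun _ => p, 0, IsG.const h.pos p 0 1, rfl, rfl, by simp, Path.refl p, fun s => rfl, ?_⟩
    have : posWord [] = 1 := rfl
    rw [this, map_one]
    rfl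
  | cons b w ih =>
    obtain ⟨c, L, hc, h0, h1, hL, q, hq, hcl⟩ := ih
    obtain ⟨c', L', hc', h0', h1', hL', H⟩ := hC b c L hc h0 h1
    obtain ⟨q', hq', hcl'⟩ := H q hq
    refine ⟨c', L', hc', h0', h1', ?_, q', hq', ?_⟩
    · have : C b ≤ max (C true) (C false) := by
        cases b
        · exact le_max_right _ _
        · exact le_max_left _ _
      push_cast [List.length_cons]
      linarith
    · rw [hcl', hcl, hγ, posWord_cons, map_mul]
      rfl

lemma exists_pow_gt (K : ℕ) : ∃ n : ℕ, (2 * (K * n) + 1) ^ 2 < 2 ^ n := by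
  have h := tendsto_pow_const_div_const_pow_of_one_lt 2 (one_lt_two (α := ℝ))
  have hK : (0:ℝ) < 1 / (2 * K + 1) ^ 2 := by positivity
  obtain ⟨n, hn, hn1⟩ := ((h.eventually_lt_const hK).and (eventually_ge_atTop 1)).exists
  refine ⟨n, ?_⟩
  rw [div_lt_div_iff₀ (by positivity) (by positivity), one_mul] at hn
  have hn' : n ^ 2 * (2 * K + 1) ^ 2 < 2 ^ n := by exact_mod_cast hn
  refine lt_of_le_of_lt ?_ hn'
  rw [← mul_pow]
  exact Nat.pow_le_pow_left (by nlinarith) 2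

open unitInterval in
/-- A flat compact space has no free fundamental subgroup of rank two: short loops representing
the `2 ^ n` positive words of length `n` would have separated velocities in a disc of radius
`O(n)`. -/
lemma LC.not_flat [CompactSpace S] (h : LC S r) {p : S}
    (ι : FreeGroup Bool →* FundamentalGroup S p) (hι : Function.Injective ι) {ε : ℝ} (hε : 0 < ε)
    (hflat : FlatAt S ε) : False := by
  have hr := h.pos
  obtain ⟨C, hC⟩ := h.words ι
  choose c L hc h0 h1 hL q hq hcl using hC
  obtain ⟨f, hf⟩ := hflat p
  choose z hz e he hfe using fun w => exists_velocity hr hε hf (hc w) (h0 w)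
  obtain ⟨K, hK⟩ := exists_nat_ge (C / (ε / 8))
  rw [div_le_iff₀ (by positivity)] at hK
  obtain ⟨n, hn⟩ := exists_pow_gt K
  have hsep : ∀ w w', ‖z w - z w'‖ ≤ ε / 4 → w = w' := by
    intro w w' hzz
    have key : ∀ s ∈ Icc (0:ℝ) 1, s ≤ min (e w) (e w') →
        dist (c w s) (c w' s) = s * ‖z w - z w'‖ := by
      intro s hs hse
      obtain ⟨a1, a2⟩ := hfe w s hs (hse.trans (min_le_left _ _))
      obtain ⟨b1, b2⟩ := hfe w' s hs (hse.trans (min_le_right _ _))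
      rw [← hf _ a2 _ b2, a1, b1, dist_eq_norm, add_sub_add_left_eq_sub, ← smul_sub, norm_smul,
        Real.norm_eq_abs, abs_of_nonneg hs.1]
    have hall := flat_diverge hr hε hflat (hc w) (hc w') (lt_min (he w) (he w')) (norm_nonneg _)
      hzz key
    have hk := hall 1 (by simp)
    rw [h1, h1, dist_self, one_mul] at hk
    have hqq : q w = q w' := by
      ext s
      have := hall s s.2
      rw [← hk, mul_zero, dist_eq_zero] at this
      rw [hq, hq, this]
    have h2 := (hcl w).symm.trans ((congrArg Path.Homotopic.Quotient.mk hqq).trans (hcl w'))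
    exact posWord_injective (hι h2)
  let cell : (Fin n → Bool) → ℤ × ℤ := fun w =>
    (⌊z (List.ofFn w) 0 / (ε / 8)⌋, ⌊z (List.ofFn w) 1 / (ε / 8)⌋)
  have hinj : Function.Injective cell := by
    intro w w' hww
    refine List.ofFn_injective (hsep _ _ ?_)
    simp only [cell, Prod.mk.injEq] at hww
    have e0 := Int.abs_sub_lt_one_of_floor_eq_floor hww.1
    have e1 := Int.abs_sub_lt_one_of_floor_eq_floor hww.2
    rw [← sub_div, abs_div, abs_of_pos (show 0 < ε / 8 by positivity), div_lt_one (by positivity)]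
      at e0 e1
    rw [EuclideanSpace.norm_eq, Fin.sum_univ_two]
    refine Real.sqrt_le_iff.2 ⟨by positivity, ?_⟩
    simp only [PiLp.sub_apply, Real.norm_eq_abs]
    nlinarith [abs_nonneg ((z (List.ofFn w)).ofLp 0 - (z (List.ofFn w')).ofLp 0),
      abs_nonneg ((z (List.ofFn w)).ofLp 1 - (z (List.ofFn w')).ofLp 1)]
  have hbound : ∀ (w : Fin n → Bool) (i : Fin 2), |z (List.ofFn w) i / (ε / 8)| ≤ (K * n : ℕ) := by
    intro w i
    rw [abs_div, abs_of_pos (show 0 < ε / 8 by positivity), div_le_iff₀ (by positivity)]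
    have a1 : |z (List.ofFn w) i| ≤ ‖z (List.ofFn w)‖ := by
      simpa using PiLp.norm_apply_le (z (List.ofFn w)) i
    have a2 := hL (List.ofFn (n := n) w)
    rw [List.length_ofFn] at a2
    rw [hz] at a1
    push_cast
    nlinarith [mul_le_mul_of_nonneg_right hK (Nat.cast_nonneg (α := ℝ) n)]
  have hfl : ∀ y : ℝ, |y| ≤ (K * n : ℕ) → ⌊y⌋ ∈ Finset.Icc (-(K * n : ℕ) : ℤ) (K * n : ℕ) := by
    intro y hy
    rw [abs_le] at hy
    rw [Finset.mem_Icc, Int.le_floor]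
    refine ⟨by push_cast at hy ⊢; exact hy.1, ?_⟩
    exact Int.floor_le_iff.2 (by push_cast at hy ⊢; linarith [hy.2])
  have hcard := Finset.card_le_card_of_injOn (s := Finset.univ)
    (t := Finset.Icc (-(K * n : ℕ) : ℤ) (K * n : ℕ) ×ˢ Finset.Icc (-(K * n : ℕ) : ℤ) (K * n : ℕ)) cell
    (fun w _ => by
      rw [Finset.mem_coe, Finset.mem_product]
      exact ⟨hfl _ (hbound w 0), hfl _ (hbound w 1)⟩) hinj.injOn
  rw [Finset.card_product, Int.card_Icc, Finset.card_univ, Fintype.card_fun, Fintype.card_bool,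
    Fintype.card_fin] at hcard
  have e3 : ((K * n : ℕ) + 1 - -(K * n : ℕ) : ℤ).toNat = 2 * (K * n) + 1 := by omega
  rw [e3, ← sq] at hcard
  omega

/-- Without conical points `S` would be flat, which a free subgroup of rank two in the fundamental
group excludes. -/
lemma ESCS.conical_nonempty (hS : ESCS S) : hS.conical.Nonempty := by
  haveI := hS.compact
  by_contra hne
  rw [Finset.not_nonempty_iff_eq_empty] at hne
  obtain ⟨r, h⟩ := hS.exists_LC
  obtain ⟨p, ι, hι⟩ := hS.genus_ge_two
  choose! ε hε f hf using fun x => hS.euclidean_at x (by simp [hne])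
  obtain ⟨δ, hδ, H⟩ := lebesgue_number_lemma_of_metric (s := (univ : Set S))
    (c := fun x => ball x (ε x)) isCompact_univ (fun _ => isOpen_ball)
    (fun x _ => mem_iUnion.2 ⟨x, mem_ball_self (hε x)⟩)
  refine h.not_flat ι hι hδ fun x => ?_
  obtain ⟨i, hi⟩ := H x (mem_univ x)
  exact ⟨f i, fun y hy z hz => (hf i).1 y (hi hy) z (hi hz)⟩

end

/-! ### Geodesic loops at a conical point -/

section

variable {S : Type} [MetricSpace S] {r : ℝ}
variable {v : S} {θ ε ρ : ℝ} {P : ℝ → ℝ → S}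

/-- A fixed conical point `v` with its polar chart, in a locally convex surface, together with
a radius `ρ` small compared with both scales. -/
structure Setup (S : Type) [MetricSpace S] (r : ℝ) (v : S) (θ ε : ℝ) (P : ℝ → ℝ → S) (ρ : ℝ) :
    Prop where
  lc : LC S r
  ch : ConeChart v θ ε P
  pos : 0 < ρ
  ρε : ρ < ε / 4
  ρr : ρ < r / 64

/-- A geodesic loop at the conical point: a unit speed geodesic `g` on `[0, len]`, leaving the
conical point in direction `sd`, with `ed` the direction of the reversed loop. -/
structure Lp (S : Type) [MetricSpace S] (r : ℝ) (P : ℝ → ℝ → S) (ρ : ℝ) where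
  g : ℝ → S
  len : ℝ
  sd : ℝ
  ed : ℝ
  big : 4 * ρ < len
  isG : IsG r g 0 len 1
  sdir : ∀ u ∈ Icc 0 ρ, g u = P sd u
  edir : ∀ u ∈ Icc 0 ρ, g (len - u) = P ed u

/-- A geodesic issuing from the conical point is radial, hence has a direction. -/
lemma Setup.direction (hs : Setup S r v θ ε P ρ) {g : ℝ → S} (hg : IsG r g 0 ρ 1) (h0 : g 0 = v) :
    ∃ a, ∀ u ∈ Icc 0 ρ, g u = P a u := by
  have h1 := hs.pos; have h2 := hs.ρε; have h3 := hs.ρr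
  have hd : dist (g ρ) v = ρ := by
    rw [← h0, hg.2 ρ ⟨h1.le, le_rfl⟩ 0 ⟨le_rfl, h1.le⟩ (by
      rw [sub_zero, abs_of_pos h1]; linarith), sub_zero, abs_of_pos h1, one_mul]
  obtain ⟨a, ha⟩ := hs.ch.surj (g ρ) (by rw [mem_ball, hd]; linarith)
  rw [hd] at ha
  refine ⟨a, hs.lc.eq_of_ends hg (L' := 1) ⟨zero_le_one, fun s hs' t ht _ => ?_⟩ ?_ ?_ ha.symm⟩
  · rw [one_mul]
    exact hs.ch.dist_radial hs'.1 (by linarith [hs'.2]) ht.1 (by linarith [ht.2])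
  · intro s hs'
    have e1 := hg.lipschitz hs.lc.pos s hs' 0 ⟨le_rfl, h1.le⟩
    rw [h0, sub_zero, abs_of_nonneg hs'.1] at e1
    have e2 := hs.ch.dist_v (a := a) hs'.1 (by linarith [hs'.2])
    have := dist_triangle_right (g s) (P a s) v
    linarith [hs'.2]
  · rw [h0, hs.ch.zero]

/-- A geodesic of positive length from `v` to `v` is a loop in the sense of `Lp`; it cannot be short,
because short geodesics are minimising. -/
lemma Setup.mkLp (hs : Setup S r v θ ε P ρ) {g : ℝ → S} {len : ℝ} (hg : IsG r g 0 len 1)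
    (hl : 0 < len) (h0 : g 0 = v) (h1 : g len = v) : ∃ A : Lp S r P ρ, A.g = g ∧ A.len = len := by
  have p1 := hs.pos; have p2 := hs.ρε; have p3 := hs.ρr
  have hbig : 4 * ρ < len := by
    by_contra hlt
    push Not at hlt
    have := hg.2 0 ⟨le_rfl, hl.le⟩ len ⟨hl.le, le_rfl⟩ (by
      rw [zero_sub, abs_neg, abs_of_pos hl]; linarith)
    rw [h0, h1, dist_self, zero_sub, abs_neg, abs_of_pos hl] at this
    linarith
  obtain ⟨a, ha⟩ := hs.direction (hg.mono le_rfl (by linarith)) h0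
  have hrev := hg.rev len
  rw [sub_self, sub_zero] at hrev
  obtain ⟨b, hb⟩ := hs.direction (hrev.mono le_rfl (by linarith)) (by simpa using h1)
  refine ⟨⟨g, len, a, b, hbig, hg, ha, fun u hu => ?_⟩, rfl, rfl⟩
  rw [← hb u hu]; congr 1; ring

lemma Setup.g_zero (hs : Setup S r v θ ε P ρ) (A : Lp S r P ρ) : A.g 0 = v := by
  rw [A.sdir 0 ⟨le_rfl, hs.pos.le⟩, hs.ch.zero]

lemma Setup.g_len (hs : Setup S r v θ ε P ρ) (A : Lp S r P ρ) : A.g A.len = v := by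
  have := A.edir 0 ⟨le_rfl, hs.pos.le⟩
  rwa [sub_zero, hs.ch.zero] at this

/-- The reversed loop. -/
def Lp.rev (A : Lp S r P ρ) : Lp S r P ρ where
  g := fun t => A.g (-t + A.len)
  len := A.len
  sd := A.ed
  ed := A.sd
  big := A.big
  isG := by simpa using A.isG.rev A.len
  sdir := fun u hu => by rw [← A.edir u hu]; congr 1; ring
  edir := fun u hu => by rw [← A.sdir u hu]; congr 1; ring

/-- `A` may be followed by `B`: they meet at angle at least `π`, so that the concatenation is a
geodesic. The angle on the other side, measured around the cone, need not be mentioned because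
`angDist` is the smaller of the two. -/
def Lp.To (θ : ℝ) (A B : Lp S r P ρ) : Prop := Real.pi ≤ angDist θ A.ed B.sd

/-- Concatenation of loops meeting at angle at least `π`. -/
lemma Setup.comp (hs : Setup S r v θ ε P ρ) (A B : Lp S r P ρ) (h : A.To θ B) :
    ∃ C : Lp S r P ρ, C.len = A.len + B.len ∧ C.sd = A.sd ∧ C.ed = B.ed ∧
      (∀ t ≤ A.len, C.g t = A.g t) ∧ ∀ t ≥ A.len, C.g t = B.g (t - A.len) := by
  have p1 := hs.pos; have p2 := hs.ρε; have p3 := hs.ρr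
  have bA := A.big; have bB := B.big
  set g : ℝ → S := fun t => if t ≤ A.len then A.g t else B.g (t - A.len) with hg
  have e1 : ∀ t ≤ A.len, g t = A.g t := fun t ht => by simp only [hg]; rw [if_pos ht]
  have e2 : ∀ t ≥ A.len, g t = B.g (t - A.len) := fun t ht => by
    rcases ht.eq_or_lt with rfl | ht
    · rw [e1 _ le_rfl, sub_self, hs.g_zero B, hs.g_len A]
    · simp only [hg]; rw [if_neg (not_le.2 ht)]
  have hG : IsG r g 0 (A.len + B.len) 1 := by
    refine hs.lc.glue p1 (b := A.len) (by linarith) (by linarith) ?_ ?_ ?_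
    · exact A.isG.congr fun t ht => e1 t ht.2
    · have := B.isG.shift (-A.len)
      simp only [sub_neg_eq_add, zero_add] at this
      rw [add_comm B.len] at this
      exact this.congr (g' := g) fun t ht => by rw [e2 t ht.1]; rfl
    · rw [e1 _ (by linarith), e2 _ (by linarith), A.edir ρ ⟨p1.le, le_rfl⟩, add_sub_cancel_left,
        B.sdir ρ ⟨p1.le, le_rfl⟩, hs.ch.dist_through p1.le (by linarith) p1.le (by linarith) h]
      ring
  refine ⟨⟨g, A.len + B.len, A.sd, B.ed, by linarith, hG, fun u hu => ?_, fun u hu => ?_⟩,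
    rfl, rfl, rfl, e1, e2⟩
  · rw [e1 u (by linarith [hu.2]), A.sdir u hu]
  · rw [e2 _ (by linarith [hu.2]), ← B.edir u hu]; congr 1; ring

/-- Directions are close when the corresponding points at radius `ρ` are. -/
lemma Setup.near (hs : Setup S r v θ ε P ρ) {η : ℝ} (hη : 0 < η) :
    ∃ ζ > 0, ∀ a b, dist (P a ρ) (P b ρ) < ζ → angDist θ a b < η := by
  have p1 := hs.pos; have p2 := hs.ρε
  have hc : tcos (min η Real.pi) < 1 := by
    rw [tcos_of_le (min_le_right _ _), ← Real.cos_zero]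
    exact Real.cos_lt_cos_of_nonneg_of_le_pi le_rfl (min_le_right _ _) (lt_min hη Real.pi_pos)
  have hpos : 0 < 2 * ρ ^ 2 * (1 - tcos (min η Real.pi)) := by
    have : 0 < 1 - tcos (min η Real.pi) := by linarith
    positivity
  refine ⟨Real.sqrt (2 * ρ ^ 2 * (1 - tcos (min η Real.pi))), Real.sqrt_pos.2 hpos,
    fun a b hab => ?_⟩
  by_contra hlt
  push Not at hlt
  have h1 := tcos_anti (le_min hη.le Real.pi_pos.le) ((min_le_left η Real.pi).trans hlt)
  have h2 := hs.ch.law a b ρ ρ p1.le (by linarith) p1.le (by linarith)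
  have h3 := (Real.lt_sqrt dist_nonneg).1 hab
  have h4 : 0 < ρ ^ 2 := by positivity
  nlinarith

lemma Setup.dist_le (hs : Setup S r v θ ε P ρ) (A B : Lp S r P ρ) {η : ℝ}
    (h : dist (A.g ρ) (B.g ρ) < η) : dist (P A.sd ρ) (P B.sd ρ) < η := by
  rwa [← A.sdir ρ ⟨hs.pos.le, le_rfl⟩, ← B.sdir ρ ⟨hs.pos.le, le_rfl⟩]

variable [CompactSpace S] [ConnectedSpace S]

/-- Long loops with an almost prescribed initial segment. -/
lemma Setup.shoot_of (hs : Setup S r v θ ε P ρ) {g : ℝ → S} {l : ℝ} (hl : 0 < l)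
    (hg : IsG r g 0 l 1) {ζ D : ℝ} (hζ : 0 < ζ) :
    ∃ (g' : ℝ → S) (l' : ℝ), IsG r g' 0 l' 1 ∧ D ≤ l' ∧ l ≤ l' ∧ g' 0 = g 0 ∧ g' l' = v ∧
      ∀ t ∈ Icc 0 l, dist (g t) (g' t) < ζ := by
  have hr := hs.lc.pos
  obtain ⟨D₀, hD₀, H⟩ := hs.lc.steer v
  obtain ⟨g₁, e₁, hg₁⟩ := hs.lc.extend_ray hl hg
  set R := max D l + D₀ + 4 * D₀ * l / ζ + 1 with hR
  have hq : 0 < 4 * D₀ * l / ζ := by positivity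
  have hRl : l < R := by have := le_max_right D l; linarith
  have hR0 : 0 < R := by linarith
  have hc := (hg₁ 0 R hg).scaled hR0.le
  obtain ⟨c', L', hc', h0, h1, hd⟩ := H _ _ hc
  have hL := hc'.length_le hr hc h0 (fun s hs' => by rw [dist_comm]; exact hd s hs')
  have hmx : max D l + 4 * D₀ * l / ζ + 1 ≤ L' := by linarith
  have hlL : l ≤ L' := by have := le_max_right D l; linarith
  have hL' : 0 < L' := by linarith
  refine ⟨fun t => c' (t / L'), L', hc'.unit hL', by have := le_max_left D l; linarith, hlL, ?_,
    by simp only [div_self hL'.ne', h1], fun t ht => ?_⟩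
  · simp only [zero_div]; rw [h0, mul_zero, e₁ 0 hl.le]
  · have := IsG.unit_close hr hc hc' h0.symm hd hR0 hL' ht.1 (ht.2.trans hRl.le) (ht.2.trans hlL)
    rw [mul_div_cancel₀ _ hR0.ne', e₁ t ht.2] at this
    refine this.trans_lt ?_
    rw [div_lt_iff₀ hL']
    have h2 : 2 * D₀ * t ≤ 2 * D₀ * l := by
      have := ht.2; gcongr
    have h3 : 4 * D₀ * l / ζ < L' := by
      have : l ≤ max D l := le_max_right D l
      linarith
    rw [div_lt_iff₀ hζ] at h3
    have : 0 < D₀ * l := by positivity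
    linarith

/-- Long loops with almost prescribed initial point at radius `ρ`. -/
lemma Setup.shoot (hs : Setup S r v θ ε P ρ) (φ : ℝ) {ζ : ℝ} (hζ : 0 < ζ) (D : ℝ) :
    ∃ A : Lp S r P ρ, dist (P φ ρ) (A.g ρ) < ζ ∧ D ≤ A.len := by
  have p1 := hs.pos; have p2 := hs.ρε; have p3 := hs.ρr
  have hg : IsG r (P φ) 0 ρ 1 := ⟨zero_le_one, fun s hs' t ht _ => by
    rw [one_mul]
    exact hs.ch.dist_radial hs'.1 (by linarith [hs'.2]) ht.1 (by linarith [ht.2])⟩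
  obtain ⟨g', l', hg', hD, hl, h0, h1, hd⟩ := hs.shoot_of p1 hg (D := D) hζ
  obtain ⟨A, hA, hAl⟩ := hs.mkLp hg' (by linarith) (h0.trans (hs.ch.zero φ)) h1
  exact ⟨A, by rw [hA]; exact hd ρ ⟨p1.le, le_rfl⟩, by rwa [hAl]⟩

/-- Long loops with almost prescribed initial direction. -/
lemma Setup.shoot' (hs : Setup S r v θ ε P ρ) (φ : ℝ) {η : ℝ} (hη : 0 < η) (D : ℝ) :
    ∃ A : Lp S r P ρ, angDist θ φ A.sd < η ∧ D ≤ A.len := by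
  obtain ⟨ζ, hζ, H⟩ := hs.near hη
  obtain ⟨A, hA, hD⟩ := hs.shoot φ hζ D
  refine ⟨A, H _ _ ?_, hD⟩
  rwa [← A.sdir ρ ⟨hs.pos.le, le_rfl⟩]

/-- Every geodesic segment is shadowed by a piece of a geodesic loop at the conical point. -/
lemma Setup.approx (hs : Setup S r v θ ε P ρ) {g : ℝ → S} {T ζ : ℝ} (hT : 0 < T)
    (hg : IsG r g (-T) T 1) (hζ : 0 < ζ) :
    ∃ (A : Lp S r P ρ) (τ : ℝ), T ≤ τ ∧ τ + T ≤ A.len ∧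
      ∀ u ∈ Icc (-T) T, dist (A.g (τ + u)) (g u) < ζ := by
  have h1 := hg.shift (-T)
  simp only [sub_neg_eq_add, neg_add_cancel] at h1
  obtain ⟨g₁, l₁, hg₁, -, hl₁, -, hv₁, hd₁⟩ := hs.shoot_of (D := 0) (by linarith) h1 (half_pos hζ)
  have hl₁0 : 0 < l₁ := by linarith
  have h2 := hg₁.rev l₁
  simp only [sub_self, sub_zero] at h2
  obtain ⟨g₂, l₂, hg₂, -, hl₂, h20, hv₂, hd₂⟩ := hs.shoot_of (D := 0) hl₁0 h2 (half_pos hζ)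
  obtain ⟨A, hA, hAl⟩ := hs.mkLp hg₂ (by linarith) (h20.trans (by simpa using hv₁)) hv₂
  refine ⟨A.rev, l₂ - l₁ + T, by linarith, by simp only [Lp.rev, hAl]; linarith, fun u hu => ?_⟩
  simp only [Lp.rev, hA, hAl]
  have a1 := hd₂ (l₁ - T - u) ⟨by linarith [hu.2], by linarith [hu.1]⟩
  have a2 := hd₁ (u + T) ⟨by linarith [hu.1], by linarith [hu.2]⟩
  rw [show -(l₁ - T - u) + l₁ = u + T by ring] at a1
  rw [show u + T + -T = u by ring] at a2
  rw [show -(l₂ - l₁ + T + u) + l₂ = l₁ - T - u by ring]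
  rw [dist_comm] at a1 a2
  exact (dist_triangle _ _ _).trans_lt (by linarith)

end

/-! ### Families shortening at unit rate -/

section

variable {S : Type} [MetricSpace S] {r : ℝ} [CompactSpace S]

/-- If moving the endpoint by `t` shortens the geodesic by `t`, then the new geodesic is an initial
piece of the old one. -/
lemma LC.shorten_step (h : LC S r) {c c' : ℝ → S} {L L' t : ℝ} (hc : IsG r c 0 1 L)
    (hc' : IsG r c' 0 1 L') (h0 : c 0 = c' 0) (ht : 0 ≤ t) (htr : t ≤ r / 128) (htL : t < L)
    (hd : ∀ s ∈ Icc (0:ℝ) 1, dist (c s) (c' s) ≤ s * t) (hL : L' = L - t) :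
    ∀ s ∈ Icc (0:ℝ) 1, c' s = c (L' / L * s) := by
  have hr := h.pos
  have hL0 : 0 < L := by linarith
  have hk : L' / L ∈ Icc (0:ℝ) 1 :=
    ⟨div_nonneg (by linarith) hL0.le, (div_le_one hL0).2 (by linarith)⟩
  have hmem : ∀ s ∈ Icc (0:ℝ) 1, L' / L * s ∈ Icc (0:ℝ) 1 := fun s hs =>
    ⟨mul_nonneg hk.1 hs.1, mul_le_one₀ hk.2 hs.1 hs.2⟩
  have m1 : (1:ℝ) ∈ Icc (0:ℝ) 1 := by simp
  have m0 : (0:ℝ) ∈ Icc (0:ℝ) 1 := by simp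
  have hcq : IsG r (fun s => c (L' / L * s)) 0 1 L' := by
    have := hc.affine (a' := 0) (b' := 1) (L' / L) 0 (fun s hs => by simpa using hmem s hs)
    simp only [add_zero, abs_of_nonneg hk.1] at this
    rwa [mul_div_cancel₀ _ hL0.ne'] at this
  have hqc : ∀ s ∈ Icc (0:ℝ) 1, dist (c (L' / L * s)) (c s) ≤ t := fun s hs => by
    refine (hc.lipschitz hr _ (hmem s hs) s hs).trans ?_
    have : L' / L * s - s = -(t * s / L) := by rw [hL]; field_simp; ring
    rw [this, abs_neg, abs_of_nonneg (by have := hs.1; positivity), mul_div_cancel₀ _ hL0.ne']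
    exact mul_le_of_le_one_right ht hs.2
  have hcc : ∀ s ∈ Icc (0:ℝ) 1, dist (c s) (c' s) ≤ t := fun s hs =>
    (hd s hs).trans (mul_le_of_le_one_left ht hs.2)
  have hends : c' 1 = c (L' / L * 1) := by
    by_contra hne
    set q := c (L' / L * 1) with hq
    set y := c' 1 with hy
    have hd0 : 0 < dist q y := dist_pos.2 (Ne.symm hne)
    set d := dist q y with hdd
    have hqz : dist q (c 1) ≤ t := hqc 1 m1
    have hzy : dist (c 1) y ≤ t := hcc 1 m1
    have hdt : d ≤ 2 * t := (dist_triangle q (c 1) y).trans (by linarith)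
    obtain ⟨σ, σ0, σ1, hσ⟩ := h.geo q y (by linarith)
    set T : ℝ → S := fun u => σ (projIcc 0 1 (zero_le_one (α := ℝ)) (u / d)) with hT
    have hTl : ∀ u u', dist (T u) (T u') ≤ 1 * |u - u'| := fun u u' => by
      rw [hT, hσ _ (Subtype.coe_prop _) _ (Subtype.coe_prop _), one_mul]
      have := abs_projIcc_sub_projIcc (zero_le_one (α := ℝ)) (c := u / d) (d := u' / d)
      rw [← sub_div, abs_div, abs_of_pos hd0, le_div_iff₀ hd0] at this
      exact this
    have hTe : ∀ u ∈ Icc 0 d, T u = σ (u / d) := fun u hu => by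
      simp only [hT]
      rw [projIcc_of_mem (zero_le_one (α := ℝ))
        (⟨div_nonneg hu.1 hd0.le, (div_le_one hd0).2 hu.2⟩ : u / d ∈ Icc (0:ℝ) 1)]
    have hTG : IsG r T 0 d 1 := ⟨zero_le_one, fun u hu u' hu' _ => by
      rw [hTe u hu, hTe u' hu', hσ _ ⟨div_nonneg hu.1 hd0.le, (div_le_one hd0).2 hu.2⟩ _
        ⟨div_nonneg hu'.1 hd0.le, (div_le_one hd0).2 hu'.2⟩, ← sub_div, abs_div, abs_of_pos hd0,
        div_mul_cancel₀ _ hd0.ne', one_mul]⟩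
    have hT0 : T 0 = q := by rw [hTe 0 ⟨le_rfl, hd0.le⟩, zero_div, σ0]
    have hTd : T d = y := by rw [hTe d ⟨hd0.le, le_rfl⟩, div_self hd0.ne', σ1]
    obtain ⟨C, Λ, hf, hC0, hΛ0⟩ := h.family (T := T) (δ := r / 32) (by linarith)
      (fun u u' huu => (hTl u u').trans (by linarith)) hcq (by rw [hT0])
    have hlip := (hf.lip hr hTl).1
    have hconv := h.fam_convex hf hTl le_rfl hTG
    have hCq : ∀ u ∈ Icc 0 d, ∀ s ∈ Icc (0:ℝ) 1, dist (C u s) (c s) ≤ 3 * t := fun u hu s hs => by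
      have a1 := hlip u 0 hu.1 le_rfl s hs
      rw [hC0 s hs, sub_zero, abs_of_nonneg hu.1, mul_one] at a1
      have a2 := hqc s hs
      have a3 : s * u ≤ u := mul_le_of_le_one_left hu.1 hs.2
      have := dist_triangle (C u s) (c (L' / L * s)) (c s)
      linarith [hu.2]
    have hΛd : Λ d = L' := by
      refine (hf.isG d hd0.le).speed_unique hr hc' one_pos (h.eq_of_ends (hf.isG d hd0.le) hc' ?_ ?_ ?_)
      · intro s hs
        have := dist_triangle (C d s) (c s) (c' s)
        linarith [hCq d ⟨hd0.le, le_rfl⟩ s hs, hcc s hs]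
      · rw [hf.zero d hd0.le, mul_zero, h0]
      · rw [hf.one d hd0.le, hTd]
    have hmid : Λ (d / 2) ≤ L' := by
      have := hconv.2 (⟨le_rfl, hd0.le⟩ : (0:ℝ) ∈ Icc 0 d) (⟨hd0.le, le_rfl⟩ : d ∈ Icc 0 d)
        (by norm_num : (0:ℝ) ≤ 1 / 2) (by norm_num : (0:ℝ) ≤ 1 / 2) (by norm_num)
      simp only [smul_eq_mul, mul_zero, zero_add, hΛ0, hΛd] at this
      rw [show d / 2 = 1 / 2 * d by ring]; linarith
    have hmd : d / 2 ∈ Icc 0 d := ⟨by linarith, by linarith⟩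
    have hlen : L ≤ Λ (d / 2) + dist (T (d / 2)) (c 1) := by
      have hCx : C (d / 2) 0 = c 0 := by rw [hf.zero _ hmd.1, mul_zero]
      refine (hf.isG _ hmd.1).length_le hr hc hCx fun s hs => ?_
      have := h.convex_le (hf.isG _ hmd.1) hc (fun s hs => by linarith [hCq _ hmd s hs]) s hs
      rw [hCx, dist_self, mul_zero, zero_add, hf.one _ hmd.1] at this
      exact this
    have e1 : dist q (T (d / 2)) = d / 2 := by
      rw [← hT0, hTG.2 0 ⟨le_rfl, hd0.le⟩ _ hmd (by
        rw [zero_sub, abs_neg, abs_of_pos (by linarith)]; linarith), zero_sub, abs_neg,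
        abs_of_pos (by linarith), one_mul]
    have e2 : dist (T (d / 2)) y = d / 2 := by
      rw [← hTd, hTG.2 _ hmd d ⟨hd0.le, le_rfl⟩ (by
        rw [abs_sub_comm, abs_of_pos (by linarith)]; linarith), abs_sub_comm,
        abs_of_pos (by linarith)]; ring
    have hCN := h.cn (c 1) q y (T (d / 2)) (by linarith) (by rw [dist_comm]; linarith) e1 e2
    unfold CN at hCN
    rw [dist_comm (c 1) q, dist_comm (c 1) (T (d / 2))] at hCN
    have b1 : t ≤ dist (T (d / 2)) (c 1) := by linarith
    nlinarith [dist_nonneg (x := q) (y := c 1), dist_nonneg (x := c 1) (y := y)]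
  refine h.eq_of_ends hc' hcq (fun s hs => ?_) (by rw [mul_zero, h0]) hends
  have := dist_triangle (c' s) (c s) (c (L' / L * s))
  rw [dist_comm (c' s) (c s), dist_comm (c s) (c (L' / L * s))] at this
  linarith [hqc s hs, hcc s hs]

/-- If the family shortens at unit rate, then it retraces the original geodesic. -/
lemma LC.backtrack (h : LC S r) {T : ℝ → S} {δ ℓ : ℝ} {x : S} {c : ℝ → ℝ → S}
    {L : ℝ → ℝ} (hf : IsFam r T δ x c L) (hT : ∀ t t', dist (T t) (T t') ≤ 1 * |t - t'|)
    (hℓ : ℓ < L 0) (hL : L ℓ = L 0 - ℓ) : ∀ t ∈ Icc 0 ℓ, T t = c 0 ((L 0 - t) / L 0) := by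
  have hr := h.pos
  intro t ht
  have hL0 : 0 < L 0 := by linarith [ht.1, ht.2]
  obtain ⟨hl1, hl2⟩ := hf.lip hr hT
  have hLt : ∀ u ∈ Icc 0 ℓ, L u = L 0 - u := fun u hu => by
    have a1 := hl2 u 0 hu.1 le_rfl
    have a2 := hl2 u ℓ hu.1 (hu.1.trans hu.2)
    rw [sub_zero, abs_of_nonneg hu.1, abs_le] at a1
    have e : |u - ℓ| = ℓ - u := by rw [abs_sub_comm, abs_of_nonneg (by linarith [hu.2])]
    rw [e, abs_le] at a2
    linarith [a1.1, a2.2]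
  obtain ⟨n, hn⟩ := exists_nat_gt (t / (r / 128))
  have hn0 : (0:ℝ) < n := lt_of_le_of_lt (div_nonneg ht.1 (by linarith)) hn
  rw [div_lt_iff₀ (by linarith)] at hn
  have hq : 0 ≤ t / n := div_nonneg ht.1 hn0.le
  have hqr : t / n ≤ r / 128 := by rw [div_le_iff₀ hn0]; linarith
  have key : ∀ k : ℕ, k ≤ n → ∀ s ∈ Icc (0:ℝ) 1,
      c (k * (t / n)) s = c 0 (L (k * (t / n)) / L 0 * s) := by
    intro k
    induction k with
    | zero => intro _ s _; simp [div_self hL0.ne']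
    | succ k ih =>
      intro hk s hs
      have hkn : ((k + 1 : ℕ) : ℝ) * (t / n) ≤ t := by
        rw [← mul_div_assoc, div_le_iff₀ hn0, mul_comm]
        exact mul_le_mul_of_nonneg_left (by exact_mod_cast hk) ht.1
      push_cast at hkn ⊢
      have hk0 : 0 ≤ (k:ℝ) * (t / n) := by positivity
      have hk1 : 0 ≤ ((k:ℝ) + 1) * (t / n) := by positivity
      have mk : (k:ℝ) * (t / n) ∈ Icc 0 ℓ := ⟨hk0, by linarith [ht.2]⟩
      have mk1 : ((k:ℝ) + 1) * (t / n) ∈ Icc 0 ℓ := ⟨hk1, hkn.trans ht.2⟩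
      have hst := h.shorten_step (hf.isG _ hk0) (hf.isG _ hk1)
        ((hf.zero _ hk0).trans (hf.zero _ hk1).symm) hq hqr
        (by rw [hLt _ mk]; linarith [mk1.2]) (fun s hs => by
          have := hl1 _ _ hk0 hk1 s hs
          rwa [show (k:ℝ) * (t / n) - (k + 1) * (t / n) = -(t / n) by ring, abs_neg,
            abs_of_nonneg hq, mul_one] at this)
        (by rw [hLt _ mk, hLt _ mk1]; ring) s hs
      have hpos : 0 < L (k * (t / n)) := by rw [hLt _ mk]; linarith [mk1.2]
      have hpos1 : 0 < L ((k + 1) * (t / n)) := by rw [hLt _ mk1]; linarith [mk1.2]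
      rw [hst, ih (by omega)]
      · congr 1
        generalize L (k * (t / n)) = x at hpos
        generalize L ((k + 1) * (t / n)) = y at hpos1
        field_simp
      · refine ⟨mul_nonneg (div_pos hpos1 hpos).le hs.1, mul_le_one₀ ?_ hs.1 hs.2⟩
        rw [div_le_one hpos, hLt _ mk, hLt _ mk1]
        linarith
  have := key n le_rfl 1 (by simp)
  rw [mul_div_cancel₀ _ hn0.ne', hf.one t ht.1, hLt t ht, mul_one] at this
  exact this

end

/-! ### Turning a loop along another loop -/

section

variable {S : Type} [MetricSpace S] {r : ℝ}
variable {v : S} {θ ε ρ : ℝ} {P : ℝ → ℝ → S}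

/-- A lower bound on the initial slope of a convex function bounds it from below everywhere. -/
lemma slope_bound {L : ℝ → ℝ} {ℓ κ : ℝ} (hℓ : 0 < ℓ) (hL : ConvexOn ℝ (Icc 0 ℓ) L)
    (h : ∀ η > 0, ∃ u₀ > 0, ∀ u, 0 < u → u < u₀ → L 0 - u * (κ + η) ≤ L u) :
    L 0 - ℓ * κ ≤ L ℓ := by
  refine le_of_forall_pos_le_add fun η hη => ?_
  obtain ⟨u₀, hu₀, H⟩ := h (η / ℓ) (by positivity)
  set u := min (u₀ / 2) ℓ with hu
  have u1 : 0 < u := lt_min (by linarith) hℓ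
  have u2 : u < u₀ := (min_le_left _ _).trans_lt (by linarith)
  have u3 : u ≤ ℓ := min_le_right _ _
  have a1 := H u u1 u2
  have hq : u / ℓ ≤ 1 := (div_le_one hℓ).2 u3
  have a2 := hL.2 (⟨le_rfl, hℓ.le⟩ : (0:ℝ) ∈ Icc 0 ℓ) (⟨hℓ.le, le_rfl⟩ : ℓ ∈ Icc 0 ℓ)
    (by linarith : (0:ℝ) ≤ 1 - u / ℓ) (by positivity : (0:ℝ) ≤ u / ℓ) (by ring)
  simp only [smul_eq_mul, mul_zero, zero_add, div_mul_cancel₀ _ hℓ.ne'] at a2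
  have a3 : -(u * (κ + η / ℓ)) ≤ u / ℓ * (L ℓ - L 0) := by linarith
  have a4 : u / ℓ * (-(ℓ * κ + η)) ≤ u / ℓ * (L ℓ - L 0) := by
    refine le_trans (le_of_eq ?_) a3
    field_simp
  have := le_of_mul_le_mul_left a4 (by positivity)
  linarith

variable [CompactSpace S]

/-- Dragging the endpoint of the loop `c` along the loop `N` produces a geodesic loop `c'`, homotopic
to the concatenation of `c` and `N`. For a long loop `c` the initial direction hardly changes. The
length is convex along the way, and its initial and final slopes are given by the first variation
formula; it drops by the full length of `N` only if `c` ends with the reverse of `N`. -/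
lemma Setup.turn (hs : Setup S r v θ ε P ρ) (c N : Lp S r P ρ) (hN : N.len < c.len) :
    ∃ c' : Lp S r P ρ, dist (c.g ρ) (c'.g ρ) ≤ 2 * N.len * ρ / c'.len ∧
      |c'.len - c.len| ≤ N.len ∧
      c.len - N.len * tcos (angDist θ c.ed N.sd) ≤ c'.len ∧
      c'.len ≤ c.len + N.len * tcos (angDist θ c'.ed N.ed) ∧
      (angDist θ c.ed N.sd < Real.pi → c'.len < c.len + N.len) ∧
      (c'.len = c.len - N.len → ∀ t ∈ Icc 0 N.len, c.g (c.len - t) = N.g t) := by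
  have hr := hs.lc.pos
  have p1 := hs.pos; have p2 := hs.ρε; have p3 := hs.ρr
  have bc := c.big; have bN := N.big
  have hℓ : 0 < N.len := by linarith
  have hc0 : 0 < c.len := by linarith
  obtain ⟨T, hTN, hTG⟩ := hs.lc.extend_line hℓ N.isG
  have hTl : ∀ t t', dist (T t) (T t') ≤ 1 * |t - t'| := fun t t' =>
    (hTG (min t t') (max t t')).lipschitz hr t ⟨min_le_left _ _, le_max_left _ _⟩ t'
      ⟨min_le_right _ _, le_max_right _ _⟩
  have hc₀ := c.isG.scaled hc0.le
  have hT0 : T 0 = v := by rw [hTN 0 ⟨le_rfl, hℓ.le⟩, hs.g_zero]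
  have hTℓ : T N.len = v := by rw [hTN _ ⟨hℓ.le, le_rfl⟩, hs.g_len]
  obtain ⟨C, L, hf, hC0, hL0⟩ := hs.lc.family (T := T) (δ := r / 32) (by linarith)
    (fun u u' huu => (hTl u u').trans (by linarith)) hc₀ (by
      simp only [mul_one]; rw [hs.g_len, hT0])
  have hx : c.g (c.len * 0) = v := by rw [mul_zero, hs.g_zero]
  obtain ⟨hl1, hl2⟩ := hf.lip hr hTl
  have hconv := hs.lc.fam_convex hf hTl le_rfl (hTG 0 N.len)
  have hLℓ := hl2 N.len 0 hℓ.le le_rfl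
  rw [sub_zero, abs_of_pos hℓ, one_mul, hL0] at hLℓ
  have hLℓ' := abs_le.1 hLℓ
  have hLp : 0 < L N.len := by linarith
  obtain ⟨c', hg', hlen'⟩ := hs.mkLp ((hf.isG N.len hℓ.le).unit hLp) hLp
    (by simp only [zero_div]; rw [hf.zero _ hℓ.le]; exact hx)
    (by simp only [div_self hLp.ne']; rw [hf.one _ hℓ.le, hTℓ])
  have bc' := c'.big
  have hd0 : ∀ u, 0 ≤ u → ∀ s ∈ Icc (0:ℝ) 1, dist (c.g (c.len * s)) (C u s) ≤ s * u :=
    fun u hu s hs' => by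
      have := hl1 0 u le_rfl hu s hs'
      rwa [hC0 s hs', zero_sub, abs_neg, abs_of_nonneg hu, mul_one] at this
  have hcq : ∀ u : ℝ, c.len * (1 - u / c.len) = c.len - u := fun u => by field_simp
  refine ⟨c', ?_, by rwa [hlen'], ?_, ?_, ?_, ?_⟩
  · have := IsG.unit_close hr hc₀ (hf.isG N.len hℓ.le) (hx.trans (by
      rw [hf.zero _ hℓ.le]; exact hx.symm)) (D := N.len) (hd0 _ hℓ.le) hc0 hLp (t := ρ) p1.le
      (by linarith) (by linarith)
    rw [hg', hlen']
    rwa [mul_div_cancel₀ _ hc0.ne'] at this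
  · rw [hlen', ← hL0]
    refine slope_bound hℓ hconv fun η hη => ?_
    obtain ⟨u₀, hu₀, H⟩ := hs.lc.first_variation hs.ch hc₀ (by
      simp only [mul_one]; exact hs.g_len c) p1 (by linarith) p2 p3 (x := c.ed) (by
      simp only [hcq]; exact c.edir ρ ⟨p1.le, le_rfl⟩) N.sd hη
    refine ⟨min u₀ ρ, lt_min hu₀ p1, fun u u1 u2 => ?_⟩
    have u3 := lt_min_iff.1 u2
    have := H u u1 u3.1 (C u) (L u) (hf.isG u u1.le) (hf.zero u u1.le) (by
      rw [hf.one u u1.le, hTN u ⟨u1.le, by linarith⟩, N.sdir u ⟨u1.le, u3.2.le⟩]) (hd0 u u1.le)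
    rwa [hL0]
  · have hrev : ConvexOn ℝ (Icc 0 N.len) fun t => L (N.len - t) := by
      refine ⟨convex_Icc _ _, fun x hx y hy a b ha hb hab => ?_⟩
      have := hconv.2 (⟨by linarith [hx.2], by linarith [hx.1]⟩ : N.len - x ∈ Icc 0 N.len)
        (⟨by linarith [hy.2], by linarith [hy.1]⟩ : N.len - y ∈ Icc 0 N.len) ha hb hab
      simp only [smul_eq_mul] at this ⊢
      rwa [show a * (N.len - x) + b * (N.len - y) = N.len - (a * x + b * y) by
        linear_combination N.len * hab] at this
    have := slope_bound (κ := tcos (angDist θ c'.ed N.ed)) hℓ hrev fun η hη => by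
      obtain ⟨u₀, hu₀, H⟩ := hs.lc.first_variation hs.ch (hf.isG N.len hℓ.le) (by
        rw [hf.one _ hℓ.le, hTℓ]) p1 (by linarith) p2 p3 (x := c'.ed) (by
        have := c'.edir ρ ⟨p1.le, le_rfl⟩
        rw [hg', hlen'] at this
        rw [← this]; congr 1; field_simp) N.ed hη
      refine ⟨min u₀ ρ, lt_min hu₀ p1, fun u u1 u2 => ?_⟩
      have u3 := lt_min_iff.1 u2
      have hu : 0 ≤ N.len - u := by linarith
      have := H u u1 u3.1 (C (N.len - u)) (L (N.len - u)) (hf.isG _ hu)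
        ((hf.zero _ hu).trans (hf.zero _ hℓ.le).symm) (by
        rw [hf.one _ hu, hTN _ ⟨hu, by linarith⟩, N.edir u ⟨u1.le, u3.2.le⟩]) (fun s hs' => by
        have := hl1 N.len (N.len - u) hℓ.le hu s hs'
        rwa [sub_sub_cancel, abs_of_pos u1, mul_one] at this)
      simpa using this
    simp only [sub_zero, sub_self] at this
    rw [hlen']
    linarith
  · intro ha
    have h1 := hs.lc.cut hc₀ (hf.isG ρ p1.le) (hf.zero ρ p1.le).symm (fun s hs' =>
      (hd0 ρ p1.le s hs').trans (by nlinarith [hs'.1, hs'.2])) hc0 p1.le (by linarith) (by linarith)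
    simp only [hcq] at h1
    rw [hf.one ρ p1.le, hTN ρ ⟨p1.le, by linarith⟩, N.sdir ρ ⟨p1.le, le_rfl⟩,
      c.edir ρ ⟨p1.le, le_rfl⟩] at h1
    have h2 := hs.ch.law c.ed N.sd ρ ρ p1.le (by linarith) p1.le (by linarith)
    have h3 : -1 < tcos (angDist θ c.ed N.sd) := by
      rw [tcos_of_le ha.le, ← Real.cos_pi]
      exact Real.cos_lt_cos_of_nonneg_of_le_pi (angDist_nonneg _ _ _) le_rfl ha
    have h4 : dist (P c.ed ρ) (P N.sd ρ) < 2 * ρ := by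
      refine lt_of_pow_lt_pow_left₀ 2 (by positivity) ?_
      rw [h2]
      have : 0 < ρ ^ 2 := by positivity
      nlinarith
    have h5 := h1 (by linarith)
    have h6 := hl2 N.len ρ hℓ.le p1.le
    rw [abs_of_pos (show 0 < N.len - ρ by linarith), abs_le] at h6
    rw [hlen']
    linarith [h6.2]
  · intro he t ht
    have := hs.lc.backtrack hf hTl (ℓ := N.len) (by rw [hL0]; exact hN) (by
      rw [hL0, ← hlen', he]) t ht
    rw [hTN t ht, hL0, hC0 _ ⟨div_nonneg (by linarith [ht.2]) hc0.le,
      (div_le_one hc0).2 (by linarith [ht.1])⟩, mul_div_cancel₀ _ hc0.ne'] at this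
    exact this.symm

/-- Turning at angle `a < π` arrives at angle at most `π - a`. -/
lemma le_of_tcos {a b : ℝ} (ha : 0 < a) (ha' : a ≤ Real.pi) (h : -tcos a ≤ tcos b) :
    b ≤ Real.pi - a := by
  by_contra hlt
  push Not at hlt
  have h1 : tcos b ≤ tcos (min b Real.pi) := by
    rcases le_total b Real.pi with h | h
    · rw [min_eq_left h]
    · rw [min_eq_right h, tcos_of_ge h, tcos_of_ge le_rfl]
  have h2 : Real.cos (min b Real.pi) < Real.cos (Real.pi - a) :=
    Real.cos_lt_cos_of_nonneg_of_le_pi (by linarith) (min_le_right _ _)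
      (lt_min hlt (by linarith))
  rw [tcos_of_le (min_le_right _ _)] at h1
  rw [tcos_of_le ha'] at h
  rw [Real.cos_pi_sub] at h2
  linarith

end

/-! ### Connecting loops -/

section

variable {S : Type} [MetricSpace S] {r : ℝ}
variable {v : S} {θ ε ρ : ℝ} {P : ℝ → ℝ → S}

/-- Two distinct loops of equal length which may be concatenated in any order, with total
transition angles exceeding `π` by a definite amount `κ`. -/
structure Hub (θ κ : ℝ) (N : Bool → Lp S r P ρ) : Prop where
  pos : 0 < κ
  len : ∀ i j, (N i).len = (N j).len
  diff : ∃ t ∈ Icc 0 (N true).len, (N true).g t ≠ (N false).g t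
  ang : ∀ i j, Real.pi + κ ≤ angDist θ (N i).ed (N j).sd

lemma Hub.rev {κ : ℝ} {N : Bool → Lp S r P ρ} (h : Hub θ κ N) : Hub θ κ fun i => (N i).rev where
  pos := h.pos
  len := h.len
  diff := by
    obtain ⟨t, ht, hne⟩ := h.diff
    refine ⟨(N true).len - t, ⟨by linarith [ht.2], by simp only [Lp.rev]; linarith [ht.1]⟩, ?_⟩
    simp only [Lp.rev]
    rw [show -((N true).len - t) + (N true).len = t by ring,
      show -((N true).len - t) + (N false).len = t by rw [h.len true false]; ring]
    exact hne
  ang := fun i j => by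
    simp only [Lp.rev]; rw [angDist_comm]; exact h.ang j i

lemma Setup.theta_pos (hs : Setup S r v θ ε P ρ) : 0 < θ := hs.ch.theta_pos

/-- Directions close to the one opposite to `a` make an angle close to `θ / 2 > π` with `a`. -/
lemma Setup.opp (hs : Setup S r v θ ε P ρ) (a b : ℝ) :
    θ / 2 - angDist θ (a + θ / 2) b ≤ angDist θ a b := by
  have hθ := hs.theta_pos
  have h1 := angDist_triangle hθ a b (a + θ / 2)
  have h2 : angDist θ a (a + θ / 2) = θ / 2 := by
    have e : |a - (a + θ / 2)| = θ / 2 := by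
      rw [show a - (a + θ / 2) = -(θ / 2) by ring, abs_neg, abs_of_pos (by linarith)]
    rw [angDist_eq_abs (by rw [e]), e]
  rw [angDist_comm θ b] at h1
  linarith

variable [CompactSpace S]

/-- A long loop which arrives at a positive angle to a hub loop can be modified near its end so
as to end along that hub loop. -/
lemma Setup.chain (hs : Setup S r v θ ε P ρ) {κ : ℝ} {N : Bool → Lp S r P ρ} (hN : Hub θ κ N)
    (i : Bool) (k : ℕ) : ∀ ζ > 0, ∃ D, ∀ c : Lp S r P ρ, D ≤ c.len →
      0 < angDist θ c.ed (N i).sd → Real.pi - κ * k ≤ angDist θ c.ed (N i).sd →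
      ∃ C : Lp S r P ρ, dist (c.g ρ) (C.g ρ) < ζ ∧ C.ed = (N i).ed := by
  have p1 := hs.pos
  have glue : ∀ ζ > (0:ℝ), ∀ c : Lp S r P ρ, Real.pi ≤ angDist θ c.ed (N i).sd →
      ∃ C : Lp S r P ρ, dist (c.g ρ) (C.g ρ) < ζ ∧ C.ed = (N i).ed := by
    intro ζ hζ c hc
    obtain ⟨C, -, -, h3, h4, -⟩ := hs.comp c (N i) hc
    exact ⟨C, by rw [h4 ρ (by linarith [c.big]), dist_self]; exact hζ, h3⟩
  induction k with
  | zero => exact fun ζ hζ => ⟨0, fun c _ _ hc => glue ζ hζ c (by simpa using hc)⟩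
  | succ k ih =>
    intro ζ hζ
    obtain ⟨D, hD⟩ := ih (ζ / 2) (by linarith)
    have hℓ : 0 < (N i).len := by linarith [(N i).big]
    set ℓ := (N i).len with hℓd
    have hq : 0 < 4 * ℓ * ρ / ζ := by positivity
    refine ⟨max D 0 + ℓ + 4 * ℓ * ρ / ζ + 1, fun c hc ha hak => ?_⟩
    rcases le_or_gt Real.pi (angDist θ c.ed (N i).sd) with hpi | hpi
    · exact glue ζ hζ c hpi
    have m1 := le_max_left D 0
    have m2 := le_max_right D 0
    obtain ⟨c', t1, t2, t3, t4, -⟩ := hs.turn c (N i) (by linarith)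
    rw [abs_le] at t2
    have hb : angDist θ c'.ed (N i).ed ≤ Real.pi - angDist θ c.ed (N i).sd :=
      le_of_tcos ha hpi.le (le_of_mul_le_mul_left (by linarith) hℓ)
    have htri := angDist_triangle hs.theta_pos (N i).ed c'.ed (N i).sd
    rw [angDist_comm θ (N i).ed c'.ed] at htri
    have hang := hN.ang i i
    have hκ := hN.pos
    obtain ⟨C, C1, C2⟩ := hD c' (by linarith) (by linarith) (by push_cast at hak; linarith)
    refine ⟨C, ?_, C2⟩
    have hlen : 4 * ℓ * ρ / ζ < c'.len := by linarith
    have : 2 * ℓ * ρ / c'.len < ζ / 2 := by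
      rw [div_lt_iff₀ hζ] at hlen
      rw [div_lt_iff₀ (by linarith)]; linarith
    linarith [dist_triangle (c.g ρ) (c'.g ρ) (C.g ρ)]

variable [ConnectedSpace S]

/-- There are loops leaving in almost any prescribed direction and ending along a hub loop. -/
lemma Setup.merge (hs : Setup S r v θ ε P ρ) {κ : ℝ} {N : Bool → Lp S r P ρ} (hN : Hub θ κ N)
    (φ : ℝ) {η : ℝ} (hη : 0 < η) :
    ∃ (C : Lp S r P ρ) (i : Bool), angDist θ φ C.sd < η ∧ C.ed = (N i).ed := by
  have p1 := hs.pos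
  have hκ := hN.pos
  obtain ⟨ζ, hζ, hnear⟩ := hs.near hη
  obtain ⟨k, hk⟩ := exists_nat_ge (Real.pi / κ)
  rw [div_le_iff₀ hκ] at hk
  have hch := fun i => hs.chain hN i k (ζ / 3) (by linarith)
  choose D hD using hch
  set ℓ := (N true).len with hℓd
  have hlen : ∀ i, (N i).len = ℓ := fun i => hN.len i true
  have hℓ : 0 < ℓ := by linarith [(N true).big]
  have hq : 0 < 6 * ℓ * ρ / ζ := by positivity
  obtain ⟨c, c1, c2⟩ := hs.shoot φ (ζ := ζ / 3) (by linarith)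
    (max (max (D true) (D false)) 0 + ℓ + 6 * ℓ * ρ / ζ + 1)
  have m1 := le_max_left (max (D true) (D false)) 0
  have m2 := le_max_right (max (D true) (D false)) 0
  have m3 : ∀ i, D i ≤ max (D true) (D false) := fun i => by
    cases i
    · exact le_max_right _ _
    · exact le_max_left _ _
  have hturn := fun i => hs.turn c (N i) (by rw [hlen]; linarith)
  choose c' t1 t2 t3 t4 t5 t6 using hturn
  simp only [hlen] at t1 t2 t3 t4 t5 t6
  obtain ⟨i, hi⟩ : ∃ i, (c' i).len ≠ c.len - ℓ := by
    by_contra hall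
    push Not at hall
    obtain ⟨t, ht, hne⟩ := hN.diff
    exact hne ((t6 true (hall true) t ht).symm.trans (t6 false (hall false) t ht))
  have t2' := abs_le.1 (t2 i)
  have hlt : c.len - ℓ < (c' i).len := lt_of_le_of_ne (by linarith) hi.symm
  have hb : angDist θ (c' i).ed (N i).ed < Real.pi := by
    by_contra hge
    push Not at hge
    have := t4 i
    rw [tcos_of_ge hge] at this
    linarith
  have htri := angDist_triangle hs.theta_pos (N i).ed (c' i).ed (N i).sd
  rw [angDist_comm θ (N i).ed (c' i).ed] at htri
  have hang := hN.ang i i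
  obtain ⟨C, C1, C2⟩ := hD i (c' i) (by linarith [m3 i]) (by linarith) (by
    rw [mul_comm]; linarith [angDist_nonneg θ (c' i).ed (N i).sd])
  refine ⟨C, i, hnear _ _ ?_, C2⟩
  rw [← C.sdir ρ ⟨p1.le, le_rfl⟩]
  have hlen : 6 * ℓ * ρ / ζ < (c' i).len := by linarith
  have h3 : 2 * ℓ * ρ / (c' i).len < ζ / 3 := by
    rw [div_lt_iff₀ hζ] at hlen
    rw [div_lt_iff₀ (by linarith)]; linarith
  linarith [dist_triangle4 (P φ ρ) (c.g ρ) ((c' i).g ρ) (C.g ρ), t1 i]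

/-- Given a hub, any two loops are connected by a third one. -/
lemma Setup.trans_of_hub (hs : Setup S r v θ ε P ρ) {κ : ℝ} {N : Bool → Lp S r P ρ}
    (hN : Hub θ κ N) (A B : Lp S r P ρ) : ∃ C : Lp S r P ρ, A.To θ C ∧ C.To θ B := by
  have hM : 0 < θ / 2 - Real.pi := by linarith [hs.ch.angle]
  obtain ⟨E, i, E1, E2⟩ := hs.merge hN (A.ed + θ / 2) hM
  obtain ⟨F, j, F1, F2⟩ := hs.merge hN.rev (B.sd + θ / 2) hM
  have hEF : E.To θ F.rev := by
    simp only [Lp.To, Lp.rev]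
    rw [E2, F2]
    simp only [Lp.rev]
    linarith [hN.ang i j, hN.pos]
  obtain ⟨C, -, C2, C3, -⟩ := hs.comp E F.rev hEF
  refine ⟨C, ?_, ?_⟩
  · simp only [Lp.To]; rw [C2]; linarith [hs.opp A.ed E.sd]
  · simp only [Lp.To]; rw [C3, angDist_comm]
    simp only [Lp.rev]; linarith [hs.opp B.sd F.sd]

/-- A transitive serial relation on a finite set has a recurrent element: any successor of an element
with the fewest successors. -/
lemma exists_recurrent {ι : Type} [Finite ι] [Nonempty ι] (R : ι → ι → Prop)
    (htr : ∀ i j k, R i j → R j k → R i k) (hser : ∀ i, ∃ j, R i j) :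
    ∃ j, ∀ k, R j k → R k j := by
  obtain ⟨i, hi⟩ : ∃ i, ∀ j, {k | R i k}.ncard ≤ {k | R j k}.ncard :=
    ⟨_, fun j => Function.argmin_le (fun j => {k | R j k}.ncard) j⟩
  have hsub : ∀ j, R i j → {k | R j k} = {k | R i k} := fun j hj =>
    eq_of_subset_of_ncard_le (fun k hk => htr i j k hj hk) (hi j) (toFinite _)
  obtain ⟨j, hj⟩ := hser i
  refine ⟨j, fun k hk => ?_⟩
  have hik : R i k := htr i j k hj hk
  have : j ∈ {l | R i l} := hj
  rwa [← hsub k hik] at this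

/-- Finitely many directions are `κ`-dense. -/
lemma exists_centers (hθ : 0 < θ) {κ : ℝ} (hκ : 0 < κ) :
    ∃ (n : ℕ) (p : Fin (n + 1) → ℝ), ∀ x, ∃ i, angDist θ x (p i) ≤ κ := by
  obtain ⟨n, hn⟩ := exists_nat_ge (θ / κ)
  rw [div_le_iff₀ hκ] at hn
  have hn1 : (0:ℝ) < n + 1 := by positivity
  set q := θ / (n + 1) with hq
  have hq0 : 0 < q := by positivity
  have hqκ : q ≤ κ := by rw [hq, div_le_iff₀ hn1]; nlinarith
  refine ⟨n, fun i => i * q, fun x => ?_⟩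
  set m := ⌊x / q⌋ with hm
  have hpos : (0:ℤ) < (n + 1 : ℕ) := by positivity
  have e1 := Int.emod_nonneg m hpos.ne'
  have e2 := Int.emod_lt_of_pos m hpos
  have e3 := Int.emod_add_mul_ediv m (n + 1 : ℕ)
  refine ⟨⟨(m % (n + 1 : ℕ)).toNat, by omega⟩, ?_⟩
  refine (angDist_le θ _ _ (-(m / (n + 1 : ℕ)))).trans ?_
  have e4 : (((m % (n + 1 : ℕ)).toNat : ℕ) : ℝ) = ((m % (n + 1 : ℕ) : ℤ) : ℝ) := by
    rw [← Int.cast_natCast, Int.toNat_of_nonneg e1]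
  have e5 : (m : ℝ) = ((m % (n + 1 : ℕ) : ℤ) : ℝ) + (n + 1) * ((m / (n + 1 : ℕ) : ℤ) : ℝ) := by
    exact_mod_cast e3.symm
  have f1 := Int.floor_le (x / q)
  have f2 := Int.lt_floor_add_one (x / q)
  rw [← hm] at f1 f2
  rw [le_div_iff₀ hq0] at f1
  rw [div_lt_iff₀ hq0] at f2
  have e6 : θ = q * (n + 1) := by rw [hq]; field_simp
  have : x - ((m % (n + 1 : ℕ)).toNat : ℕ) * q + θ * ((-(m / (n + 1 : ℕ)) : ℤ) : ℝ) = x - m * q := by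
    rw [e4, e5]; push_cast; rw [e6]; ring
  rw [this, abs_le]
  constructor <;> nlinarith

/-- The directions at `v` are cut into finitely many cells, and a loop leads from cell `i` to cell `k`
if it leaves almost opposite to `i` and arrives in `k`. For a recurrent cell `j` there are two loops
`A`, `B` leading from `j` to `j` with distinct initial directions; `AB` and `BA` form a hub. -/
lemma Setup.exists_hub (hs : Setup S r v θ ε P ρ) :
    ∃ κ N, Hub (S := S) (r := r) (P := P) (ρ := ρ) θ κ N := by
  have hθ := hs.theta_pos
  have p1 := hs.pos
  obtain ⟨κ, hκd⟩ : ∃ κ, θ / 2 = Real.pi + 4 * κ := ⟨(θ / 2 - Real.pi) / 4, by ring⟩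
  have hκ : 0 < κ := by linarith [hs.ch.angle]
  have hpi := Real.pi_pos
  obtain ⟨n, p, hp⟩ := exists_centers hθ (κ := κ / 2) (by linarith)
  -- `R i k`: some loop leads from cell `i` to cell `k`
  let R : Fin (n + 1) → Fin (n + 1) → Prop := fun i k => ∃ G : Lp S r P ρ,
    angDist θ (p i + θ / 2) G.sd ≤ 2 * κ ∧ angDist θ (p k) G.ed ≤ κ / 2
  have hang : ∀ (i : Fin (n + 1)) (G H : Lp S r P ρ), angDist θ (p i) G.ed ≤ κ / 2 →
      angDist θ (p i + θ / 2) H.sd ≤ 2 * κ → Real.pi + κ ≤ angDist θ G.ed H.sd := by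
    intro i G H h1 h2
    have h3 := hs.opp (p i) H.sd
    have h4 := angDist_triangle hθ (p i) G.ed H.sd
    linarith
  have htr : ∀ i j k, R i j → R j k → R i k := by
    rintro i j k ⟨G, G1, G2⟩ ⟨H, H1, H2⟩
    obtain ⟨C, -, C2, C3, -⟩ := hs.comp G H (by
      have := hang j G H G2 H1; simp only [Lp.To]; linarith)
    exact ⟨C, by rwa [C2], by rwa [C3]⟩
  have hout : ∀ i, ∀ x ∈ Icc 0 κ, ∃ G : Lp S r P ρ, ∃ k,
      angDist θ (p i + θ / 2 + x) G.sd < κ / 4 ∧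
      angDist θ (p i + θ / 2) G.sd ≤ 2 * κ ∧ angDist θ (p k) G.ed ≤ κ / 2 := by
    intro i x hx
    obtain ⟨G, G1, -⟩ := hs.shoot' (p i + θ / 2 + x) (η := κ / 4) (by linarith) 0
    obtain ⟨k, hk⟩ := hp G.ed
    refine ⟨G, k, G1, ?_, by rwa [angDist_comm]⟩
    have h1 := angDist_triangle hθ (p i + θ / 2) (p i + θ / 2 + x) G.sd
    have h2 := angDist_le_abs θ (p i + θ / 2) (p i + θ / 2 + x)
    rw [sub_add_cancel_left, abs_neg, abs_of_nonneg hx.1] at h2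
    linarith [hx.2]
  obtain ⟨j, hj⟩ := exists_recurrent R htr fun i => by
    obtain ⟨G, k, -, h⟩ := hout i 0 ⟨le_rfl, hκ.le⟩
    exact ⟨k, G, h⟩
  have hback : ∀ x ∈ Icc 0 κ, ∃ M : Lp S r P ρ, angDist θ (p j + θ / 2 + x) M.sd < κ / 4 ∧
      angDist θ (p j + θ / 2) M.sd ≤ 2 * κ ∧ angDist θ (p j) M.ed ≤ κ / 2 := by
    intro x hx
    obtain ⟨G, k, G1, G2, G3⟩ := hout j x hx
    obtain ⟨H, H1, H2⟩ := hj k ⟨G, G2, G3⟩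
    obtain ⟨C, -, C2, C3, -⟩ := hs.comp G H (by
      have := hang k G H G3 H1; simp only [Lp.To]; linarith)
    exact ⟨C, by rwa [C2], by rwa [C2], by rwa [C3]⟩
  obtain ⟨A, A1, A2, A3⟩ := hback 0 ⟨le_rfl, hκ.le⟩
  obtain ⟨B, B1, B2, B3⟩ := hback κ ⟨hκ.le, le_rfl⟩
  have hAB : κ / 2 ≤ angDist θ A.sd B.sd := by
    have h1 : angDist θ (p j + θ / 2 + 0) (p j + θ / 2 + κ) = κ := by
      have e : |p j + θ / 2 + 0 - (p j + θ / 2 + κ)| = κ := by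
        rw [show p j + θ / 2 + 0 - (p j + θ / 2 + κ) = -κ by ring, abs_neg, abs_of_pos hκ]
      rw [angDist_eq_abs (by rw [e]; linarith), e]
    have h2 := angDist_triangle hθ (p j + θ / 2 + 0) A.sd (p j + θ / 2 + κ)
    have h3 := angDist_triangle hθ A.sd B.sd (p j + θ / 2 + κ)
    rw [angDist_comm θ B.sd] at h3
    linarith
  obtain ⟨N₁, a1, a2, a3, -⟩ := hs.comp A B (by
    have := hang j A B A3 B2; simp only [Lp.To]; linarith)
  obtain ⟨N₂, b1, b2, b3, -⟩ := hs.comp B A (by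
    have := hang j B A B3 A2; simp only [Lp.To]; linarith)
  have hlen : N₁.len = N₂.len := by rw [a1, b1, add_comm]
  refine ⟨κ, fun i => cond i N₁ N₂, hκ, ?_, ⟨ρ, ⟨p1.le, ?_⟩, ?_⟩, ?_⟩
  · rintro (_ | _) (_ | _) <;> simp [hlen]
  · simp only [cond_true]; linarith [N₁.big]
  · simp only [cond_true, cond_false]
    intro he
    obtain ⟨ζ, hζ, H⟩ := hs.near (η := κ / 2) (by linarith)
    have := H N₁.sd N₂.sd (hs.dist_le N₁ N₂ (by rw [he, dist_self]; exact hζ))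
    rw [a2, b2] at this
    linarith
  · rintro (_ | _) (_ | _) <;> simp only [cond_true, cond_false]
    · rw [b2, b3]; exact hang j A B A3 B2
    · rw [b3, a2]; exact hang j A A A3 A2
    · rw [a3, b2]; exact hang j B B B3 B2
    · rw [a3, a2]; exact hang j B A B3 A2

/-- Any two loops are connected by a third one. -/
lemma Setup.trans (hs : Setup S r v θ ε P ρ) (A B : Lp S r P ρ) :
    ∃ C : Lp S r P ρ, A.To θ C ∧ C.To θ B := by
  obtain ⟨κ, N, hN⟩ := hs.exists_hub
  exact hs.trans_of_hub hN A B

end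

/-! ### Lengths of loops -/

section

variable {S : Type} [MetricSpace S] {r : ℝ}
variable {v : S} {θ ε ρ : ℝ} {P : ℝ → ℝ → S}

/-- There is a loop of length `l` leaving in direction `a` and arriving from direction `b`. -/
def HasLp (r : ℝ) (P : ℝ → ℝ → S) (ρ a b l : ℝ) : Prop :=
  ∃ C : Lp S r P ρ, C.sd = a ∧ C.ed = b ∧ C.len = l

lemma Lp.has (A : Lp S r P ρ) : HasLp r P ρ A.sd A.ed A.len := ⟨A, rfl, rfl, rfl⟩

/-- Appending the loop `B` to a loop of given length and directions. -/
lemma Setup.app (hs : Setup S r v θ ε P ρ) {a b l : ℝ} (h : HasLp r P ρ a b l) (B : Lp S r P ρ)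
    (hb : Real.pi ≤ angDist θ b B.sd) : HasLp r P ρ a B.ed (l + B.len) := by
  obtain ⟨C, rfl, rfl, rfl⟩ := h
  obtain ⟨D, h1, h2, h3, -⟩ := hs.comp C B hb
  exact ⟨D, h2, h3, h1⟩

variable [CompactSpace S] [ConnectedSpace S]

/-- Two almost equal lengths `lam` and `lam + δ` of loops with the same directions, which can be
repeated because `a` and `b` make an angle at least `π`. -/
lemma Setup.two_lengths (hs : Setup S r v θ ε P ρ) {ε₀ : ℝ} (hε₀ : 0 < ε₀) :
    ∃ a b lam δ, 0 < δ ∧ δ < ε₀ ∧ Real.pi ≤ angDist θ b a ∧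
      HasLp r P ρ a b lam ∧ HasLp r P ρ a b (lam + δ) := by
  have hθ := hs.theta_pos
  have p1 := hs.pos
  have hpi := Real.pi_gt_three
  obtain ⟨M, hMd⟩ : ∃ M, θ / 2 = Real.pi + M := ⟨θ / 2 - Real.pi, by ring⟩
  have hM : 0 < M := by linarith [hs.ch.angle]
  obtain ⟨s, -, -⟩ := hs.shoot' 0 one_pos 0
  have hsl : 0 < s.len := by linarith [s.big]
  obtain ⟨η, hη, h1, h2, h3⟩ : ∃ η > 0, η ≤ 1 ∧ η ≤ M / 4 ∧ s.len * η ≤ ε₀ :=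
    ⟨min 1 (min (M / 4) (ε₀ / s.len)), by positivity, min_le_left _ _,
      (min_le_right _ _).trans (min_le_left _ _), by
      rw [mul_comm, ← le_div_iff₀ hsl]
      exact (min_le_right _ _).trans (min_le_right _ _)⟩
  obtain ⟨ζ, hζ, hnear⟩ := hs.near hη
  have hq : 0 < 2 * s.len * ρ / ζ := by positivity
  obtain ⟨c₁, hc1, hc2⟩ := hs.shoot' (s.sd + (Real.pi - η / 2)) (η := η / 4) (by linarith)
    (s.len + 2 * s.len * ρ / ζ + s.len + 1)
  obtain ⟨c, hcd⟩ : ∃ c, c = c₁.rev := ⟨_, rfl⟩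
  have hce : c.ed = c₁.sd := by rw [hcd]; rfl
  have hcl : c.len = c₁.len := by rw [hcd]; rfl
  rw [← hce] at hc1
  rw [← hcl] at hc2
  have e0 : angDist θ (s.sd + (Real.pi - η / 2)) s.sd = Real.pi - η / 2 := by
    have e : |s.sd + (Real.pi - η / 2) - s.sd| = Real.pi - η / 2 := by
      rw [add_sub_cancel_left, abs_of_pos (by linarith)]
    rw [angDist_eq_abs (by rw [e]; linarith), e]
  have ha1 : Real.pi - η < angDist θ c.ed s.sd := by
    have := angDist_triangle hθ (s.sd + (Real.pi - η / 2)) c.ed s.sd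
    linarith
  have ha2 : angDist θ c.ed s.sd < Real.pi := by
    have := angDist_triangle hθ c.ed (s.sd + (Real.pi - η / 2)) s.sd
    rw [angDist_comm θ c.ed (s.sd + (Real.pi - η / 2))] at this
    linarith
  obtain ⟨c', t1, t2, t3, t4, t5, -⟩ := hs.turn c s (by linarith)
  have t2' := abs_le.1 t2
  have hb : angDist θ c'.ed s.ed ≤ Real.pi - angDist θ c.ed s.sd :=
    le_of_tcos (by linarith) ha2.le (le_of_mul_le_mul_left (by linarith) hsl)
  have hsd : angDist θ c.sd c'.sd < η := by
    refine hnear _ _ (hs.dist_le c c' (t1.trans_lt ?_))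
    have hlen : 2 * s.len * ρ / ζ < c'.len := by linarith
    rw [div_lt_iff₀ hζ] at hlen
    rw [div_lt_iff₀ (by linarith)]; linarith
  have hδ1 := t5 ha2
  have hδ2 : c.len + s.len - c'.len < ε₀ := by
    have hcos : tcos (angDist θ c.ed s.sd) ≤ -(1 - η ^ 2 / 2) := by
      refine (tcos_anti (by linarith) ha1.le).trans ?_
      rw [tcos_of_le (by linarith), Real.cos_pi_sub]
      have := Real.one_sub_sq_div_two_le_cos (x := η)
      linarith
    have : s.len * tcos (angDist θ c.ed s.sd) ≤ s.len * -(1 - η ^ 2 / 2) :=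
      mul_le_mul_of_nonneg_left hcos hsl.le
    have h4 : s.len * η * η ≤ ε₀ * 1 := by gcongr
    nlinarith
  -- `c'` shortens the concatenation of `c` and `s`, which meet at an angle slightly less than `π`,
  -- by `δ = c.len + s.len - c'.len`. The words `X c' Y Q c Z h s' R` and
  -- `X c Z h s Y Q c s' R` are geodesic; the second is longer by `δ`, as it has `c` and `s` in the
  -- place of the loop that shortens them.
  have hM4 : 0 < M / 4 := by linarith
  obtain ⟨X₁, X1, -⟩ := hs.shoot' (c.sd + θ / 2) hM4 0
  obtain ⟨Y, Y1, -⟩ := hs.shoot' (s.ed + θ / 2) hM4 0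
  obtain ⟨h₁, H1, -⟩ := hs.shoot' (s.sd + θ / 2) hM4 0
  obtain ⟨s', S1, -⟩ := hs.shoot' (s.sd - η) (η := η / 4) (by linarith) 0
  obtain ⟨X, hX⟩ : ∃ X, X = X₁.rev := ⟨_, rfl⟩
  obtain ⟨h, hh⟩ : ∃ h, h = h₁.rev := ⟨_, rfl⟩
  have hXe : X.ed = X₁.sd := by rw [hX]; rfl
  have hhe : h.ed = h₁.sd := by rw [hh]; rfl
  rw [← hXe] at X1
  rw [← hhe] at H1
  obtain ⟨Z, Z1, Z2⟩ := hs.trans c h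
  obtain ⟨Q, Q1, Q2⟩ := hs.trans Y c
  obtain ⟨R, R1, R2⟩ := hs.trans s' X
  simp only [Lp.To] at Z1 Z2 Q1 Q2 R1 R2
  have Xc : Real.pi ≤ angDist θ X.ed c.sd := by
    have := hs.opp c.sd X.ed
    rw [angDist_comm]; linarith
  have Xc' : Real.pi ≤ angDist θ X.ed c'.sd := by
    have h1 := hs.opp c.sd X.ed
    have h2 := angDist_triangle hθ c.sd c'.sd X.ed
    rw [angDist_comm]; linarith
  have sY : Real.pi ≤ angDist θ s.ed Y.sd := by
    have := hs.opp s.ed Y.sd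
    linarith
  have c'Y : Real.pi ≤ angDist θ c'.ed Y.sd := by
    have h1 := hs.opp s.ed Y.sd
    have h2 := angDist_triangle hθ s.ed c'.ed Y.sd
    rw [angDist_comm θ s.ed c'.ed] at h2
    linarith
  have hs1 : Real.pi ≤ angDist θ h.ed s.sd := by
    have := hs.opp s.sd h.ed
    rw [angDist_comm]; linarith
  have hs2 : Real.pi ≤ angDist θ h.ed s'.sd := by
    have h1 := hs.opp s.sd h.ed
    have h2 := angDist_triangle hθ s.sd (s.sd - η) h.ed
    have h3 := angDist_triangle hθ (s.sd - η) s'.sd h.ed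
    have h4 := angDist_le_abs θ s.sd (s.sd - η)
    rw [sub_sub_cancel, abs_of_pos hη] at h4
    rw [angDist_comm]; linarith
  have cs' : Real.pi ≤ angDist θ c.ed s'.sd := by
    have e1 : angDist θ (s.sd + (Real.pi - η / 2)) (s.sd - η) = Real.pi + η / 2 := by
      have e : |s.sd + (Real.pi - η / 2) - (s.sd - η)| = Real.pi + η / 2 := by
        rw [show s.sd + (Real.pi - η / 2) - (s.sd - η) = Real.pi + η / 2 by ring,
          abs_of_pos (by linarith)]
      rw [angDist_eq_abs (by rw [e]; linarith), e]
    have h1 := angDist_triangle hθ (s.sd + (Real.pi - η / 2)) c.ed (s.sd - η)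
    have h2 := angDist_triangle hθ c.ed s'.sd (s.sd - η)
    rw [angDist_comm θ s'.sd] at h2
    linarith
  have wA := hs.app (hs.app (hs.app (hs.app (hs.app (hs.app (hs.app (hs.app X.has c' Xc') Y c'Y)
    Q Q1) c Q2) Z Z1) h Z2) s' hs2) R R1
  have wB := hs.app (hs.app (hs.app (hs.app (hs.app (hs.app (hs.app (hs.app (hs.app X.has c Xc) Z
    Z1) h Z2) s hs1) Y sY) Q Q1) c Q2) s' cs') R R1
  refine ⟨_, _, _, c.len + s.len - c'.len, by linarith, hδ2, R2, wA, ?_⟩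
  convert wB using 1
  ring

/-- The lengths of loops with given directions are eventually `ε₀`-dense. -/
lemma Setup.lengths (hs : Setup S r v θ ε P ρ) {ε₀ : ℝ} (hε₀ : 0 < ε₀) :
    ∃ a b t₁, ∀ t ≥ t₁, ∃ l, HasLp r P ρ a b l ∧ |l - t| < ε₀ := by
  obtain ⟨a, b, lam, δ, hδ, hδε, hba, hA, hB⟩ := hs.two_lengths hε₀
  have hlam : 0 < lam := by
    obtain ⟨C, -, -, h⟩ := hA
    linarith [C.big, hs.pos]
  -- `n + 1 - j` copies of the first loop and `j` copies of the second
  have key : ∀ n j : ℕ, j ≤ n + 1 → HasLp r P ρ a b ((n + 1) * lam + j * δ) := by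
    intro n
    induction n with
    | zero =>
      intro j hj
      interval_cases j
      · simpa using hA
      · simpa using hB
    | succ n ih =>
      intro j hj
      rcases Nat.lt_or_ge j (n + 2) with hj' | hj'
      · obtain ⟨C, C1, C2, C3⟩ := hA
        have := hs.app (ih j (by omega)) C (by rwa [C1])
        rw [C2, C3] at this
        convert this using 1
        push_cast; ring
      · obtain ⟨C, C1, C2, C3⟩ := hB
        have hj2 : j = n + 2 := by omega
        have := hs.app (ih (n + 1) le_rfl) C (by rwa [C1])
        rw [C2, C3] at this
        convert this using 1
        rw [hj2]; push_cast; ring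
  refine ⟨a, b, lam * (lam / δ + 1), fun t ht => ?_⟩
  have hq : 0 < lam / δ := by positivity
  have ht0 : 0 < t := lt_of_lt_of_le (by positivity) ht
  have f1 := Nat.floor_le (show 0 ≤ t / lam by positivity)
  have f2 := Nat.lt_floor_add_one (t / lam)
  set N := ⌊t / lam⌋₊ with hN
  have f3 : lam / δ < N := by
    have : lam / δ + 1 ≤ t / lam := by rw [le_div_iff₀ hlam]; linarith
    linarith
  rw [le_div_iff₀ hlam] at f1
  rw [div_lt_iff₀ hlam] at f2
  have hrem : 0 ≤ t - N * lam := by linarith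
  have g1 := Nat.floor_le (show 0 ≤ (t - N * lam) / δ by positivity)
  have g2 := Nat.lt_floor_add_one ((t - N * lam) / δ)
  set j := ⌊(t - N * lam) / δ⌋₊ with hj
  have g3 : (j:ℝ) < N := by
    refine (g1.trans_lt ?_).trans f3
    gcongr; linarith
  have hjN : j < N := by exact_mod_cast g3
  rw [le_div_iff₀ hδ] at g1
  rw [div_lt_iff₀ hδ] at g2
  obtain ⟨m, hm⟩ : ∃ m, N = m + 1 := ⟨N - 1, by omega⟩
  have := key m j (by omega)
  refine ⟨_, this, ?_⟩
  have hmc : (N:ℝ) = m + 1 := by rw [hm]; push_cast; ring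
  rw [hmc] at g1 g2
  rw [abs_lt]
  constructor <;> linarith

end

/-! ### Mixing of the geodesic flow -/

section

variable {S : Type} [MetricSpace S] {r : ℝ}

/-- Open sets of the compact-open topology contain all geodesics uniformly close to a given member on
a long enough interval. -/
lemma GeodSp.nhds_le {O : Set (GeodSp S)} (hO : IsOpen O) {g : GeodSp S} (hg : g ∈ O) :
    ∃ T > 0, ∃ ζ > 0, ∀ h : GeodSp S, (∀ u ∈ Icc (-T) T, dist (h.1 u) (g.1 u) < ζ) → h ∈ O := by
  obtain ⟨O', hO', rfl⟩ := isOpen_induced_iff.1 hO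
  have hmem : O' ∈ 𝓝 g.1 := hO'.mem_nhds hg
  rw [(nhds_basis_uniformity
    (Metric.uniformity_basis_dist.compactConvergenceUniformity)).mem_iff] at hmem
  obtain ⟨⟨K, ζ⟩, ⟨hK, hζ⟩, hsub⟩ := hmem
  obtain ⟨T, hT⟩ := hK.isBounded.subset_closedBall 0
  refine ⟨max T 1, by positivity, ζ, hζ, fun h hh => hsub fun x hx => hh x ?_⟩
  have := hT hx
  rw [Real.closedBall_eq_Icc, zero_sub, zero_add] at this
  exact ⟨by linarith [le_max_left T 1, this.1], this.2.trans (le_max_left _ _)⟩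

/-- Local geodesics in the sense of `IsLocalGeodesic`, whose scale may vary with the point, realise
distances at the uniform scale of `IsG`. -/
lemma LC.isG_of_geodesic (h : LC S r) {g : ℝ → S} (hg : IsLocalGeodesic g) (a b : ℝ) :
    IsG r g a b 1 := by
  choose e he H using hg
  obtain ⟨δ, hδ, hL⟩ := lebesgue_number_lemma_of_metric (isCompact_Icc (a := a) (b := b))
    (c := fun t => ball t (e t)) (fun _ => isOpen_ball)
    (fun t _ => mem_iUnion.2 ⟨t, mem_ball_self (he t)⟩)
  refine h.isG_of_local zero_le_one hδ fun s hs t ht hst => ?_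
  obtain ⟨i, hi⟩ := hL s hs
  rw [one_mul]
  exact H i s t (by simpa [Real.dist_eq] using hi (mem_ball_self hδ))
    (by simpa [Real.dist_eq] using hi (show t ∈ ball s δ by
      rw [mem_ball, dist_comm, Real.dist_eq]; exact hst))

/-- A map which is a unit speed geodesic on every interval is a point of `GeodSp S`. -/
lemma exists_geodSp (hr : 0 < r) {g : ℝ → S} (hg : ∀ A B, IsG r g A B 1) :
    ∃ h : GeodSp S, ∀ u, h.1 u = g u := by
  have hl : ∀ s t, dist (g s) (g t) ≤ 1 * |s - t| := fun s t =>
    (hg (min s t) (max s t)).lipschitz hr s ⟨min_le_left _ _, le_max_left _ _⟩ t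
      ⟨min_le_right _ _, le_max_right _ _⟩
  have hc : Continuous g := by
    refine LipschitzWith.continuous (K := 1) (LipschitzWith.of_dist_le_mul fun s t => ?_)
    simpa [Real.dist_eq] using hl s t
  refine ⟨⟨⟨g, hc⟩, fun t => ⟨r / 32, by linarith, fun s u hs hu => ?_⟩⟩, fun u => rfl⟩
  have h1 : |s - u| < r / 16 := by
    have := abs_sub_le s t u
    rw [abs_sub_comm t u] at this
    linarith
  have := (hg (min s u) (max s u)).2 s ⟨min_le_left _ _, le_max_left _ _⟩ u
    ⟨min_le_right _ _, le_max_right _ _⟩ (by rwa [one_mul])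
  rwa [one_mul] at this

lemma ESCS.exists_setup (hS : ESCS S) : ∃ r v θ ε P ρ, Setup S r v θ ε P ρ := by
  obtain ⟨r, h⟩ := hS.exists_LC
  obtain ⟨v, hv⟩ := hS.conical_nonempty
  obtain ⟨ε, P, hP⟩ := hS.exists_chart hv
  have h1 := h.pos
  have h2 := hP.pos
  have hm : 0 < min ε r := lt_min h2 h1
  exact ⟨r, v, _, ε, P, min ε r / 128, h, hP, by linarith,
    by linarith [min_le_left ε r], by linarith [min_le_right ε r]⟩

/-- Mixing for positive times: the geodesic `A C W D B` follows a given member of `O` along `A` and a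
given member of `U` along `B`, and the length of `W` can be prescribed up to a small error. -/
lemma ESCS.mixing_pos (hS : ESCS S) {O U : Set (GeodSp S)} (hO : IsOpen O) (hU : IsOpen U)
    (hOne : O.Nonempty) (hUne : U.Nonempty) :
    ∃ t₀ > (0:ℝ), ∀ t ≥ t₀, ∃ h ∈ O, geodFlow t h ∈ U := by
  haveI := hS.compact
  haveI := hS.connected
  obtain ⟨r, v, θ, ε, P, ρ, hs⟩ := hS.exists_setup
  have hr := hs.lc.pos
  have p1 := hs.pos
  obtain ⟨f, hf⟩ := hOne
  obtain ⟨g, hg⟩ := hUne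
  obtain ⟨T₁, hT₁, ζ₁, hζ₁, HO⟩ := GeodSp.nhds_le hO hf
  obtain ⟨T₂, hT₂, ζ₂, hζ₂, HU⟩ := GeodSp.nhds_le hU hg
  obtain ⟨A, τ₁, a1, a2, a3⟩ := hs.approx hT₁ (hs.lc.isG_of_geodesic f.2 _ _) hζ₁
  obtain ⟨B, τ₂, b1, b2, b3⟩ := hs.approx hT₂ (hs.lc.isG_of_geodesic g.2 _ _) (half_pos hζ₂)
  obtain ⟨a, b, t₁, hlen⟩ := hs.lengths (half_pos hζ₂)
  obtain ⟨-, ⟨W₀, w1, w2, -⟩, -⟩ := hlen t₁ le_rfl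
  obtain ⟨C, C1, C2⟩ := hs.trans A W₀
  obtain ⟨D, D1, D2⟩ := hs.trans W₀ B
  simp only [Lp.To] at C2 D1
  rw [w1] at C2
  rw [w2] at D1
  set q := A.len - τ₁ + C.len + D.len + τ₂ with hq
  refine ⟨max 1 (t₁ + q), by positivity, fun t ht => ?_⟩
  have ht2 : t₁ + q ≤ t := (le_max_right _ _).trans ht
  obtain ⟨l, ⟨W, W1, W2, W3⟩, hl⟩ := hlen (t - q) (by linarith)
  rw [← W1] at C2
  rw [← W2] at D1
  obtain ⟨E₁, l1, -, e1, g1, -⟩ := hs.comp A C C1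
  obtain ⟨E₂, l2, -, e2, g2, -⟩ := hs.comp E₁ W (by simp only [Lp.To]; rw [e1]; exact C2)
  obtain ⟨E₃, l3, -, e3, g3, -⟩ := hs.comp E₂ D (by simp only [Lp.To]; rw [e2]; exact D1)
  obtain ⟨E, l4, -, -, g4, g5⟩ := hs.comp E₃ B (by simp only [Lp.To]; rw [e3]; exact D2)
  have bA := A.big; have bB := B.big; have bC := C.big; have bD := D.big; have bW := W.big
  obtain ⟨G, hGE, hG⟩ := hs.lc.extend_line (by linarith) E.isG
  have hGA : ∀ s ∈ Icc 0 A.len, G s = A.g s := fun s hs' => by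
    rw [hGE s ⟨hs'.1, by linarith [hs'.2]⟩, g4 s (by linarith [hs'.2]), g3 s (by linarith [hs'.2]),
      g2 s (by linarith [hs'.2]), g1 s hs'.2]
  have hGB : ∀ s ∈ Icc 0 B.len, G (E₃.len + s) = B.g s := fun s hs' => by
    rw [hGE _ ⟨by linarith [hs'.1], by linarith [hs'.2]⟩, g5 _ (by linarith [hs'.1]),
      add_sub_cancel_left]
  obtain ⟨h, hh⟩ := exists_geodSp hr (g := fun u => G (u + τ₁)) fun A B => by
    have := (hG (A + τ₁) (B + τ₁)).shift τ₁
    simpa using this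
  refine ⟨h, HO h fun u hu => ?_, HU _ fun u hu => ?_⟩
  · rw [hh, hGA _ ⟨by linarith [hu.1], by linarith [hu.2]⟩, add_comm]
    exact a3 u hu
  · change dist (h.1 (u + t)) (g.1 u) < ζ₂
    rw [hh]
    have h1 := b3 u hu
    rw [← hGB _ ⟨by linarith [hu.1], by linarith [hu.2]⟩] at h1
    have h2 : dist (G (u + t + τ₁)) (G (E₃.len + (τ₂ + u))) ≤ 1 * _ :=
      (hG (min (u + t + τ₁) (E₃.len + (τ₂ + u))) (max (u + t + τ₁) (E₃.len + (τ₂ + u)))).lipschitz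
        hr _ ⟨min_le_left _ _, le_max_left _ _⟩ _ ⟨min_le_right _ _, le_max_right _ _⟩
    rw [show u + t + τ₁ - (E₃.len + (τ₂ + u)) = -(l - (t - q)) by
      rw [l3, l2, l1, W3, hq]; ring, abs_neg, one_mul] at h2
    linarith [dist_triangle (G (u + t + τ₁)) (G (E₃.len + (τ₂ + u))) (g.1 u)]

lemma geodFlow_neg (t : ℝ) (h : GeodSp S) : geodFlow t (geodFlow (-t) h) = h := by
  refine Subtype.ext (ContinuousMap.ext fun s => ?_)
  change h.1 (s + t + -t) = h.1 s
  rw [add_neg_cancel_right]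

end

/-- The geodesic flow `ℝ × GS → GS` of a closed surface of genus
`≥ 2` equipped with a Euclidean metric with finitely many conical singularities of
angle `> 2π` is topologically mixing: for any nonempty open sets `O, U ⊆ GS` there is
`t₀ > 0` such that `t · O ∩ U ≠ ∅` whenever `|t| ≥ t₀`. -/
theorem geodesic_flow_topologically_mixing (S : Type) [MetricSpace S] (hS : ESCS S)
    (O U : Set (GeodSp S)) (hO : IsOpen O) (hU : IsOpen U)
    (hOne : O.Nonempty) (hUne : U.Nonempty) :
    ∃ t₀ > (0:ℝ), ∀ t : ℝ, t₀ ≤ |t| → (geodFlow t '' O ∩ U).Nonempty := by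
  obtain ⟨a, ha, HA⟩ := hS.mixing_pos hO hU hOne hUne
  obtain ⟨b, hb, HB⟩ := hS.mixing_pos hU hO hUne hOne
  refine ⟨max a b, lt_max_of_lt_left ha, fun t ht => ?_⟩
  rcases le_total 0 t with h0 | h0
  · rw [abs_of_nonneg h0] at ht
    obtain ⟨h, h1, h2⟩ := HA t ((le_max_left _ _).trans ht)
    exact ⟨_, ⟨h, h1, rfl⟩, h2⟩
  · rw [abs_of_nonpos h0] at ht
    obtain ⟨h, h1, h2⟩ := HB (-t) ((le_max_right _ _).trans ht)
    exact ⟨h, ⟨_, h2, geodFlow_neg t h⟩, h1⟩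

end ESCSPaper
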